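/- arXiv:2303.16699 — 2 statements merged into one kernel-verified Lean document; each statement's English description precedes it below -/
import Mathlib

section
/- For every n > 0 there exists a Σ_{n+1}-sentence φ of HyperLTL that is not equivalent to any Σ_n-sentence of HyperLTL, and such that every model T of φ is a finite set of traces with T ⊆ (2^AP)*·∅^ω, i.e. every trace in T is eventually constantly equal to the empty set. -/
/-! ### HyperLTL: syntax and semantics -/

/-- A trace over a set `AP` of atomic propositions. -/
abbrev Trace (AP : Type) : Type := ℕ → Set AP

/-- The suffix of a trace from position `j` onwards. -/
def Trace.shift {AP : Type} (t : Trace AP) (j : ℕ) : Trace AP := fun i => t (i + j)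

/-- Quantifier-free HyperLTL formulas; trace variables are natural numbers. -/
inductive QF (AP : Type) : Type where
  | atom : AP → ℕ → QF AP
  | neg  : QF AP → QF AP
  | disj : QF AP → QF AP → QF AP
  | next : QF AP → QF AP
  | untl : QF AP → QF AP → QF AP

/-- HyperLTL formulas: a block of trace quantifiers followed by a
quantifier-free formula (HyperLTL formulas are in prenex normal form). -/
inductive HFormula (AP : Type) : Type where
  | ex  : ℕ → HFormula AP → HFormula AP
  | all : ℕ → HFormula AP → HFormula AP
  | qf  : QF AP → HFormula AP

/-- The simultaneous shift of a trace assignment. -/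
def shiftAsg {AP : Type} (As : ℕ → Trace AP) (j : ℕ) : ℕ → Trace AP :=
  fun x => Trace.shift (As x) j

/-- Semantics of quantifier-free HyperLTL formulas w.r.t. a trace assignment. -/
def QF.sat {AP : Type} : QF AP → (ℕ → Trace AP) → Prop
  | .atom a x, As => a ∈ As x 0
  | .neg ψ, As => ¬ ψ.sat As
  | .disj ψ₁ ψ₂, As => ψ₁.sat As ∨ ψ₂.sat As
  | .next ψ, As => ψ.sat (shiftAsg As 1)
  | .untl ψ₁ ψ₂, As => ∃ j, ψ₂.sat (shiftAsg As j) ∧ ∀ j' < j, ψ₁.sat (shiftAsg As j')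

/-- Semantics of HyperLTL formulas w.r.t. a set of traces and a trace assignment. -/
def HFormula.sat {AP : Type} : HFormula AP → Set (Trace AP) → (ℕ → Trace AP) → Prop
  | .ex x φ, T, As => ∃ t ∈ T, φ.sat T (Function.update As x t)
  | .all x φ, T, As => ∀ t ∈ T, φ.sat T (Function.update As x t)
  | .qf ψ, _, As => ψ.sat As

def QF.freeVars {AP : Type} : QF AP → Set ℕ
  | .atom _ x => {x}
  | .neg ψ => ψ.freeVars
  | .disj ψ₁ ψ₂ => ψ₁.freeVars ∪ ψ₂.freeVars
  | .next ψ => ψ.freeVars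
  | .untl ψ₁ ψ₂ => ψ₁.freeVars ∪ ψ₂.freeVars

def HFormula.freeVars {AP : Type} : HFormula AP → Set ℕ
  | .ex x φ => φ.freeVars \ {x}
  | .all x φ => φ.freeVars \ {x}
  | .qf ψ => ψ.freeVars

/-- A sentence is a formula without free variables. -/
def HFormula.IsSentence {AP : Type} (φ : HFormula AP) : Prop := φ.freeVars = ∅

/-- `T` is a model of `φ` (for sentences the initial assignment is irrelevant). -/
def HModels {AP : Type} (T : Set (Trace AP)) (φ : HFormula AP) : Prop :=
  φ.sat T (fun _ _ => ∅)

/-- A HyperLTL sentence is satisfiable if it has a model. -/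
def HSatisfiable {AP : Type} (φ : HFormula AP) : Prop := ∃ T, HModels T φ

/-! ### The quantifier alternation hierarchy -/

/-- The quantifier prefix of a (prenex) HyperLTL formula: `true` stands for an
existential quantifier, `false` for a universal one. -/
def HFormula.prefixList {AP : Type} : HFormula AP → List Bool
  | .ex _ φ => true :: φ.prefixList
  | .all _ φ => false :: φ.prefixList
  | .qf _ => []

/-- `AltPrefix n b l` holds if `l` consists of at most `n` alternating blocks of
quantifiers, the first block consisting of quantifiers of kind `b`
(blocks may be empty). -/
def AltPrefix : ℕ → Bool → List Bool → Prop
  | 0, _, l => l = []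
  | n+1, b, l => ∃ l₁ l₂, l = l₁ ++ l₂ ∧ (∀ c ∈ l₁, c = b) ∧ AltPrefix n (!b) l₂

/-- A Σₙ-prefix: at most `n` alternating blocks, beginning with an existential block. -/
def SigPrefix (n : ℕ) (l : List Bool) : Prop := AltPrefix n true l

/-- A Σₙ-sentence of HyperLTL. -/
def IsSigmaSentence {AP : Type} (n : ℕ) (φ : HFormula AP) : Prop :=
  φ.IsSentence ∧ SigPrefix n φ.prefixList

/-! ### Part 1: a back-and-forth preorder on words -/

namespace HL

/-- One-sided splitting condition. -/
def Sp (R : List ℕ → List ℕ → Prop) (u v : List ℕ) : Prop :=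
  ∀ x₁ c x₂, u = x₁ ++ c :: x₂ → ∃ y₁ y₂, v = y₁ ++ c :: y₂ ∧ R x₁ y₁ ∧ R x₂ y₂

/-- `S l u v`: first-order sentences with prefix `l` true in `u` transfer to `v`. -/
def S : List Bool → List ℕ → List ℕ → Prop
  | [], _, _ => True
  | true :: l, u, v => S l u v ∧ Sp (S l) u v
  | false :: l, u, v => S l u v ∧ Sp (fun a b => S l b a) v u

theorem split_append {u u' x₁ x₂ : List ℕ} {c : ℕ} (h : u ++ u' = x₁ ++ c :: x₂) :
    (∃ y, u = x₁ ++ c :: y ∧ x₂ = y ++ u') ∨ (∃ y, u' = y ++ c :: x₂ ∧ x₁ = u ++ y) := by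
  rcases List.append_eq_append_iff.1 h with ⟨a, h1, h2⟩ | ⟨a, h1, h2⟩
  · right; exact ⟨a, h2, h1⟩
  · cases a with
    | nil => right; exact ⟨[], by simpa using h2.symm, by simpa using h1.symm⟩
    | cons d a =>
      simp only [List.cons_append, List.cons.injEq] at h2
      obtain ⟨rfl, h2⟩ := h2
      left; exact ⟨a, h1, h2⟩

theorem Sp_append {R : List ℕ → List ℕ → Prop}
    (hR : ∀ {a b a' b'}, R a b → R a' b' → R (a ++ a') (b ++ b'))
    {u v u' v' : List ℕ} (h1 : R u v) (h2 : R u' v') (s1 : Sp R u v) (s2 : Sp R u' v') :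
    Sp R (u ++ u') (v ++ v') := by
  intro x₁ c x₂ h
  rcases split_append h with ⟨y, rfl, rfl⟩ | ⟨y, rfl, rfl⟩
  · obtain ⟨y₁, y₂, rfl, r1, r2⟩ := s1 _ _ _ rfl
    exact ⟨y₁, y₂ ++ v', by simp, r1, hR r2 h2⟩
  · obtain ⟨y₁, y₂, rfl, r1, r2⟩ := s2 _ _ _ rfl
    exact ⟨v ++ y₁, y₂, by simp, hR h1 r1, r2⟩

theorem S_refl (l : List Bool) (u : List ℕ) : S l u u := by
  induction l generalizing u with
  | nil => trivial
  | cons b l ih =>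
    cases b <;> exact ⟨ih u, fun x₁ c x₂ h => ⟨x₁, x₂, h, ih _, ih _⟩⟩

theorem S_trans {l : List Bool} {u v w : List ℕ} (h1 : S l u v) (h2 : S l v w) : S l u w := by
  induction l generalizing u v w with
  | nil => trivial
  | cons b l ih =>
    cases b
    · refine ⟨ih h1.1 h2.1, fun x₁ c x₂ h => ?_⟩
      obtain ⟨y₁, y₂, e, r1, r2⟩ := h2.2 _ _ _ h
      obtain ⟨z₁, z₂, e', r1', r2'⟩ := h1.2 _ _ _ e
      exact ⟨z₁, z₂, e', ih r1' r1, ih r2' r2⟩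
    · refine ⟨ih h1.1 h2.1, fun x₁ c x₂ h => ?_⟩
      obtain ⟨y₁, y₂, e, r1, r2⟩ := h1.2 _ _ _ h
      obtain ⟨z₁, z₂, e', r1', r2'⟩ := h2.2 _ _ _ e
      exact ⟨z₁, z₂, e', ih r1 r1', ih r2 r2'⟩

theorem S_append {l : List Bool} {u v u' v' : List ℕ} (h1 : S l u v) (h2 : S l u' v') :
    S l (u ++ u') (v ++ v') := by
  induction l generalizing u v u' v' with
  | nil => trivial
  | cons b l ih =>
    cases b
    · exact ⟨ih h1.1 h2.1, Sp_append (R := fun a b => S l b a) (fun a b => ih a b)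
        h1.1 h2.1 h1.2 h2.2⟩
    · exact ⟨ih h1.1 h2.1, Sp_append (R := S l) (fun a b => ih a b) h1.1 h2.1 h1.2 h2.2⟩

theorem S_flip (l : List Bool) (u v : List ℕ) : S (l.map not) u v ↔ S l v u := by
  induction l generalizing u v with
  | nil => exact Iff.rfl
  | cons b l ih =>
    have e : (fun a b => S (l.map not) b a) = S l := by
      funext a b; exact propext (ih b a)
    have e' : S (l.map not) = (fun a b => S l b a) := by
      funext a b; exact propext (ih a b)
    cases b
    · simp only [List.map_cons, Bool.not_false, S]
      rw [ih, e']
    · simp only [List.map_cons, Bool.not_true, S]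
      rw [ih, e]

/-- Powers of a word. -/
def rep (U : List ℕ) : ℕ → List ℕ
  | 0 => []
  | c + 1 => U ++ rep U c

theorem rep_add (U : List ℕ) (a b : ℕ) : rep U (a + b) = rep U a ++ rep U b := by
  induction a with
  | zero => simp [rep]
  | succ a ih => rw [Nat.succ_add]; simp [rep, ih]

theorem rep_one (U : List ℕ) : rep U 1 = U := by simp [rep]

theorem rep_split {U : List ℕ} {c : ℕ} {x₁ x₂ : List ℕ} {x : ℕ} (h : rep U c = x₁ ++ x :: x₂) :
    ∃ c₁ c₂ u₁ u₂, U = u₁ ++ x :: u₂ ∧ c = c₁ + 1 + c₂ ∧ x₁ = rep U c₁ ++ u₁ ∧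
      x₂ = u₂ ++ rep U c₂ := by
  induction c generalizing x₁ with
  | zero => simp [rep] at h
  | succ c ih =>
    rcases split_append (show U ++ rep U c = _ from h) with ⟨y, h1, h2⟩ | ⟨y, h1, h2⟩
    · exact ⟨0, c, x₁, y, h1, by omega, by simp [rep], h2⟩
    · obtain ⟨c₁, c₂, u₁, u₂, e1, e2, e3, e4⟩ := ih h1
      exact ⟨c₁ + 1, c₂, u₁, u₂, e1, by omega, by rw [h2, e3]; simp [rep], e4⟩

theorem rep_combine {U u₁ u₂ : List ℕ} {x : ℕ} (hU : U = u₁ ++ x :: u₂) (c₁ c₂ : ℕ) :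
    rep U (c₁ + 1 + c₂) = (rep U c₁ ++ u₁) ++ x :: (u₂ ++ rep U c₂) := by
  rw [rep_add, rep_add, rep_one]
  nth_rewrite 2 [hU]
  simp

theorem num_split {X c c' c₁ c₂ : ℕ} (hc : 3 * X ≤ c) (hc' : 3 * X ≤ c') (hX : 1 ≤ X)
    (h : c = c₁ + 1 + c₂) :
    ∃ d₁ d₂, c' = d₁ + 1 + d₂ ∧ (c₁ = d₁ ∨ (X ≤ c₁ ∧ X ≤ d₁)) ∧
      (c₂ = d₂ ∨ (X ≤ c₂ ∧ X ≤ d₂)) := by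
  by_cases h1 : c₁ < X
  · exact ⟨c₁, c' - 1 - c₁, by omega, by omega, by omega⟩
  · by_cases h2 : c₂ < X
    · exact ⟨c' - 1 - c₂, c₂, by omega, by omega, by omega⟩
    · exact ⟨X, c' - 1 - X, by omega, by omega, by omega⟩

theorem S_rep (U : List ℕ) (l : List Bool) {c c' : ℕ} (hc : 3 ^ l.length ≤ c)
    (hc' : 3 ^ l.length ≤ c') : S l (rep U c) (rep U c') := by
  induction l generalizing c c' with
  | nil => trivial
  | cons b l ih =>
    have hX : 1 ≤ 3 ^ l.length := Nat.one_le_pow _ _ (by norm_num)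
    have e : 3 ^ (b :: l).length = 3 * 3 ^ l.length := by
      rw [List.length_cons, pow_succ]; ring
    rw [e] at hc hc'
    have key : ∀ {a b : ℕ}, (a = b ∨ (3 ^ l.length ≤ a ∧ 3 ^ l.length ≤ b)) →
        S l (rep U a) (rep U b) := by
      rintro a b (rfl | ⟨h1, h2⟩)
      · exact S_refl _ _
      · exact ih h1 h2
    have key' : ∀ {a b : ℕ}, (a = b ∨ (3 ^ l.length ≤ a ∧ 3 ^ l.length ≤ b)) →
        S l (rep U b) (rep U a) := by
      rintro a b (rfl | ⟨h1, h2⟩)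
      · exact S_refl _ _
      · exact ih h2 h1
    have h0 : S l (rep U c) (rep U c') := ih (by omega) (by omega)
    cases b
    · refine ⟨h0, fun x₁ x x₂ h => ?_⟩
      obtain ⟨c₁, c₂, u₁, u₂, e1, e2, rfl, rfl⟩ := rep_split h
      obtain ⟨d₁, d₂, e3, k1, k2⟩ := num_split hc' hc hX e2
      exact ⟨_, _, by rw [e3]; exact rep_combine e1 d₁ d₂, S_append (key' k1) (S_refl _ _),
        S_append (S_refl _ _) (key' k2)⟩
    · refine ⟨h0, fun x₁ x x₂ h => ?_⟩
      obtain ⟨c₁, c₂, u₁, u₂, e1, e2, rfl, rfl⟩ := rep_split h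
      obtain ⟨d₁, d₂, e3, k1, k2⟩ := num_split hc hc' hX e2
      exact ⟨_, _, by rw [e3]; exact rep_combine e1 d₁ d₂, S_append (key k1) (S_refl _ _),
        S_append (S_refl _ _) (key k2)⟩

theorem S_main {U V : List ℕ} {l : List Bool} (hUV : S l U V) (R : ℕ) (j : ℕ)
    (hj : j + l.length ≤ R) {a b c : ℕ}
    (ha : (3 ^ R + 1) * 2 ^ j ≤ a) (hb : (3 ^ R + 1) * 2 ^ j ≤ b) (hc : (3 ^ R + 1) * 2 ^ j ≤ c) :
    S (List.replicate j true ++ l) (rep U c) (rep U a ++ (V ++ rep U b)) := by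
  have hpow : ∀ i, i ≤ R → 3 ^ i ≤ 3 ^ R := fun i hi => Nat.pow_le_pow_right (by norm_num) hi
  induction j generalizing a b c with
  | zero =>
    simp only [List.replicate_zero, List.nil_append, pow_zero, mul_one] at *
    have h3 := hpow l.length (by omega)
    refine S_trans (S_rep U l (c' := a + 1 + b) (by omega) (by omega)) ?_
    rw [rep_add, rep_add, rep_one, List.append_assoc]
    exact S_append (S_refl _ _) (S_append hUV (S_refl _ _))
  | succ j ih =>
    have hlen : (List.replicate j true ++ l).length ≤ R := by simp; omega
    have h3 := hpow _ hlen
    have hX : 3 ^ R + 1 ≤ (3 ^ R + 1) * 2 ^ j := Nat.le_mul_of_pos_right _ (by positivity)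
    rw [pow_succ, ← mul_assoc] at ha hb hc
    set X := (3 ^ R + 1) * 2 ^ j with hXdef
    have key : ∀ k : ℕ, S (List.replicate j true ++ l) (rep U k) (rep U (min k (3 ^ R))) := by
      intro k
      rcases le_total k (3 ^ R) with h | h
      · rw [min_eq_left h]; exact S_refl _ _
      · rw [min_eq_right h]; exact S_rep _ _ (by omega) (by omega)
    rw [List.replicate_succ, List.cons_append]
    refine ⟨ih (by omega) (by omega) (by omega) (by omega), fun x₁ x x₂ h => ?_⟩
    obtain ⟨c₁, c₂, u₁, u₂, e1, e2, rfl, rfl⟩ := rep_split h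
    by_cases hc2 : X ≤ c₂
    · obtain ⟨a'', ha''⟩ : ∃ a'', a = min c₁ (3 ^ R) + 1 + a'' := ⟨a - 1 - min c₁ (3 ^ R), by omega⟩
      refine ⟨rep U (min c₁ (3 ^ R)) ++ u₁, u₂ ++ (rep U a'' ++ (V ++ rep U b)), ?_,
        S_append (key _) (S_refl _ _),
        S_append (S_refl _ _) (ih (by omega) (by omega) (by omega) hc2)⟩
      rw [ha'', rep_combine e1]; simp
    · have hc1 : X ≤ c₁ := by omega
      obtain ⟨b'', hb''⟩ : ∃ b'', b = b'' + 1 + min c₂ (3 ^ R) := ⟨b - 1 - min c₂ (3 ^ R), by omega⟩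
      refine ⟨(rep U a ++ (V ++ rep U b'')) ++ u₁, u₂ ++ rep U (min c₂ (3 ^ R)), ?_,
        S_append (ih (by omega) (by omega) (by omega) hc1) (S_refl _ _),
        S_append (S_refl _ _) (key _)⟩
      rw [hb'', rep_combine e1]; simp

/-- Exponent used in the construction. -/
def ex (R : ℕ) : ℕ := (3 ^ R + 1) * 2 ^ R

/-- The pair `(A, B)` of words at level `m`. -/
def AB (R : ℕ) : ℕ → List ℕ × List ℕ
  | 0 => ([0], [])
  | m + 1 =>
    (rep ((m + 1) :: (AB R m).1) (ex R) ++ (((m + 1) :: (AB R m).2) ++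
        rep ((m + 1) :: (AB R m).1) (ex R)) ++ [m + 1],
     rep ((m + 1) :: (AB R m).1) (ex R) ++ [m + 1])

theorem alt_flip (n : ℕ) (b : Bool) (l : List Bool) (h : AltPrefix n b l) :
    AltPrefix n (!b) (l.map not) := by
  induction n generalizing b l with
  | zero => simp only [AltPrefix] at *; simp [h]
  | succ n ih =>
    obtain ⟨l₁, l₂, rfl, h1, h2⟩ := h
    refine ⟨l₁.map not, l₂.map not, by simp, ?_, ih _ _ h2⟩
    intro c hc
    simp only [List.mem_map] at hc
    obtain ⟨d, hd, rfl⟩ := hc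
    rw [h1 d hd]

theorem S_AB (R m : ℕ) (l : List Bool) (h : AltPrefix (m + 1) true l) (hl : l.length ≤ R) :
    S l (AB R m).2 (AB R m).1 := by
  induction m generalizing l with
  | zero =>
    obtain ⟨l₁, l₂, rfl, h1, h2⟩ := h
    simp only [AltPrefix] at h2
    subst h2
    rw [List.append_nil]
    clear hl
    induction l₁ with
    | nil => trivial
    | cons b l ih =>
      have hb : b = true := h1 b (by simp)
      subst hb
      refine ⟨ih (fun c hc => h1 c (by simp [hc])), fun x₁ c x₂ h => ?_⟩
      simp [AB] at h
  | succ m ih =>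
    obtain ⟨l₁, l₂, rfl, h1, h2⟩ := h
    have e : l₁ = List.replicate l₁.length true := List.eq_replicate_iff.2 ⟨rfl, h1⟩
    rw [List.length_append] at hl
    have h3 : S l₂ (AB R m).1 (AB R m).2 := by
      rw [← S_flip]
      exact ih _ (by simpa using alt_flip _ _ _ h2) (by simp; omega)
    have h4 : S l₂ ((m + 1) :: (AB R m).1) ((m + 1) :: (AB R m).2) :=
      S_append (u := [m + 1]) (v := [m + 1]) (S_refl _ _) h3
    have hex : (3 ^ R + 1) * 2 ^ l₁.length ≤ ex R :=
      Nat.mul_le_mul_left _ (Nat.pow_le_pow_right (by norm_num) (by omega))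
    rw [e]
    exact S_append (S_main h4 R _ hl hex hex hex) (S_refl _ _)

/-! ### Part 2: the separating property -/

/-- The separating property on words. -/
def WS : ℕ → List ℕ → Prop
  | 0, u => 0 ∈ u
  | m + 1, u => ∃ u₁ u₂ u₃, u = u₁ ++ (m + 1) :: (u₂ ++ (m + 1) :: u₃) ∧ ¬ WS m u₂

theorem WS_mono {m : ℕ} {u : List ℕ} (p s : List ℕ) (h : WS m u) : WS m (p ++ (u ++ s)) := by
  cases m with
  | zero => simp only [WS] at *; simp [h]
  | succ m =>
    obtain ⟨u₁, u₂, u₃, rfl, h⟩ := h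
    exact ⟨p ++ u₁, u₂, u₃ ++ s, by simp, h⟩

theorem rep_mem {U : List ℕ} {c x : ℕ} (h : x ∈ rep U c) : x ∈ U := by
  induction c with
  | zero => simp [rep] at h
  | succ c ih =>
    simp only [rep, List.mem_append] at h
    rcases h with h | h
    · exact h
    · exact ih h

theorem AB_le (R m : ℕ) : (∀ x ∈ (AB R m).1, x ≤ m) ∧ (∀ x ∈ (AB R m).2, x ≤ m) := by
  induction m with
  | zero => simp [AB]
  | succ m ih =>
    have h1 : ∀ x ∈ (m + 1) :: (AB R m).1, x ≤ m + 1 := by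
      intro x hx
      rcases List.mem_cons.1 hx with rfl | hx
      · exact le_rfl
      · exact (ih.1 x hx).trans (by omega)
    have h2 : ∀ x ∈ (m + 1) :: (AB R m).2, x ≤ m + 1 := by
      intro x hx
      rcases List.mem_cons.1 hx with rfl | hx
      · exact le_rfl
      · exact (ih.2 x hx).trans (by omega)
    have h3 : ∀ x ∈ [m + 1], x ≤ m + 1 := by simp
    constructor
    · intro x hx
      simp only [AB, List.mem_append] at hx
      rcases hx with (hx | hx | hx) | hx
      · exact h1 x (rep_mem hx)
      · exact h2 x hx
      · exact h1 x (rep_mem hx)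
      · exact h3 x hx
    · intro x hx
      simp only [AB, List.mem_append] at hx
      rcases hx with hx | hx
      · exact h1 x (rep_mem hx)
      · exact h3 x hx

theorem rep_block {A : List ℕ} {s : ℕ} (hs : s ∉ A) {c : ℕ} {u₁ u₂ u₃ : List ℕ}
    (h : rep (s :: A) c ++ [s] = u₁ ++ s :: (u₂ ++ s :: u₃)) : ∃ x, u₂ = A ++ x := by
  induction c generalizing u₁ with
  | zero =>
    exfalso
    have := congrArg List.length h
    simp [rep] at this
    omega
  | succ c ih =>
    cases u₁ with
    | nil =>
      simp only [rep, List.cons_append, List.nil_append, List.cons.injEq, true_and,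
        List.append_assoc] at h
      rcases split_append h with ⟨y, h1, h2⟩ | ⟨y, h1, h2⟩
      · exact absurd (by rw [h1]; simp) hs
      · exact ⟨y, h2⟩
    | cons d u₁ =>
      simp only [rep, List.cons_append, List.cons.injEq, List.append_assoc] at h
      rcases split_append h.2 with ⟨y, h1, h2⟩ | ⟨y, h1, h2⟩
      · exact absurd (by rw [h1]; simp) hs
      · exact ih h1

theorem rep_tail (s : ℕ) (A : List ℕ) (c : ℕ) : ∃ x, rep (s :: A) c ++ [s] = s :: x := by
  cases c with
  | zero => exact ⟨[], by simp [rep]⟩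
  | succ c => exact ⟨_, by simp [rep]; rfl⟩

theorem WS_AB (R m : ℕ) : WS m (AB R m).1 ∧ ¬ WS m (AB R m).2 := by
  induction m with
  | zero => simp [WS, AB]
  | succ m ih =>
    constructor
    · obtain ⟨x, hx⟩ := rep_tail (m + 1) (AB R m).1 (ex R)
      refine ⟨rep ((m + 1) :: (AB R m).1) (ex R), (AB R m).2, x, ?_, ih.2⟩
      rw [← hx]; simp [AB]
    · rintro ⟨u₁, u₂, u₃, h, hn⟩
      obtain ⟨x, rfl⟩ := rep_block (fun hh => by have := (AB_le R m).1 _ hh; omega) h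
      exact hn (by simpa using WS_mono [] x ih.1)

end HL

/-! ### Part 3: matchings of pointed words -/

namespace HL

/-- Two words with matched positions, together with the back-and-forth preorder on the
corresponding segments. -/
inductive Mat (l : List Bool) : List ℕ → List ℕ → (ℕ → ℕ → Prop) → Prop
  | leaf (w w' : List ℕ) (P : ℕ → ℕ → Prop) (hS : S l w w') (hP : ∀ i j, ¬ P i j) : Mat l w w' P
  | node (w₁ w₂ w₁' w₂' : List ℕ) (c : ℕ) (P P₁ P₂ : ℕ → ℕ → Prop)
      (h₁ : Mat l w₁ w₁' P₁) (h₂ : Mat l w₂ w₂' P₂)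
      (hP : ∀ i j, P i j → (i = w₁.length ∧ j = w₁'.length) ∨ P₁ i j ∨
        ∃ i' j', P₂ i' j' ∧ i = w₁.length + 1 + i' ∧ j = w₁'.length + 1 + j') :
      Mat l (w₁ ++ c :: w₂) (w₁' ++ c :: w₂') P

theorem Mat.weaken {b : Bool} {l : List Bool} {w w' : List ℕ} {P : ℕ → ℕ → Prop}
    (h : Mat (b :: l) w w' P) : Mat l w w' P := by
  induction h with
  | leaf w w' P hS hP => exact .leaf _ _ _ (by cases b <;> exact hS.1) hP
  | node w₁ w₂ w₁' w₂' c P P₁ P₂ h₁ h₂ hP ih₁ ih₂ => exact .node _ _ _ _ _ _ _ _ ih₁ ih₂ hP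

theorem Mat.swap {l : List Bool} {w w' : List ℕ} {P : ℕ → ℕ → Prop}
    (h : Mat l w w' P) : Mat (l.map not) w' w (fun i j => P j i) := by
  induction h with
  | leaf w w' P hS hP => exact .leaf _ _ _ ((S_flip _ _ _).2 hS) (fun i j => hP j i)
  | node w₁ w₂ w₁' w₂' c P P₁ P₂ h₁ h₂ hP ih₁ ih₂ =>
    refine .node _ _ _ _ _ _ _ _ ih₁ ih₂ ?_
    intro i j hij
    rcases hP _ _ hij with ⟨a, b⟩ | h | ⟨i', j', a, b, c⟩
    · exact Or.inl ⟨b, a⟩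
    · exact Or.inr (Or.inl h)
    · exact Or.inr (Or.inr ⟨j', i', a, c, b⟩)

theorem Mat.mem {l : List Bool} {w w' : List ℕ} {P : ℕ → ℕ → Prop}
    (h : Mat l w w' P) {i j : ℕ} (hij : P i j) :
    i < w.length ∧ j < w'.length ∧ w[i]? = w'[j]? := by
  induction h generalizing i j with
  | leaf w w' P hS hP => exact absurd hij (hP _ _)
  | node w₁ w₂ w₁' w₂' c P P₁ P₂ h₁ h₂ hP ih₁ ih₂ =>
    rcases hP _ _ hij with ⟨rfl, rfl⟩ | h | ⟨i', j', h, rfl, rfl⟩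
    · simp
    · obtain ⟨a, b, e⟩ := ih₁ h
      refine ⟨by simp; omega, by simp; omega, ?_⟩
      rw [List.getElem?_append_left a, List.getElem?_append_left b, e]
    · obtain ⟨a, b, e⟩ := ih₂ h
      refine ⟨by simp; omega, by simp; omega, ?_⟩
      rw [List.getElem?_append_right (by omega), List.getElem?_append_right (by omega)]
      have e1 : w₁.length + 1 + i' - w₁.length = i' + 1 := by omega
      have e2 : w₁'.length + 1 + j' - w₁'.length = j' + 1 := by omega
      rw [e1, e2, List.getElem?_cons_succ, List.getElem?_cons_succ, e]

theorem Mat.lt_iff {l : List Bool} {w w' : List ℕ} {P : ℕ → ℕ → Prop}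
    (h : Mat l w w' P) {i j i₂ j₂ : ℕ} (hij : P i j) (hij₂ : P i₂ j₂) :
    i < i₂ ↔ j < j₂ := by
  induction h generalizing i j i₂ j₂ with
  | leaf w w' P hS hP => exact absurd hij (hP _ _)
  | node w₁ w₂ w₁' w₂' c P P₁ P₂ h₁ h₂ hP ih₁ ih₂ =>
    rcases hP _ _ hij with ⟨rfl, rfl⟩ | h | ⟨i', j', h, rfl, rfl⟩ <;>
    rcases hP _ _ hij₂ with ⟨rfl, rfl⟩ | h' | ⟨i'', j'', h', rfl, rfl⟩
    · omega
    · have := h₁.mem h'; omega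
    · omega
    · have := h₁.mem h; omega
    · exact ih₁ h h'
    · have := h₁.mem h; omega
    · omega
    · have := h₁.mem h'; omega
    · have := ih₂ h h'; omega

theorem getElem?_split {w : List ℕ} {i c : ℕ} (h : w[i]? = some c) :
    ∃ w₁ w₂, w = w₁ ++ c :: w₂ ∧ w₁.length = i := by
  obtain ⟨hi, e⟩ := List.getElem?_eq_some_iff.1 h
  refine ⟨w.take i, w.drop (i + 1), ?_, by simp; omega⟩
  rw [← e, List.getElem_cons_drop, List.take_append_drop]

theorem Mat.extend {l : List Bool} {w w' : List ℕ} {P : ℕ → ℕ → Prop}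
    (h : Mat (true :: l) w w' P) {i c : ℕ} (hi : w[i]? = some c) :
    ∃ (i' : ℕ) (P' : ℕ → ℕ → Prop), (∀ a b, P a b → P' a b) ∧ P' i i' ∧ Mat l w w' P' := by
  induction h generalizing i c with
  | leaf w w' P hS hP =>
    obtain ⟨w₁, w₂, rfl, rfl⟩ := getElem?_split hi
    obtain ⟨y₁, y₂, rfl, r1, r2⟩ := hS.2 _ _ _ rfl
    exact ⟨y₁.length, fun a b => a = w₁.length ∧ b = y₁.length,
      fun a b hab => absurd hab (hP _ _), ⟨rfl, rfl⟩,
      .node _ _ _ _ _ _ _ _ (.leaf _ _ (fun _ _ => False) r1 (fun _ _ h => h))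
        (.leaf _ _ (fun _ _ => False) r2 (fun _ _ h => h)) (fun a b h => Or.inl h)⟩
  | node w₁ w₂ w₁' w₂' d P P₁ P₂ h₁ h₂ hP ih₁ ih₂ =>
    rcases lt_trichotomy i w₁.length with hlt | heq | hgt
    · rw [List.getElem?_append_left hlt] at hi
      obtain ⟨i', P', hPP, hii, hM⟩ := ih₁ hi
      refine ⟨i', fun a b => P a b ∨ P' a b, fun a b h => Or.inl h, Or.inr hii,
        .node _ _ _ _ _ _ _ _ hM h₂.weaken ?_⟩
      rintro a b (h | h)
      · rcases hP _ _ h with h | h | h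
        · exact Or.inl h
        · exact Or.inr (Or.inl (hPP _ _ h))
        · exact Or.inr (Or.inr h)
      · exact Or.inr (Or.inl h)
    · refine ⟨w₁'.length, fun a b => P a b ∨ (a = w₁.length ∧ b = w₁'.length),
        fun a b h => Or.inl h, Or.inr ⟨heq, rfl⟩, .node _ _ _ _ _ _ _ _ h₁.weaken h₂.weaken ?_⟩
      rintro a b (h | h)
      · exact hP _ _ h
      · exact Or.inl h
    · obtain ⟨k, rfl⟩ : ∃ k, i = w₁.length + 1 + k := ⟨i - w₁.length - 1, by omega⟩
      rw [List.getElem?_append_right (by omega)] at hi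
      have e1 : w₁.length + 1 + k - w₁.length = k + 1 := by omega
      rw [e1, List.getElem?_cons_succ] at hi
      obtain ⟨i', P', hPP, hii, hM⟩ := ih₂ hi
      refine ⟨w₁'.length + 1 + i', fun a b => P a b ∨ (a = w₁.length + 1 + k ∧
        b = w₁'.length + 1 + i'), fun a b h => Or.inl h, Or.inr ⟨rfl, rfl⟩,
        .node _ _ _ _ _ _ _ _ h₁.weaken hM ?_⟩
      rintro a b (h | h)
      · rcases hP _ _ h with h | h | ⟨x, y, h, e⟩
        · exact Or.inl h
        · exact Or.inr (Or.inl h)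
        · exact Or.inr (Or.inr ⟨x, y, hPP _ _ h, e⟩)
      · exact Or.inr (Or.inr ⟨k, i', hii, h⟩)

theorem Mat.extend' {l : List Bool} {w w' : List ℕ} {P : ℕ → ℕ → Prop}
    (h : Mat (false :: l) w w' P) {i c : ℕ} (hi : w'[i]? = some c) :
    ∃ (i' : ℕ) (P' : ℕ → ℕ → Prop), (∀ a b, P a b → P' a b) ∧ P' i' i ∧ Mat l w w' P' := by
  obtain ⟨i', P', h1, h2, h3⟩ := Mat.extend (l := l.map not) (by simpa using h.swap) hi
  have h4 := h3.swap
  have e : (l.map not).map not = l := by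
    rw [List.map_map]; convert List.map_id l; funext b; simp
  rw [e] at h4
  exact ⟨i', fun a b => P' b a, fun a b h => h1 _ _ h, h2, h4⟩

/-! ### Part 4: stuttering invariance of LTL -/

/-- Nesting depth of the next operator. -/
def xd {AP : Type} : QF AP → ℕ
  | .atom _ _ => 0
  | .neg ψ => xd ψ
  | .disj ψ₁ ψ₂ => max (xd ψ₁) (xd ψ₂)
  | .next ψ => xd ψ + 1
  | .untl ψ₁ ψ₂ => max (xd ψ₁) (xd ψ₂)

/-- Duplicate the letter at position `e`. -/
def ins {AP : Type} (As : ℕ → Trace AP) (e : ℕ) : ℕ → Trace AP :=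
  fun v t => if t ≤ e then As v t else As v (t - 1)

theorem shift_ins_le {AP : Type} (As : ℕ → Trace AP) {e j : ℕ} (h : j ≤ e) :
    shiftAsg (ins As e) j = ins (shiftAsg As j) (e - j) := by
  funext v t
  simp only [shiftAsg, ins, Trace.shift]
  by_cases h1 : t + j ≤ e
  · rw [if_pos h1, if_pos (by omega)]
  · rw [if_neg h1, if_neg (by omega)]
    congr 1; omega

theorem shift_ins_gt {AP : Type} (As : ℕ → Trace AP) {e j : ℕ} (h : e < j) :
    shiftAsg (ins As e) j = shiftAsg As (j - 1) := by
  funext v t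
  simp only [shiftAsg, ins, Trace.shift]
  rw [if_neg (by omega)]
  congr 1; omega

theorem shift_zero {AP : Type} (As : ℕ → Trace AP) : shiftAsg As 0 = As := rfl

theorem sat_ins {AP : Type} (ψ : QF AP) : ∀ (d : ℕ) (As : ℕ → Trace AP) (e : ℕ), xd ψ ≤ d →
    (∀ i ≤ d, ∀ v, As v (e + i) = As v e) → (ψ.sat As ↔ ψ.sat (ins As e)) := by
  induction ψ with
  | atom a x => intro d As e _ _; simp [QF.sat, ins]
  | neg ψ ih => intro d As e h1 h2; simp only [QF.sat]; rw [ih d As e h1 h2]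
  | disj ψ₁ ψ₂ ih₁ ih₂ =>
    intro d As e h1 h2
    simp only [xd] at h1
    simp only [QF.sat]; rw [ih₁ d As e (by omega) h2, ih₂ d As e (by omega) h2]
  | next ψ ih =>
    intro d As e h1 h2
    simp only [xd] at h1
    simp only [QF.sat]
    rcases Nat.eq_zero_or_pos e with rfl | he
    · rw [shift_ins_gt As (by omega : 0 < 1)]
      have := ih (d - 1) (shiftAsg As 1) 0 (by omega) (by
        intro i hi v
        simp only [shiftAsg, Trace.shift]
        have e1 := h2 (i + 1) (by omega) v
        have e2 := h2 1 (by omega) v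
        simp only [Nat.zero_add] at *
        rw [e1, e2])
      rw [this]
      have e3 : ins (shiftAsg As 1) 0 = shiftAsg As (1 - 1) := by
        funext v t
        simp only [ins, shiftAsg, Trace.shift]
        split_ifs with ht
        · have e2 := h2 1 (by omega) v
          have : t = 0 := by omega
          subst this
          simpa using e2
        · congr 1; omega
      rw [e3]
    · rw [shift_ins_le As (by omega : 1 ≤ e)]
      refine ih d _ _ (by omega) ?_
      intro i hi v
      simp only [shiftAsg, Trace.shift]
      have := h2 i hi v
      rw [show e - 1 + i + 1 = e + i by omega, show e - 1 + 1 = e by omega]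
      exact this
  | untl ψ₁ ψ₂ ih₁ ih₂ =>
    intro d As e h1 h2
    simp only [xd] at h1
    simp only [QF.sat]
    have hsh : ∀ j ≤ e, ∀ i ≤ d, ∀ v, shiftAsg As j v (e - j + i) = shiftAsg As j v (e - j) := by
      intro j hj i hi v
      simp only [shiftAsg, Trace.shift]
      rw [show e - j + i + j = e + i by omega, show e - j + j = e by omega]
      exact h2 i hi v
    have k1 : ∀ j ≤ e, (ψ₁.sat (shiftAsg As j) ↔ ψ₁.sat (shiftAsg (ins As e) j)) := by
      intro j hj
      rw [shift_ins_le As hj]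
      exact ih₁ d _ _ (by omega) (hsh j hj)
    have k2 : ∀ j ≤ e, (ψ₂.sat (shiftAsg As j) ↔ ψ₂.sat (shiftAsg (ins As e) j)) := by
      intro j hj
      rw [shift_ins_le As hj]
      exact ih₂ d _ _ (by omega) (hsh j hj)
    constructor
    · rintro ⟨j, hj, hlt⟩
      by_cases hje : j ≤ e
      · exact ⟨j, (k2 j hje).1 hj, fun i hi => (k1 i (by omega)).1 (hlt i hi)⟩
      · refine ⟨j + 1, ?_, fun i hi => ?_⟩
        · rw [shift_ins_gt As (by omega)]; exact hj
        · by_cases hie : i ≤ e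
          · exact (k1 i hie).1 (hlt i (by omega))
          · rw [shift_ins_gt As (by omega)]; exact hlt _ (by omega)
    · rintro ⟨j, hj, hlt⟩
      by_cases hje : j ≤ e
      · exact ⟨j, (k2 j hje).2 hj, fun i hi => (k1 i (by omega)).2 (hlt i hi)⟩
      · refine ⟨j - 1, ?_, fun i hi => ?_⟩
        · rw [shift_ins_gt As (by omega)] at hj; exact hj
        · by_cases hie : i ≤ e
          · exact (k1 i hie).2 (hlt i (by omega))
          · have := hlt (i + 1) (by omega)
            rw [shift_ins_gt As (by omega)] at this
            exact this

open Classical in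
/-- The trace with `p` holding exactly at the times `s, …, s + c`. -/
noncomputable def tp {AP : Type} (p : AP) (s c : ℕ) : Trace AP :=
  fun t => if s ≤ t ∧ t ≤ s + c then {p} else ∅

theorem mem_tp {AP : Type} {p q : AP} {s c t : ℕ} : q ∈ tp p s c t ↔ q = p ∧ s ≤ t ∧ t ≤ s + c := by
  unfold tp
  split_ifs with h
  · simp [h]
  · simp [h]

theorem stretch_step {AP : Type} (p : AP) (ψ : QF AP) (D Λ : ℕ) (hD : Λ + xd ψ + 2 ≤ D)
    (X X' lab : ℕ → ℕ) (hlab : ∀ v, lab v ≤ Λ) (hX : ∀ v w, X v < X w ↔ X' v < X' w) (m : ℕ) :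
    ψ.sat (fun v => tp p (D * (X v + 1) + min (D * X' v) m) (lab v)) ↔
    ψ.sat (fun v => tp p (D * (X v + 1) + min (D * X' v) (m + 1)) (lab v)) := by
  by_cases hU : ∃ s v, m < D * X' v ∧ s = D * (X v + 1) + min (D * X' v) m
  · classical
    obtain ⟨v₀, hv₀, hs⟩ := Nat.find_spec hU
    have hmin : ∀ v, m < D * X' v → Nat.find hU ≤ D * (X v + 1) + min (D * X' v) m :=
      fun v hv => Nat.find_min' hU ⟨v, hv, rfl⟩
    generalize Nat.find hU = s at hs hmin
    have hsD : D ≤ s := by rw [hs, Nat.mul_add]; omega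
    have hlow : ∀ v, ¬ m < D * X' v → D * (X v + 1) + min (D * X' v) m + D ≤ s := by
      intro v hv
      have h1 : X' v < X' v₀ := by
        have : D * X' v < D * X' v₀ := by omega
        exact Nat.lt_of_mul_lt_mul_left this
      have h2 := (hX v v₀).2 h1
      have h3 : D * (X v + 1 + 1) ≤ D * (X v₀ + 1) := Nat.mul_le_mul_left _ (by omega)
      rw [Nat.mul_add D (X v + 1) 1] at h3
      omega
    have key := sat_ins ψ (xd ψ) (fun v => tp p (D * (X v + 1) + min (D * X' v) m) (lab v))
      (s - (xd ψ + 1)) le_rfl ?_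
    · rw [key]
      have : ins (fun v => tp p (D * (X v + 1) + min (D * X' v) m) (lab v)) (s - (xd ψ + 1)) =
          (fun v => tp p (D * (X v + 1) + min (D * X' v) (m + 1)) (lab v)) := by
        funext v t
        ext q
        have hl := hlab v
        simp only [ins]
        by_cases hv : m < D * X' v
        · have := hmin v hv
          have e1 : min (D * X' v) (m + 1) = min (D * X' v) m + 1 := by omega
          rw [e1]
          split_ifs with ht <;> simp only [mem_tp] <;> constructor <;> rintro ⟨a, b, c⟩ <;>
            refine ⟨a, ?_, ?_⟩ <;> omega
        · have := hlow v hv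
          have e1 : min (D * X' v) (m + 1) = min (D * X' v) m := by omega
          rw [e1]
          split_ifs with ht <;> simp only [mem_tp] <;> constructor <;> rintro ⟨a, b, c⟩ <;>
            refine ⟨a, ?_, ?_⟩ <;> omega
      rw [this]
    · intro i hi v
      ext q
      have hl := hlab v
      simp only [mem_tp]
      by_cases hv : m < D * X' v
      · have := hmin v hv
        constructor <;> rintro ⟨a, b, c⟩ <;> omega
      · have := hlow v hv
        constructor <;> rintro ⟨a, b, c⟩ <;> omega
  · have : ∀ v, min (D * X' v) (m + 1) = min (D * X' v) m := by
      intro v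
      have : ¬ m < D * X' v := fun h => hU ⟨_, v, h, rfl⟩
      omega
    simp only [this]

theorem stretch_add {AP : Type} (p : AP) (ψ : QF AP) (D Λ : ℕ) (hD : Λ + xd ψ + 2 ≤ D)
    (X X' lab : ℕ → ℕ) (hlab : ∀ v, lab v ≤ Λ) (hX : ∀ v w, X v < X w ↔ X' v < X' w)
    (N : ℕ) (hN : ∀ v, X' v ≤ N) :
    ψ.sat (fun v => tp p (D * (X v + 1)) (lab v)) ↔
    ψ.sat (fun v => tp p (D * (X v + X' v + 1)) (lab v)) := by
  have h : ∀ m, ψ.sat (fun v => tp p (D * (X v + 1)) (lab v)) ↔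
      ψ.sat (fun v => tp p (D * (X v + 1) + min (D * X' v) m) (lab v)) := by
    intro m
    induction m with
    | zero => simp
    | succ m ih => rw [ih, stretch_step p ψ D Λ hD X X' lab hlab hX m]
  rw [h (D * N)]
  have : ∀ v, D * (X v + 1) + min (D * X' v) (D * N) = D * (X v + X' v + 1) := by
    intro v
    rw [min_eq_left (Nat.mul_le_mul_left _ (hN v))]
    ring
  simp only [this]

theorem stretch {AP : Type} (p : AP) (ψ : QF AP) (D Λ : ℕ) (hD : Λ + xd ψ + 2 ≤ D)
    (X X' lab : ℕ → ℕ) (hlab : ∀ v, lab v ≤ Λ) (hX : ∀ v w, X v < X w ↔ X' v < X' w)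
    (N : ℕ) (hN : ∀ v, X v ≤ N) (hN' : ∀ v, X' v ≤ N) :
    ψ.sat (fun v => tp p (D * (X v + 1)) (lab v)) ↔
    ψ.sat (fun v => tp p (D * (X' v + 1)) (lab v)) := by
  rw [stretch_add p ψ D Λ hD X X' lab hlab hX N hN',
    stretch_add p ψ D Λ hD X' X lab hlab (fun v w => (hX v w).symm) N hN]
  simp only [Nat.add_comm (X _) (X' _)]

/-- The set of traces encoding a word. -/
def TW {AP : Type} (p : AP) (D : ℕ) (w : List ℕ) : Set (Trace AP) :=
  {t | ∃ i c, w[i]? = some c ∧ t = tp p (D * (i + 1)) c}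

/-- Depth of the matrix. -/
def hxd {AP : Type} : HFormula AP → ℕ
  | .ex _ φ => hxd φ
  | .all _ φ => hxd φ
  | .qf ψ => xd ψ

theorem upd_tp {AP : Type} (p : AP) (D : ℕ) (X lab : ℕ → ℕ) (x i c : ℕ) :
    Function.update (fun v => tp p (D * (X v + 1)) (lab v)) x (tp p (D * (i + 1)) c) =
    (fun v => tp p (D * (Function.update X x i v + 1)) (Function.update lab x c v)) := by
  funext v
  by_cases h : v = x
  · subst h; simp
  · simp [h]

theorem transfer {AP : Type} (p : AP) (D Λ : ℕ) (w w' : List ℕ) (hw : ∀ x ∈ w, x ≤ Λ)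
    (φ : HFormula AP) : ∀ (_ : Λ + hxd φ + 2 ≤ D) (P : ℕ → ℕ → Prop) (X X' lab : ℕ → ℕ)
    (_ : Mat φ.prefixList w w' P) (_ : ∀ v, P (X v) (X' v)) (_ : ∀ v, w[X v]? = some (lab v)),
    φ.sat (TW p D w) (fun v => tp p (D * (X v + 1)) (lab v)) →
    φ.sat (TW p D w') (fun v => tp p (D * (X' v + 1)) (lab v)) := by
  induction φ with
  | ex x φ ih =>
    rintro hD P X X' lab hM hP hl ⟨t, ⟨i, c, hi, rfl⟩, ht⟩
    obtain ⟨i', P', h1, h2, h3⟩ := Mat.extend hM hi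
    have hc : w'[i']? = some c := by rw [← (h3.mem h2).2.2, hi]
    refine ⟨_, ⟨i', c, hc, rfl⟩, ?_⟩
    rw [upd_tp] at ht ⊢
    refine ih hD P' _ _ _ h3 ?_ ?_ ht
    · intro v
      by_cases h : v = x
      · subst h; simpa using h2
      · simpa [h] using h1 _ _ (hP v)
    · intro v
      by_cases h : v = x
      · subst h; simpa using hi
      · simpa [h] using hl v
  | all x φ ih =>
    rintro hD P X X' lab hM hP hl hall t ⟨i, c, hi, rfl⟩
    obtain ⟨i', P', h1, h2, h3⟩ := Mat.extend' hM hi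
    have hc : w[i']? = some c := by rw [(h3.mem h2).2.2, hi]
    have ht := hall _ ⟨i', c, hc, rfl⟩
    rw [upd_tp] at ht ⊢
    refine ih hD P' _ _ _ h3 ?_ ?_ ht
    · intro v
      by_cases h : v = x
      · subst h; simpa using h2
      · simpa [h] using h1 _ _ (hP v)
    · intro v
      by_cases h : v = x
      · subst h; simpa using hc
      · simpa [h] using hl v
  | qf ψ =>
    intro hD P X X' lab hM hP hl hs
    refine (stretch p ψ D Λ hD X X' lab ?_ ?_ (max w.length w'.length) ?_ ?_).1 hs
    · intro v; exact hw _ (List.mem_of_getElem? (hl v))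
    · intro v u; exact hM.lt_iff (hP v) (hP u)
    · intro v; have := hM.mem (hP v); omega
    · intro v; have := hM.mem (hP v); omega

end HL

/-! ### Part 5: the formulas -/

namespace HL

theorem qf_congr {AP : Type} (ψ : QF AP) : ∀ {As As' : ℕ → Trace AP},
    (∀ x ∈ ψ.freeVars, As x = As' x) → (ψ.sat As ↔ ψ.sat As') := by
  induction ψ with
  | atom a x => intro As As' h; simp only [QF.sat]; rw [h x (by simp [QF.freeVars])]
  | neg ψ ih => intro As As' h; simp only [QF.sat]; rw [ih h]
  | disj ψ₁ ψ₂ ih₁ ih₂ =>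
    intro As As' h
    simp only [QF.sat]
    rw [ih₁ (fun x hx => h x (Or.inl hx)), ih₂ (fun x hx => h x (Or.inr hx))]
  | next ψ ih =>
    intro As As' h
    simp only [QF.sat]
    exact ih (fun x hx => by simp only [shiftAsg]; rw [h x hx])
  | untl ψ₁ ψ₂ ih₁ ih₂ =>
    intro As As' h
    simp only [QF.sat]
    have k1 : ∀ j, ψ₁.sat (shiftAsg As j) ↔ ψ₁.sat (shiftAsg As' j) := fun j =>
      ih₁ (fun x hx => by simp only [shiftAsg]; rw [h x (Or.inl hx)])
    have k2 : ∀ j, ψ₂.sat (shiftAsg As j) ↔ ψ₂.sat (shiftAsg As' j) := fun j =>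
      ih₂ (fun x hx => by simp only [shiftAsg]; rw [h x (Or.inr hx)])
    simp only [k1, k2]

theorem h_congr {AP : Type} (φ : HFormula AP) (T : Set (Trace AP)) : ∀ {As As' : ℕ → Trace AP},
    (∀ x ∈ φ.freeVars, As x = As' x) → (φ.sat T As ↔ φ.sat T As') := by
  induction φ with
  | ex x φ ih =>
    intro As As' h
    have : ∀ t, φ.sat T (Function.update As x t) ↔ φ.sat T (Function.update As' x t) := by
      intro t
      apply ih
      intro y hy
      by_cases hyx : y = x
      · subst hyx; simp
      · simpa [hyx] using h y ⟨hy, hyx⟩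
    simp only [HFormula.sat, this]
  | all x φ ih =>
    intro As As' h
    have : ∀ t, φ.sat T (Function.update As x t) ↔ φ.sat T (Function.update As' x t) := by
      intro t
      apply ih
      intro y hy
      by_cases hyx : y = x
      · subst hyx; simp
      · simpa [hyx] using h y ⟨hy, hyx⟩
    simp only [HFormula.sat, this]
  | qf ψ => intro As As' h; exact qf_congr ψ h

/-- Negation of a prenex formula. -/
def hneg {AP : Type} : HFormula AP → HFormula AP
  | .ex x φ => .all x (hneg φ)
  | .all x φ => .ex x (hneg φ)
  | .qf ψ => .qf (.neg ψ)

theorem hneg_sat {AP : Type} (φ : HFormula AP) (T : Set (Trace AP)) (As : ℕ → Trace AP) :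
    (hneg φ).sat T As ↔ ¬ φ.sat T As := by
  induction φ generalizing As with
  | ex x φ ih => simp only [hneg, HFormula.sat, ih]; push Not; rfl
  | all x φ ih => simp only [hneg, HFormula.sat, ih]; push Not; rfl
  | qf ψ => rfl

theorem hneg_free {AP : Type} (φ : HFormula AP) : (hneg φ).freeVars = φ.freeVars := by
  induction φ with
  | ex x φ ih => simp only [hneg, HFormula.freeVars, ih]
  | all x φ ih => simp only [hneg, HFormula.freeVars, ih]
  | qf ψ => rfl

theorem hneg_pfx {AP : Type} (φ : HFormula AP) :
    (hneg φ).prefixList = φ.prefixList.map not := by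
  induction φ with
  | ex x φ ih => simp [hneg, HFormula.prefixList, ih]
  | all x φ ih => simp [hneg, HFormula.prefixList, ih]
  | qf ψ => rfl

/-- Bound variables. -/
def bv {AP : Type} : HFormula AP → Set ℕ
  | .ex x φ => insert x (bv φ)
  | .all x φ => insert x (bv φ)
  | .qf _ => ∅

theorem hneg_bv {AP : Type} (φ : HFormula AP) : bv (hneg φ) = bv φ := by
  induction φ with
  | ex x φ ih => simp only [hneg, bv, ih]
  | all x φ ih => simp only [hneg, bv, ih]
  | qf ψ => rfl

/-- Conjunction of quantifier-free formulas. -/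
def conj {AP : Type} (a b : QF AP) : QF AP := .neg (.disj (.neg a) (.neg b))

theorem conj_sat {AP : Type} (a b : QF AP) (As : ℕ → Trace AP) :
    (conj a b).sat As ↔ a.sat As ∧ b.sat As := by
  simp only [conj, QF.sat]; tauto

/-- Conjunction of a quantifier-free formula with the matrix of a prenex formula. -/
def andq {AP : Type} (α : QF AP) : HFormula AP → HFormula AP
  | .ex x φ => .ex x (andq α φ)
  | .all x φ => .all x (andq α φ)
  | .qf ψ => .qf (conj α ψ)

theorem andq_bv {AP : Type} (α : QF AP) (φ : HFormula AP) : bv (andq α φ) = bv φ := by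
  induction φ with
  | ex x φ ih => simp only [andq, bv, ih]
  | all x φ ih => simp only [andq, bv, ih]
  | qf ψ => rfl

theorem andq_pfx {AP : Type} (α : QF AP) (φ : HFormula AP) :
    (andq α φ).prefixList = φ.prefixList := by
  induction φ with
  | ex x φ ih => simp [andq, HFormula.prefixList, ih]
  | all x φ ih => simp [andq, HFormula.prefixList, ih]
  | qf ψ => rfl

theorem andq_free {AP : Type} (α : QF AP) (φ : HFormula AP) :
    (andq α φ).freeVars ⊆ α.freeVars ∪ φ.freeVars := by
  induction φ with
  | ex x φ ih =>
    rintro y ⟨h1, h2⟩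
    rcases ih h1 with h | h
    · exact Or.inl h
    · exact Or.inr ⟨h, h2⟩
  | all x φ ih =>
    rintro y ⟨h1, h2⟩
    rcases ih h1 with h | h
    · exact Or.inl h
    · exact Or.inr ⟨h, h2⟩
  | qf ψ => exact fun y h => h

theorem andq_sat {AP : Type} (α : QF AP) (φ : HFormula AP) (T : Set (Trace AP))
    (hT : T.Nonempty) (h : ∀ x ∈ bv φ, x ∉ α.freeVars) (As : ℕ → Trace AP) :
    (andq α φ).sat T As ↔ α.sat As ∧ φ.sat T As := by
  have key : ∀ x, x ∉ α.freeVars → ∀ As t, α.sat (Function.update As x t) ↔ α.sat As := by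
    intro x hx As t
    apply qf_congr
    intro y hy
    have : y ≠ x := fun e => hx (e ▸ hy)
    simp [this]
  induction φ generalizing As with
  | ex x φ ih =>
    have hx := h x (by simp [bv])
    simp only [andq, HFormula.sat, ih (fun y hy => h y (by simp [bv, hy])), key x hx]
    constructor
    · rintro ⟨t, h1, h2, h3⟩; exact ⟨h2, t, h1, h3⟩
    · rintro ⟨h2, t, h1, h3⟩; exact ⟨t, h1, h2, h3⟩
  | all x φ ih =>
    have hx := h x (by simp [bv])
    simp only [andq, HFormula.sat, ih (fun y hy => h y (by simp [bv, hy])), key x hx]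
    constructor
    · intro hh
      obtain ⟨t, ht⟩ := hT
      exact ⟨(hh t ht).1, fun t ht => (hh t ht).2⟩
    · rintro ⟨h1, h2⟩ t ht; exact ⟨h1, h2 t ht⟩
  | qf ψ => exact conj_sat _ _ _

/-- Eventually. The variable is only used to write down a tautology. -/
def ev {AP : Type} (p : AP) (x : ℕ) (ψ : QF AP) : QF AP :=
  .untl (.disj (.atom p x) (.neg (.atom p x))) ψ

theorem ev_sat {AP : Type} (p : AP) (x : ℕ) (ψ : QF AP) (As : ℕ → Trace AP) :
    (ev p x ψ).sat As ↔ ∃ j, ψ.sat (shiftAsg As j) := by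
  simp only [ev, QF.sat]
  constructor
  · rintro ⟨j, h, _⟩; exact ⟨j, h⟩
  · rintro ⟨j, h⟩; exact ⟨j, h, fun _ _ => Classical.em _⟩

/-- The proposition `p` holds at the first `c + 1` positions. -/
def ge {AP : Type} (p : AP) (x : ℕ) : ℕ → QF AP
  | 0 => .atom p x
  | c + 1 => conj (.atom p x) (.next (ge p x c))

theorem ge_sat {AP : Type} (p : AP) (x c : ℕ) (As : ℕ → Trace AP) :
    (ge p x c).sat As ↔ ∀ i ≤ c, p ∈ As x i := by
  induction c generalizing As with
  | zero => simp [ge, QF.sat]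
  | succ c ih =>
    simp only [ge, conj_sat, QF.sat, ih, shiftAsg, Trace.shift]
    constructor
    · rintro ⟨h0, h1⟩ i hi
      cases i with
      | zero => exact h0
      | succ i => exact h1 i (by omega)
    · intro h
      exact ⟨h 0 (by omega), fun i hi => h (i + 1) (by omega)⟩

/-- The trace `x` carries the label `c`. -/
def labQ {AP : Type} (p : AP) (c x : ℕ) : QF AP :=
  conj (ev p x (ge p x c)) (.neg (ev p x (ge p x (c + 1))))

theorem ev_ge_sat {AP : Type} (p : AP) (c x s d : ℕ) (As : ℕ → Trace AP) (h : As x = tp p s d) :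
    (ev p x (ge p x c)).sat As ↔ c ≤ d := by
  simp only [ev_sat, ge_sat, shiftAsg, Trace.shift, h, mem_tp]
  constructor
  · rintro ⟨j, hj⟩
    have h0 := hj 0 (by omega)
    have h1 := hj c le_rfl
    omega
  · intro hc
    exact ⟨s, fun i hi => ⟨trivial, by omega, by omega⟩⟩

theorem labQ_sat {AP : Type} (p : AP) (c x s d : ℕ) (As : ℕ → Trace AP) (h : As x = tp p s d) :
    (labQ p c x).sat As ↔ d = c := by
  have h1 := ev_ge_sat p c x s d As h
  have h2 := ev_ge_sat p (c + 1) x s d As h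
  rw [labQ, conj_sat, QF.sat, h1, h2]
  omega

/-- The trace `x` encodes an earlier position than the trace `y`. -/
def ltQ {AP : Type} (p : AP) (x y : ℕ) : QF AP :=
  ev p x (conj (.atom p x) (conj (.neg (.atom p y)) (ev p y (.atom p y))))

theorem ltQ_sat {AP : Type} (p : AP) (D x y i j c d : ℕ) (As : ℕ → Trace AP)
    (hx : As x = tp p (D * (i + 1)) c) (hy : As y = tp p (D * (j + 1)) d)
    (hc : c < D) (hd : d < D) : (ltQ p x y).sat As ↔ i < j := by
  simp only [ltQ, ev_sat, conj_sat, QF.sat, shiftAsg, Trace.shift, hx, hy, mem_tp]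
  constructor
  · rintro ⟨a, ⟨-, h1, h2⟩, h3, b, -, h4, h5⟩
    by_contra hij
    rcases Nat.eq_or_lt_of_le (not_lt.1 hij) with rfl | h
    · exact h3 ⟨trivial, by omega, by omega⟩
    · have : D * (j + 1 + 1) ≤ D * (i + 1) := Nat.mul_le_mul_left _ (by omega)
      rw [Nat.mul_add D (j + 1) 1] at this
      omega
  · intro h
    have : D * (i + 1 + 1) ≤ D * (j + 1) := Nat.mul_le_mul_left _ (by omega)
    rw [Nat.mul_add D (i + 1) 1] at this
    refine ⟨D * (i + 1), ⟨trivial, by omega, by omega⟩, fun hh => by omega,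
      D * (j + 1) - D * (i + 1), trivial, by omega, by omega⟩

/-- Some proposition of the list holds at `x`. -/
def someQ {AP : Type} (p : AP) (x : ℕ) : List AP → QF AP
  | [] => .atom p x
  | a :: L => .disj (.atom a x) (someQ p x L)

theorem someQ_sat {AP : Type} (p : AP) (x : ℕ) (L : List AP) (As : ℕ → Trace AP) :
    (someQ p x L).sat As ↔ p ∈ As x 0 ∨ ∃ a ∈ L, a ∈ As x 0 := by
  induction L with
  | nil => simp [someQ, QF.sat]
  | cons a L ih => simp only [someQ, QF.sat, ih, List.mem_cons, exists_eq_or_imp]; tauto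

/-- The trace `y` is eventually empty and bounds the trace `z`. -/
def finQ {AP : Type} (p : AP) (L : List AP) (y z : ℕ) : QF AP :=
  conj (ev p y (.neg (ev p y (someQ p y L))))
    (.neg (ev p z (conj (someQ p z L) (.neg (ev p y (someQ p y L))))))

theorem finQ_sat {AP : Type} (p : AP) (L : List AP) (hL : ∀ a, a ∈ L) (y z : ℕ)
    (As : ℕ → Trace AP) : (finQ p L y z).sat As ↔
      (∃ j, ∀ k, As y (k + j) = ∅) ∧ ∀ j, As z j ≠ ∅ → ∃ k, As y (k + j) ≠ ∅ := by
  have h : ∀ (x : ℕ) (A : ℕ → Trace AP), (someQ p x L).sat A ↔ A x 0 ≠ ∅ := by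
    intro x A
    rw [someQ_sat, ← Set.nonempty_iff_ne_empty]
    constructor
    · rintro (h | ⟨a, _, h⟩)
      · exact ⟨_, h⟩
      · exact ⟨_, h⟩
    · rintro ⟨a, h⟩; exact Or.inr ⟨a, hL a, h⟩
  simp only [finQ, conj_sat, QF.sat, ev_sat, h, shiftAsg, Trace.shift, Nat.zero_add]
  push Not
  rfl

/-- Interval described by the variables `2m+2` and `2m+3`. -/
def Dq {AP : Type} (p : AP) (m : ℕ) : QF AP :=
  conj (labQ p (m + 1) (2 * m + 2)) (conj (labQ p (m + 1) (2 * m + 3))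
    (ltQ p (2 * m + 2) (2 * m + 3)))

/-- Interval of level `m + 1` nested in one of level `m + 2`. -/
def NestQ {AP : Type} (p : AP) (m : ℕ) : QF AP :=
  conj (Dq p m) (conj (ltQ p (2 * m + 4) (2 * m + 2)) (ltQ p (2 * m + 3) (2 * m + 5)))

/-- The formula expressing `WS m` on the interval `(2m+2, 2m+3)`. -/
def F {AP : Type} (p : AP) : ℕ → HFormula AP
  | 0 => .ex 0 (.qf (conj (labQ p 0 0) (conj (ltQ p 2 0) (ltQ p 0 3))))
  | m + 1 => .ex (2 * m + 2) (.ex (2 * m + 3) (andq (NestQ p m) (hneg (F p m))))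

/-- The separating sentence. -/
def Phi {AP : Type} (p : AP) (L : List AP) (m : ℕ) : HFormula AP :=
  .ex (2 * m + 2) (.ex (2 * m + 3) (.all (2 * m + 4)
    (andq (conj (Dq p m) (finQ p L (2 * m + 3) (2 * m + 4))) (hneg (F p m)))))

theorem ge_free {AP : Type} (p : AP) (x c : ℕ) : (ge p x c).freeVars ⊆ {x} := by
  induction c with
  | zero => simp [ge, QF.freeVars]
  | succ c ih =>
    simp only [ge, conj, QF.freeVars, Set.union_subset_iff]
    exact ⟨subset_rfl, ih⟩

theorem labQ_free {AP : Type} (p : AP) (x c : ℕ) : (labQ p c x).freeVars ⊆ {x} := by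
  simp only [labQ, ev, conj, QF.freeVars, Set.union_subset_iff]
  exact ⟨⟨⟨subset_rfl, subset_rfl⟩, ge_free _ _ _⟩, ⟨subset_rfl, subset_rfl⟩, ge_free _ _ _⟩

theorem ltQ_free {AP : Type} (p : AP) (x y : ℕ) : (ltQ p x y).freeVars ⊆ {x, y} := by
  simp [ltQ, ev, conj, QF.freeVars, Set.subset_def]

theorem someQ_free {AP : Type} (p : AP) (x : ℕ) (L : List AP) : (someQ p x L).freeVars ⊆ {x} := by
  induction L with
  | nil => simp [someQ, QF.freeVars]
  | cons a L ih =>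
    simp only [someQ, QF.freeVars, Set.union_subset_iff]
    exact ⟨subset_rfl, ih⟩

theorem finQ_free {AP : Type} (p : AP) (L : List AP) (y z : ℕ) :
    (finQ p L y z).freeVars ⊆ {y, z} := by
  have h1 := someQ_free p y L
  have h2 := someQ_free p z L
  intro a ha
  simp only [finQ, ev, conj, QF.freeVars, Set.mem_union, Set.mem_singleton_iff] at ha
  have h1' : a ∈ (someQ p y L).freeVars → a = y := fun h => h1 h
  have h2' : a ∈ (someQ p z L).freeVars → a = z := fun h => h2 h
  simp only [Set.mem_insert_iff, Set.mem_singleton_iff]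
  tauto

theorem Dq_free {AP : Type} (p : AP) (m x : ℕ) (hx : x ∈ (Dq p m).freeVars) :
    x = 2 * m + 2 ∨ x = 2 * m + 3 := by
  simp only [Dq, conj, QF.freeVars, Set.mem_union] at hx
  rcases hx with h | h | h
  · exact Or.inl (labQ_free _ _ _ h)
  · exact Or.inr (labQ_free _ _ _ h)
  · exact ltQ_free _ _ _ h

theorem NestQ_free {AP : Type} (p : AP) (m x : ℕ) (hx : x ∈ (NestQ p m).freeVars) :
    x = 2 * m + 2 ∨ x = 2 * m + 3 ∨ x = 2 * m + 4 ∨ x = 2 * m + 5 := by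
  simp only [NestQ, conj, QF.freeVars, Set.mem_union] at hx
  rcases hx with h | h | h
  · have := Dq_free _ _ _ h; omega
  · have := ltQ_free _ _ _ h
    simp only [Set.mem_insert_iff, Set.mem_singleton_iff] at this; omega
  · have := ltQ_free _ _ _ h
    simp only [Set.mem_insert_iff, Set.mem_singleton_iff] at this; omega

theorem F_free {AP : Type} (p : AP) (m x : ℕ) (hx : x ∈ (F p m).freeVars) :
    x = 2 * m + 2 ∨ x = 2 * m + 3 := by
  induction m generalizing x with
  | zero =>
    simp only [F, conj, HFormula.freeVars, QF.freeVars, Set.mem_sdiff, Set.mem_union,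
      Set.mem_singleton_iff] at hx
    obtain ⟨h | h | h, h0⟩ := hx
    · exact absurd (labQ_free _ _ _ h) h0
    · have := ltQ_free _ _ _ h
      simp only [Set.mem_insert_iff, Set.mem_singleton_iff] at this; omega
    · have := ltQ_free _ _ _ h
      simp only [Set.mem_insert_iff, Set.mem_singleton_iff] at this; omega
  | succ m ih =>
    simp only [F, HFormula.freeVars, Set.mem_sdiff, Set.mem_singleton_iff] at hx
    obtain ⟨⟨h, h1⟩, h2⟩ := hx
    rcases andq_free _ _ h with h | h
    · have := NestQ_free _ _ _ h; omega
    · rw [hneg_free] at h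
      have := ih _ h; omega

theorem F_bv {AP : Type} (p : AP) (m x : ℕ) (hx : x ∈ bv (F p m)) : x < 2 * m + 2 := by
  induction m generalizing x with
  | zero => simp [F, bv] at hx; omega
  | succ m ih =>
    simp only [F, bv, andq_bv, hneg_bv, Set.mem_insert_iff] at hx
    rcases hx with h | h | h
    · omega
    · omega
    · have := ih _ h; omega

theorem alt_cons {n : ℕ} {b : Bool} {l : List Bool} (h : AltPrefix (n + 1) b l) :
    AltPrefix (n + 1) b (b :: l) := by
  obtain ⟨l₁, l₂, rfl, h1, h2⟩ := h
  refine ⟨b :: l₁, l₂, rfl, ?_, h2⟩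
  intro c hc
  rcases List.mem_cons.1 hc with h | h
  · exact h
  · exact h1 c h

theorem alt_lift {n : ℕ} {b : Bool} {l : List Bool} (h : AltPrefix n (!b) l) :
    AltPrefix (n + 1) b l := ⟨[], l, rfl, by simp, h⟩

theorem F_pfx {AP : Type} (p : AP) (m : ℕ) : AltPrefix (m + 1) true (F p m).prefixList := by
  induction m with
  | zero =>
    simp only [F, HFormula.prefixList]
    exact alt_cons (alt_lift rfl)
  | succ m ih =>
    simp only [F, HFormula.prefixList, andq_pfx, hneg_pfx]
    exact alt_cons (alt_cons (alt_lift (alt_flip _ _ _ ih)))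

theorem Phi_sigma {AP : Type} (p : AP) (L : List AP) (m : ℕ) :
    IsSigmaSentence (m + 2) (Phi p L m) := by
  constructor
  · unfold HFormula.IsSentence
    rw [Set.eq_empty_iff_forall_notMem]
    intro x hx
    simp only [Phi, HFormula.freeVars, Set.mem_sdiff, Set.mem_singleton_iff] at hx
    obtain ⟨⟨⟨h, h1⟩, h2⟩, h3⟩ := hx
    rcases andq_free _ _ h with h | h
    · simp only [conj, QF.freeVars, Set.mem_union] at h
      rcases h with h | h
      · have := Dq_free _ _ _ h; omega
      · have := finQ_free _ _ _ _ h
        simp only [Set.mem_insert_iff, Set.mem_singleton_iff] at this; omega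
    · rw [hneg_free] at h
      have := F_free _ _ _ h; omega
  · simp only [SigPrefix, Phi, HFormula.prefixList, andq_pfx, hneg_pfx]
    exact alt_cons (alt_cons (alt_lift (alt_cons (alt_flip _ _ _ (F_pfx p m)))))

theorem Phi_sat {AP : Type} (p : AP) (L : List AP) (m : ℕ) (T : Set (Trace AP)) :
    HModels T (Phi p L m) ↔ ∃ x ∈ T, ∃ y ∈ T, ∀ z ∈ T, ∃ As : ℕ → Trace AP,
      As (2 * m + 2) = x ∧ As (2 * m + 3) = y ∧ As (2 * m + 4) = z ∧
      (Dq p m).sat As ∧ (finQ p L (2 * m + 3) (2 * m + 4)).sat As ∧ ¬ (F p m).sat T As := by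
  simp only [HModels, Phi, HFormula.sat]
  refine exists_congr fun x => and_congr_right fun hx => exists_congr fun y =>
    and_congr_right fun hy => forall_congr' fun z => imp_congr_right fun hz => ?_
  have hb : ∀ v ∈ bv (hneg (F p m)),
      v ∉ (conj (Dq p m) (finQ p L (2 * m + 3) (2 * m + 4))).freeVars := by
    intro v hv hv'
    rw [hneg_bv] at hv
    have h1 := F_bv _ _ _ hv
    simp only [conj, QF.freeVars, Set.mem_union] at hv'
    rcases hv' with h | h
    · have := Dq_free _ _ _ h; omega
    · have := finQ_free _ _ _ _ h
      simp only [Set.mem_insert_iff, Set.mem_singleton_iff] at this; omega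
  rw [andq_sat _ _ _ ⟨x, hx⟩ hb, conj_sat, hneg_sat]
  constructor
  · rintro ⟨⟨h1, h2⟩, h3⟩
    exact ⟨_, by simp, by simp, by simp, h1, h2, h3⟩
  · rintro ⟨As, e1, e2, e3, h1, h2, h3⟩
    have key : ∀ v, v = 2 * m + 2 ∨ v = 2 * m + 3 ∨ v = 2 * m + 4 →
        As v = Function.update (Function.update (Function.update (fun _ _ => ∅) (2 * m + 2) x)
          (2 * m + 3) y) (2 * m + 4) z v := by
      rintro v (rfl | rfl | rfl)
      · simp [e1]
      · simp [e2]
      · simp [e3]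
    refine ⟨⟨(qf_congr _ ?_).1 h1, (qf_congr _ ?_).1 h2⟩, fun h4 => h3 ((h_congr _ _ ?_).2 h4)⟩
    · intro v hv
      have := Dq_free _ _ _ hv
      exact key v (by omega)
    · intro v hv
      have := finQ_free _ _ _ _ hv
      simp only [Set.mem_insert_iff, Set.mem_singleton_iff] at this
      exact key v (by omega)
    · intro v hv
      have := F_free _ _ _ hv
      exact key v (by omega)

theorem mid_split {q u s : List ℕ} {c d i x : ℕ} (h : (q ++ c :: (u ++ d :: s))[i]? = some x)
    (h1 : q.length < i) (h2 : i < q.length + 1 + u.length) :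
    ∃ u₁ u₂, u = u₁ ++ x :: u₂ ∧ i = q.length + 1 + u₁.length := by
  obtain ⟨k, rfl⟩ : ∃ k, i = q.length + 1 + k := ⟨i - q.length - 1, by omega⟩
  rw [List.getElem?_append_right (by omega),
    show q.length + 1 + k - q.length = k + 1 by omega, List.getElem?_cons_succ,
    List.getElem?_append_left (by omega)] at h
  obtain ⟨u₁, u₂, e1, e2⟩ := getElem?_split h
  exact ⟨u₁, u₂, e1, by omega⟩

theorem Dq_sat {AP : Type} (p : AP) (D m i j c d : ℕ) (As : ℕ → Trace AP)
    (hx : As (2 * m + 2) = tp p (D * (i + 1)) c) (hy : As (2 * m + 3) = tp p (D * (j + 1)) d)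
    (hc : c < D) (hd : d < D) : (Dq p m).sat As ↔ c = m + 1 ∧ d = m + 1 ∧ i < j := by
  rw [Dq, conj_sat, conj_sat, labQ_sat p _ _ _ _ As hx, labQ_sat p _ _ _ _ As hy,
    ltQ_sat p D _ _ _ _ _ _ As hx hy hc hd]

theorem F_sat {AP : Type} (p : AP) (D m : ℕ) (w : List ℕ) (hw : ∀ x ∈ w, x < D) :
    ∀ (q u s : List ℕ) (c d : ℕ) (As : ℕ → Trace AP), w = q ++ c :: (u ++ d :: s) →
    As (2 * m + 2) = tp p (D * (q.length + 1)) c →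
    As (2 * m + 3) = tp p (D * (q.length + 1 + u.length + 1)) d →
    ((F p m).sat (TW p D w) As ↔ WS m u) := by
  induction m with
  | zero =>
    intro q u s c d As e hx hy
    have hc : c < D := hw _ (by rw [e]; simp)
    have hd : d < D := hw _ (by rw [e]; simp)
    simp only [F, HFormula.sat, WS, conj_sat]
    constructor
    · rintro ⟨t, ⟨i, x, hi, rfl⟩, h1, h2, h3⟩
      have hxD : x < D := hw _ (List.mem_of_getElem? hi)
      rw [labQ_sat p _ _ (D * (i + 1)) x _ (by simp)] at h1
      rw [ltQ_sat p D _ _ q.length i c x _ (by simpa using hx) (by simp) hc hxD] at h2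
      rw [ltQ_sat p D _ _ i (q.length + 1 + u.length) x d _ (by simp) (by simpa using hy) hxD hd]
        at h3
      subst h1
      rw [e] at hi
      obtain ⟨u₁, u₂, rfl, _⟩ := mid_split hi h2 h3
      simp
    · intro h0
      obtain ⟨u₁, u₂, rfl⟩ := List.append_of_mem h0
      have hD : 0 < D := by omega
      refine ⟨_, ⟨q.length + 1 + u₁.length, 0, ?_, rfl⟩, ?_, ?_, ?_⟩
      · rw [e, List.getElem?_append_right (by omega),
          show q.length + 1 + u₁.length - q.length = u₁.length + 1 by omega]
        simp
      · rw [labQ_sat p _ _ (D * (q.length + 1 + u₁.length + 1)) 0 _ (by simp)]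
      · rw [ltQ_sat p D _ _ q.length (q.length + 1 + u₁.length) c 0 _ (by simpa using hx)
          (by simp) hc hD]
        omega
      · rw [ltQ_sat p D _ _ (q.length + 1 + u₁.length) (q.length + 1 + (u₁ ++ 0 :: u₂).length) 0 d
          _ (by simp) (by simpa using hy) hD hd]
        simp
  | succ m ih =>
    intro q u s c d As e hx hy
    have hc : c < D := hw _ (by rw [e]; simp)
    have hd : d < D := hw _ (by rw [e]; simp)
    have hT : (TW p D w).Nonempty := ⟨_, q.length, c, by rw [e]; simp, rfl⟩
    have hb : ∀ v ∈ bv (hneg (F p m)), v ∉ (NestQ p m).freeVars := by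
      intro v hv hv'
      rw [hneg_bv] at hv
      have h1 := F_bv _ _ _ hv
      have := NestQ_free _ _ _ hv'
      omega
    simp only [F, HFormula.sat, WS]
    simp only [andq_sat _ _ _ hT hb, hneg_sat]
    rw [show 2 * (m + 1) + 2 = 2 * m + 4 by ring] at hx
    rw [show 2 * (m + 1) + 3 = 2 * m + 5 by ring] at hy
    have hE : ∀ i j x y, x < D → y < D →
        ((NestQ p m).sat (Function.update (Function.update As (2 * m + 2) (tp p (D * (i + 1)) x))
          (2 * m + 3) (tp p (D * (j + 1)) y)) ↔
        (x = m + 1 ∧ y = m + 1 ∧ i < j) ∧ q.length < i ∧ j < q.length + 1 + u.length) := by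
      intro i j x y hxD hyD
      rw [NestQ, conj_sat, conj_sat, Dq_sat p D m i j x y _ (by simp) (by simp) hxD hyD,
        ltQ_sat p D _ _ q.length i c x _ (by simpa using hx) (by simp) hc hxD,
        ltQ_sat p D _ _ j (q.length + 1 + u.length) y d _ (by simp) (by simpa using hy) hyD hd]
    constructor
    · rintro ⟨t, ⟨i, x, hi, rfl⟩, t', ⟨j, y, hj, rfl⟩, h1, h2⟩
      rw [hE i j x y (hw _ (List.mem_of_getElem? hi)) (hw _ (List.mem_of_getElem? hj))] at h1
      obtain ⟨⟨rfl, rfl, hij⟩, h3, h4⟩ := h1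
      rw [e] at hi hj
      obtain ⟨u₁, u₂, rfl, rfl⟩ := mid_split hi h3 (by omega)
      have e' : q ++ c :: ((u₁ ++ (m + 1) :: u₂) ++ d :: s) =
          (q ++ c :: u₁) ++ (m + 1) :: (u₂ ++ d :: s) := by simp
      rw [e'] at hj
      simp only [List.length_append, List.length_cons] at h4
      obtain ⟨u₃, u₄, rfl, rfl⟩ := mid_split hj (by simp; omega) (by simp; omega)
      refine ⟨u₁, u₃, u₄, rfl, ?_⟩
      rw [ih (q ++ c :: u₁) u₃ (u₄ ++ d :: s) (m + 1) (m + 1) _ (by rw [e]; simp) ?_ ?_] at h2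
      · exact h2
      · simp; congr 2; omega
      · simp
    · rintro ⟨u₁, u₂, u₃, rfl, hn⟩
      have hm : m + 1 < D := hw _ (by rw [e]; simp)
      refine ⟨_, ⟨(q ++ c :: u₁).length, m + 1, ?_, rfl⟩, _,
        ⟨(q ++ c :: u₁).length + 1 + u₂.length, m + 1, ?_, rfl⟩, ?_, ?_⟩
      · rw [e, show q ++ c :: ((u₁ ++ (m + 1) :: (u₂ ++ (m + 1) :: u₃)) ++ d :: s) =
          (q ++ c :: u₁) ++ (m + 1) :: (u₂ ++ (m + 1) :: (u₃ ++ d :: s)) by simp]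
        simp
      · rw [e, show q ++ c :: ((u₁ ++ (m + 1) :: (u₂ ++ (m + 1) :: u₃)) ++ d :: s) =
          (q ++ c :: u₁ ++ (m + 1) :: u₂) ++ (m + 1) :: (u₃ ++ d :: s) by simp]
        rw [List.getElem?_append_right (by simp; omega)]
        rw [show (q ++ c :: u₁).length + 1 + u₂.length -
          (q ++ c :: u₁ ++ (m + 1) :: u₂).length = 0 by simp; omega]
        simp
      · rw [hE _ _ _ _ hm hm]
        refine ⟨⟨rfl, rfl, by omega⟩, ?_, ?_⟩ <;> simp <;> omega
      · rw [ih (q ++ c :: u₁) u₂ (u₃ ++ d :: s) (m + 1) (m + 1) _ (by rw [e]; simp) ?_ ?_]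
        · exact hn
        · simp
        · simp

theorem Phi_finite {AP : Type} [Fintype AP] (p : AP) (m : ℕ) (T : Set (Trace AP))
    (h : HModels T (Phi p Finset.univ.toList m)) :
    T.Finite ∧ ∀ t ∈ T, ∃ m, ∀ i, m ≤ i → t i = (∅ : Set AP) := by
  rw [Phi_sat] at h
  obtain ⟨x, hx, y, hy, h⟩ := h
  obtain ⟨N, hN⟩ : ∃ N, ∀ k, y (k + N) = ∅ := by
    obtain ⟨As, -, e, -, -, h2, -⟩ := h y hy
    rw [finQ_sat p _ (by simp), e] at h2
    exact h2.1
  have key : ∀ t ∈ T, ∀ i, N ≤ i → t i = ∅ := by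
    intro t ht i hi
    obtain ⟨As, -, e, e', -, h2, -⟩ := h t ht
    rw [finQ_sat p _ (by simp), e, e'] at h2
    by_contra hne
    obtain ⟨k, hk⟩ := h2.2 i hne
    apply hk
    have := hN (k + i - N)
    rwa [show k + i - N + N = k + i by omega] at this
  refine ⟨?_, fun t ht => ⟨N, key t ht⟩⟩
  refine Set.Finite.of_finite_image (f := fun t => fun i : Fin N => t i) (Set.toFinite _) ?_
  intro t ht t' ht' heq
  funext i
  by_cases hi : i < N
  · exact congrFun heq ⟨i, hi⟩
  · rw [key t ht i (by omega), key t' ht' i (by omega)]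

theorem Phi_true {AP : Type} [Fintype AP] (p : AP) (m D R : ℕ) (hD : m + 2 ≤ D) :
    HModels (TW p D ((m + 1) :: ((AB R m).2 ++ [m + 1]))) (Phi p Finset.univ.toList m) := by
  set w := (m + 1) :: ((AB R m).2 ++ [m + 1]) with hwdef
  have hw : ∀ x ∈ w, x < D := by
    intro x hx
    simp only [hwdef, List.mem_cons, List.mem_append, List.not_mem_nil, or_false] at hx
    rcases hx with h | h | h
    · omega
    · have := (AB_le R m).2 x h; omega
    · omega
  rw [Phi_sat]
  refine ⟨_, ⟨0, m + 1, by simp [hwdef], rfl⟩, _, ⟨0 + 1 + (AB R m).2.length, m + 1, ?_, rfl⟩, ?_⟩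
  · rw [hwdef, show 0 + 1 + (AB R m).2.length = (AB R m).2.length + 1 by omega]
    simp
  rintro z ⟨i, c, hi, rfl⟩
  refine ⟨fun v => if v = 2 * m + 2 then tp p (D * (0 + 1)) (m + 1) else
    if v = 2 * m + 3 then tp p (D * (0 + 1 + (AB R m).2.length + 1)) (m + 1) else
    tp p (D * (i + 1)) c, by simp, by simp, by simp, ?_, ?_, ?_⟩
  · rw [Dq_sat p D m 0 (0 + 1 + (AB R m).2.length) (m + 1) (m + 1) _ (by simp) (by simp)
      (by omega) (by omega)]
    exact ⟨rfl, rfl, by omega⟩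
  · rw [finQ_sat p _ (by simp)]
    simp only [show 2 * m + 3 ≠ 2 * m + 2 by omega, if_false, if_true,
      show 2 * m + 4 ≠ 2 * m + 2 by omega, show 2 * m + 4 ≠ 2 * m + 3 by omega]
    constructor
    · refine ⟨D * (0 + 1 + (AB R m).2.length + 1) + (m + 1) + 1, fun k => ?_⟩
      rw [Set.eq_empty_iff_forall_notMem]
      intro a ha
      rw [mem_tp] at ha
      omega
    · intro j hj
      obtain ⟨a, ha⟩ := Set.nonempty_iff_ne_empty.2 hj
      rw [mem_tp] at ha
      have hcD : c < D := hw _ (List.mem_of_getElem? hi)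
      have hcm : c ≤ m + 1 := by
        have := List.mem_of_getElem? hi
        simp only [hwdef, List.mem_cons, List.mem_append, List.not_mem_nil, or_false] at this
        rcases this with h | h | h
        · omega
        · have := (AB_le R m).2 _ h; omega
        · omega
      have hil : i ≤ 0 + 1 + (AB R m).2.length := by
        obtain ⟨h, _⟩ := List.getElem?_eq_some_iff.1 hi
        simp only [hwdef, List.length_cons, List.length_append, List.length_nil] at h
        omega
      have hmul : D * (i + 1) ≤ D * (0 + 1 + (AB R m).2.length + 1) :=
        Nat.mul_le_mul_left _ (by omega)
      refine ⟨D * (0 + 1 + (AB R m).2.length + 1) + (m + 1) - j, ?_⟩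
      rw [← Set.nonempty_iff_ne_empty]
      refine ⟨p, ?_⟩
      rw [mem_tp]
      refine ⟨rfl, ?_, ?_⟩ <;> omega
  · rw [F_sat p D m w hw [] (AB R m).2 [] (m + 1) (m + 1) _ hwdef (by simp) (by simp)]
    exact (WS_AB R m).2

theorem Phi_false {AP : Type} [Fintype AP] (p : AP) (m D R : ℕ) (hD : m + 2 ≤ D) :
    ¬ HModels (TW p D ((m + 1) :: ((AB R m).1 ++ [m + 1]))) (Phi p Finset.univ.toList m) := by
  set w := (m + 1) :: ((AB R m).1 ++ [m + 1]) with hwdef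
  have hw : ∀ x ∈ w, x < D := by
    intro x hx
    simp only [hwdef, List.mem_cons, List.mem_append, List.not_mem_nil, or_false] at hx
    rcases hx with h | h | h
    · omega
    · have := (AB_le R m).1 x h; omega
    · omega
  rw [Phi_sat]
  rintro ⟨_, ⟨i, c, hi, rfl⟩, _, ⟨j, d, hj, rfl⟩, h⟩
  obtain ⟨As, e1, e2, -, h1, -, h3⟩ := h _ ⟨i, c, hi, rfl⟩
  rw [Dq_sat p D m i j c d As e1 e2 (hw _ (List.mem_of_getElem? hi))
    (hw _ (List.mem_of_getElem? hj))] at h1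
  obtain ⟨rfl, rfl, hij⟩ := h1
  obtain ⟨q, r, e, rfl⟩ := getElem?_split hi
  rw [e] at hj
  obtain ⟨k, rfl⟩ : ∃ k, j = q.length + 1 + k := ⟨j - q.length - 1, by omega⟩
  rw [List.getElem?_append_right (by omega),
    show q.length + 1 + k - q.length = k + 1 by omega, List.getElem?_cons_succ] at hj
  obtain ⟨u, s, rfl, rfl⟩ := getElem?_split hj
  apply h3
  rw [F_sat p D m w hw q u s (m + 1) (m + 1) As e e1 e2]
  obtain ⟨x, rfl⟩ := rep_block (A := (AB R m).1) (s := m + 1) (c := 1) (u₁ := q) (u₂ := u)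
    (u₃ := s) (fun hh => by have := (AB_le R m).1 _ hh; omega)
    (by rw [rep_one, ← e, hwdef]; simp)
  simpa using WS_mono [] x (WS_AB R m).1

end HL

/-- **Strictness of the HyperLTL quantifier alternation hierarchy with essentially
finite models**: for every `n > 0` there is a Σ_{n+1}-sentence that is not
equivalent to any Σ_n-sentence and whose models are all finite sets of traces
ending in the suffix `∅^ω`. -/
theorem hyperltl_alternation_hierarchy_strict_finite
    (AP : Type) [Fintype AP] (hAP : 2 ≤ Fintype.card AP) (n : ℕ) (hn : 0 < n) :
    ∃ φ : HFormula AP, IsSigmaSentence (n + 1) φ ∧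
      (¬ ∃ ψ : HFormula AP, IsSigmaSentence n ψ ∧ ∀ T, HModels T φ ↔ HModels T ψ) ∧
      ∀ T, HModels T φ → T.Finite ∧ ∀ t ∈ T, ∃ m, ∀ i, m ≤ i → t i = (∅ : Set AP) := by
  obtain ⟨m, rfl⟩ : ∃ m, n = m + 1 := ⟨n - 1, by omega⟩
  have hne : Nonempty AP := Fintype.card_pos_iff.1 (by omega)
  obtain ⟨p⟩ := hne
  refine ⟨HL.Phi p Finset.univ.toList m, HL.Phi_sigma _ _ _, ?_,
    fun T hT => HL.Phi_finite p m T hT⟩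
  rintro ⟨ψ, ⟨hsent, hpre⟩, heq⟩
  obtain ⟨R, hR⟩ : ∃ R, R = ψ.prefixList.length := ⟨_, rfl⟩
  obtain ⟨D, hD⟩ : ∃ D, D = (m + 1) + HL.hxd ψ + 2 := ⟨_, rfl⟩
  have hB := (heq _).1 (HL.Phi_true p m D R (by omega))
  refine HL.Phi_false p m D R (by omega) ((heq _).2 ?_)
  have hfree : ∀ (T : Set (Trace AP)) (As As' : ℕ → Trace AP), ψ.sat T As ↔ ψ.sat T As' := by
    intro T As As'
    apply HL.h_congr
    intro x hx
    rw [HFormula.IsSentence] at hsent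
    rw [hsent] at hx
    exact absurd hx (by simp)
  have hM : HL.Mat ψ.prefixList ((m + 1) :: ((HL.AB R m).2 ++ [m + 1]))
      ((m + 1) :: ((HL.AB R m).1 ++ [m + 1])) (fun i j => i = 0 ∧ j = 0) := by
    refine HL.Mat.node [] _ [] _ (m + 1) _ (fun _ _ => False) (fun _ _ => False)
      (.leaf _ _ _ (HL.S_refl _ _) (fun _ _ h => h))
      (.leaf _ _ _ (HL.S_append (HL.S_AB R m _ hpre hR.ge) (HL.S_refl _ _)) (fun _ _ h => h)) ?_
    intro i j h
    exact Or.inl h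
  have := HL.transfer p D (m + 1) _ _ ?_ ψ hD.ge _ (fun _ => 0) (fun _ => 0) (fun _ => m + 1) hM
    (fun _ => ⟨rfl, rfl⟩) (fun _ => by simp) ((hfree _ _ _).1 hB)
  · exact (hfree _ _ _).1 this
  · intro x hx
    simp only [List.mem_cons, List.mem_append, List.not_mem_nil, or_false] at hx
    rcases hx with h | h | h
    · omega
    · have := (HL.AB_le R m).2 x h; omega
    · omega
end

section
/- Fix n > 0. Under a fixed computable injective encoding of HyperLTL sentences as natural numbers, the set of codes of HyperLTL sentences that are equivalent to some Σ_n-sentence is Π¹₁-complete: it is the complement of a Σ¹₁ set, and the complement of every Σ¹₁ set many-one reduces to it via a total computable function. -/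
/-! ### A fixed computable injective encoding of HyperLTL formulas -/

def QF.codeWith {AP : Type} (e : AP → ℕ) : QF AP → ℕ
  | .atom a x => Nat.pair 0 (Nat.pair (e a) x)
  | .neg ψ => Nat.pair 1 (ψ.codeWith e)
  | .disj ψ₁ ψ₂ => Nat.pair 2 (Nat.pair (ψ₁.codeWith e) (ψ₂.codeWith e))
  | .next ψ => Nat.pair 3 (ψ.codeWith e)
  | .untl ψ₁ ψ₂ => Nat.pair 4 (Nat.pair (ψ₁.codeWith e) (ψ₂.codeWith e))

def HFormula.codeWith {AP : Type} (e : AP → ℕ) : HFormula AP → ℕ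
  | .ex x φ => Nat.pair 0 (Nat.pair x (φ.codeWith e))
  | .all x φ => Nat.pair 1 (Nat.pair x (φ.codeWith e))
  | .qf ψ => Nat.pair 2 (ψ.codeWith e)

/-! ### Arithmetic formulas and Σ¹₁ sets -/

/-- Terms of arithmetic (signature 0,1,+,·) with number variables and
applications of (free) type-1 function variables. -/
inductive ATerm : Type where
  | var : ℕ → ATerm
  | zero : ATerm
  | one : ATerm
  | add : ATerm → ATerm → ATerm
  | mul : ATerm → ATerm → ATerm
  | app : ℕ → ATerm → ATerm

def ATerm.eval : ATerm → (ℕ → ℕ) → (ℕ → ℕ → ℕ) → ℕ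
  | .var x, v, _ => v x
  | .zero, _, _ => 0
  | .one, _, _ => 1
  | .add s t, v, F => s.eval v F + t.eval v F
  | .mul s t, v, F => s.eval v F * t.eval v F
  | .app f t, v, F => F f (t.eval v F)

/-- Formulas of arithmetic with arbitrary quantification over natural numbers
(type-0 objects); type-1 function variables occur free, via `ATerm.app`. -/
inductive AForm : Type where
  | eq : ATerm → ATerm → AForm
  | lt : ATerm → ATerm → AForm
  | neg : AForm → AForm
  | disj : AForm → AForm → AForm
  | exN : ℕ → AForm → AForm
  | allN : ℕ → AForm → AForm

def AForm.sat : AForm → (ℕ → ℕ) → (ℕ → ℕ → ℕ) → Prop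
  | .eq s t, v, F => s.eval v F = t.eval v F
  | .lt s t, v, F => s.eval v F < t.eval v F
  | .neg φ, v, F => ¬ φ.sat v F
  | .disj φ ψ, v, F => φ.sat v F ∨ ψ.sat v F
  | .exN x φ, v, F => ∃ n : ℕ, φ.sat (Function.update v x n) F
  | .allN x φ, v, F => ∀ n : ℕ, φ.sat (Function.update v x n) F

/-- A set `N ⊆ ℕ` is Σ¹₁ if it is defined by existential quantification over
type-1 objects (functions ℕ → ℕ) followed by an arithmetic formula with
arbitrary quantification over natural numbers. -/
def Sigma11 (N : Set ℕ) : Prop :=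
  ∃ ψ : AForm, ∀ x : ℕ, x ∈ N ↔ ∃ F : ℕ → ℕ → ℕ, ψ.sat (fun _ => x) F

/-- `A` many-one reduces to `B` via a total computable function. -/
def ManyOneRed (A B : Set ℕ) : Prop :=
  ∃ f : ℕ → ℕ, Computable f ∧ ∀ x, x ∈ A ↔ f x ∈ B

/-- The set of codes of HyperLTL sentences that are equivalent to some
Σ_n-sentence. -/
def EquivSigmaCodes (n : ℕ) : Set ℕ :=
  {c : ℕ | ∃ φ : HFormula ℕ, φ.IsSentence ∧ HFormula.codeWith id φ = c ∧
    ∃ ψ : HFormula ℕ, IsSigmaSentence n ψ ∧ ∀ T, HModels T φ ↔ HModels T ψ}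


/-! ### Auxiliary material: quantifier-free formulas -/
namespace HyperProof

/-- Satisfaction of a quantifier-free formula at a given position. -/
def satAt {AP : Type} (ψ : QF AP) (As : ℕ → Trace AP) (j : ℕ) : Prop := ψ.sat (shiftAsg As j)

theorem shift_shift {AP : Type} (As : ℕ → Trace AP) (i j : ℕ) :
    shiftAsg (shiftAsg As i) j = shiftAsg As (i + j) := by
  funext x k
  simp only [shiftAsg, Trace.shift]
  congr 1
  omega

theorem shift_zero {AP : Type} (As : ℕ → Trace AP) : shiftAsg As 0 = As := by
  funext x k
  simp [shiftAsg, Trace.shift]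

theorem sat_iff_at {AP : Type} (ψ : QF AP) (As : ℕ → Trace AP) : ψ.sat As ↔ satAt ψ As 0 := by
  rw [satAt, shift_zero]

theorem at_atom {AP : Type} (a : AP) (x : ℕ) (As : ℕ → Trace AP) (j : ℕ) :
    satAt (.atom a x) As j ↔ a ∈ As x j := by
  simp [satAt, QF.sat, shiftAsg, Trace.shift]

theorem at_neg {AP : Type} (ψ : QF AP) (As : ℕ → Trace AP) (j : ℕ) :
    satAt (.neg ψ) As j ↔ ¬ satAt ψ As j := by
  simp [satAt, QF.sat]

theorem at_disj {AP : Type} (ψ χ : QF AP) (As : ℕ → Trace AP) (j : ℕ) :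
    satAt (.disj ψ χ) As j ↔ satAt ψ As j ∨ satAt χ As j := by
  simp [satAt, QF.sat]

theorem at_next {AP : Type} (ψ : QF AP) (As : ℕ → Trace AP) (j : ℕ) :
    satAt (.next ψ) As j ↔ satAt ψ As (j + 1) := by
  simp [satAt, QF.sat, shift_shift]

theorem at_untl {AP : Type} (ψ χ : QF AP) (As : ℕ → Trace AP) (j : ℕ) :
    satAt (.untl ψ χ) As j ↔ ∃ k, satAt χ As (j + k) ∧ ∀ k' < k, satAt ψ As (j + k') := by
  simp [satAt, QF.sat, shift_shift]

/-- Conjunction. -/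
def cj (ψ χ : QF ℕ) : QF ℕ := .neg (.disj (.neg ψ) (.neg χ))
/-- A tautology in the variable `x`. -/
def tt (x : ℕ) : QF ℕ := .disj (.atom 0 x) (.neg (.atom 0 x))
/-- Eventually. -/
def ev (x : ℕ) (ψ : QF ℕ) : QF ℕ := .untl (tt x) ψ
/-- Some `p`-position of `x` is a `q`-position of `y`. -/
def same (p x q y : ℕ) : QF ℕ := ev x (cj (.atom p x) (.atom q y))
/-- Some `p`-position of `x` is strictly before some `q`-position of `y`. -/
def before (p x q y : ℕ) : QF ℕ := ev x (cj (.atom p x) (.next (ev y (.atom q y))))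
/-- Some `p`-position of `x` is directly before some `q`-position of `y`. -/
def dbefore (p x q y : ℕ) : QF ℕ := ev x (cj (.atom p x) (.next (.atom q y)))
/-- There is exactly one `p`-position of `x`. -/
def uniq (p x : ℕ) : QF ℕ :=
  .untl (.neg (.atom p x)) (cj (.atom p x) (.next (.neg (ev x (.atom p x)))))
/-- The position `k` of `x` is a `p`-position. -/
def cst (p x : ℕ) : ℕ → QF ℕ
  | 0 => .atom p x
  | k + 1 => .next (cst p x k)

theorem at_cj (ψ χ : QF ℕ) (As : ℕ → Trace ℕ) (j : ℕ) :
    satAt (cj ψ χ) As j ↔ satAt ψ As j ∧ satAt χ As j := by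
  simp only [cj, at_neg, at_disj]; tauto

theorem at_tt (x : ℕ) (As : ℕ → Trace ℕ) (j : ℕ) : satAt (tt x) As j := by
  simp only [tt, at_neg, at_disj]; tauto

theorem at_ev (x : ℕ) (ψ : QF ℕ) (As : ℕ → Trace ℕ) (j : ℕ) :
    satAt (ev x ψ) As j ↔ ∃ k, satAt ψ As (j + k) := by
  simp [ev, at_untl, at_tt]

theorem sat_same (p x q y : ℕ) (As : ℕ → Trace ℕ) :
    (same p x q y).sat As ↔ ∃ j, p ∈ As x j ∧ q ∈ As y j := by
  simp [sat_iff_at, same, at_ev, at_cj, at_atom]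

theorem sat_before (p x q y : ℕ) (As : ℕ → Trace ℕ) :
    (before p x q y).sat As ↔ ∃ j k, j < k ∧ p ∈ As x j ∧ q ∈ As y k := by
  simp only [sat_iff_at, before, at_ev, at_cj, at_atom, at_next]
  constructor
  · rintro ⟨j, h, k, h'⟩
    exact ⟨_, _, by omega, h, h'⟩
  · rintro ⟨j, k, hjk, h, h'⟩
    refine ⟨j, by simpa using h, k - j - 1, ?_⟩
    have : 0 + j + 1 + (k - j - 1) = k := by omega
    rwa [this]

theorem sat_dbefore (p x q y : ℕ) (As : ℕ → Trace ℕ) :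
    (dbefore p x q y).sat As ↔ ∃ j, p ∈ As x j ∧ q ∈ As y (j + 1) := by
  simp [sat_iff_at, dbefore, at_ev, at_cj, at_atom, at_next]

theorem sat_uniq (p x : ℕ) (As : ℕ → Trace ℕ) :
    (uniq p x).sat As ↔ ∃ j, ∀ i, p ∈ As x i ↔ i = j := by
  simp only [sat_iff_at, uniq, at_untl, at_ev, at_cj, at_atom, at_next, at_neg, Nat.zero_add]
  constructor
  · rintro ⟨j, ⟨h, h1⟩, h2⟩
    refine ⟨j, fun i => ⟨fun hi => ?_, fun hi => hi ▸ h⟩⟩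
    rcases lt_trichotomy i j with hlt | heq | hgt
    · exact absurd hi (h2 i hlt)
    · exact heq
    · refine absurd ⟨i - j - 1, ?_⟩ h1
      have : j + 1 + (i - j - 1) = i := by omega
      rwa [this]
  · rintro ⟨j, h⟩
    refine ⟨j, ⟨(h j).2 rfl, ?_⟩, fun k hk hk' => ?_⟩
    · rintro ⟨k, hk⟩
      have := (h _).1 hk
      omega
    · have := (h _).1 hk'
      omega

theorem sat_cst (p x k : ℕ) (As : ℕ → Trace ℕ) :
    (cst p x k).sat As ↔ p ∈ As x k := by
  have : ∀ k j, satAt (cst p x k) As j ↔ p ∈ As x (j + k) := by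
    intro k
    induction k with
    | zero => intro j; simp [cst, at_atom]
    | succ k ih =>
      intro j
      rw [cst, at_next, ih]
      have : j + 1 + k = j + (k + 1) := by omega
      rw [this]
  rw [sat_iff_at, this, Nat.zero_add]

/-! ### Free variables, renaming, prenex formulas -/

theorem QF_sat_congr {AP : Type} (ψ : QF AP) : ∀ (As Bs : ℕ → Trace AP),
    (∀ x ∈ ψ.freeVars, As x = Bs x) → (ψ.sat As ↔ ψ.sat Bs) := by
  induction ψ with
  | atom a x =>
    intro As Bs h
    simp only [QF.sat, h x (by simp [QF.freeVars])]
  | neg ψ ih =>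
    intro As Bs h
    simp only [QF.sat, ih As Bs h]
  | disj ψ χ ih1 ih2 =>
    intro As Bs h
    simp only [QF.sat, ih1 As Bs (fun x hx => h x (Or.inl hx)),
      ih2 As Bs (fun x hx => h x (Or.inr hx))]
  | next ψ ih =>
    intro As Bs h
    simp only [QF.sat]
    exact ih _ _ (fun x hx => by simp only [shiftAsg, h x hx])
  | untl ψ χ ih1 ih2 =>
    intro As Bs h
    simp only [QF.sat]
    have h1 : ∀ j, ψ.sat (shiftAsg As j) ↔ ψ.sat (shiftAsg Bs j) := fun j =>
      ih1 _ _ (fun x hx => by simp only [shiftAsg, h x (Or.inl hx)])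
    have h2 : ∀ j, χ.sat (shiftAsg As j) ↔ χ.sat (shiftAsg Bs j) := fun j =>
      ih2 _ _ (fun x hx => by simp only [shiftAsg, h x (Or.inr hx)])
    simp only [h1, h2]

theorem H_sat_congr {AP : Type} (φ : HFormula AP) (T : Set (Trace AP)) :
    ∀ (As Bs : ℕ → Trace AP),
    (∀ x ∈ φ.freeVars, As x = Bs x) → (φ.sat T As ↔ φ.sat T Bs) := by
  induction φ with
  | qf ψ => intro As Bs h; exact QF_sat_congr ψ As Bs h
  | ex y φ ih =>
    intro As Bs h
    simp only [HFormula.sat]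
    refine exists_congr fun t => and_congr_right fun _ => ih _ _ fun x hx => ?_
    by_cases hxy : x = y
    · subst hxy; simp
    · simp [hxy, h x ⟨hx, hxy⟩]
  | all y φ ih =>
    intro As Bs h
    simp only [HFormula.sat]
    refine forall_congr' fun t => imp_congr_right fun _ => ih _ _ fun x hx => ?_
    by_cases hxy : x = y
    · subst hxy; simp
    · simp [hxy, h x ⟨hx, hxy⟩]

/-- Renaming of trace variables. -/
def renQ (σ : ℕ → ℕ) : QF ℕ → QF ℕ
  | .atom a x => .atom a (σ x)
  | .neg ψ => .neg (renQ σ ψ)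
  | .disj ψ χ => .disj (renQ σ ψ) (renQ σ χ)
  | .next ψ => .next (renQ σ ψ)
  | .untl ψ χ => .untl (renQ σ ψ) (renQ σ χ)

theorem renQ_sat (σ : ℕ → ℕ) (ψ : QF ℕ) : ∀ As : ℕ → Trace ℕ,
    (renQ σ ψ).sat As ↔ ψ.sat (fun x => As (σ x)) := by
  induction ψ with
  | atom a x => intro As; rfl
  | neg ψ ih => intro As; simp only [renQ, QF.sat, ih]
  | disj ψ χ ih1 ih2 => intro As; simp only [renQ, QF.sat, ih1, ih2]
  | next ψ ih => intro As; simp only [renQ, QF.sat, ih]; rfl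
  | untl ψ χ ih1 ih2 => intro As; simp only [renQ, QF.sat, ih1, ih2]; rfl

theorem renQ_fv (σ : ℕ → ℕ) (ψ : QF ℕ) : (renQ σ ψ).freeVars = σ '' ψ.freeVars := by
  induction ψ with
  | atom a x => simp [renQ, QF.freeVars]
  | neg ψ ih => simp only [renQ, QF.freeVars, ih]
  | disj ψ χ ih1 ih2 => simp only [renQ, QF.freeVars, ih1, ih2, Set.image_union]
  | next ψ ih => simp only [renQ, QF.freeVars, ih]
  | untl ψ χ ih1 ih2 => simp only [renQ, QF.freeVars, ih1, ih2, Set.image_union]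

/-- The prenex formula with quantifier prefix `l` over the variables `m, m+1, …`. -/
def mkH : List Bool → ℕ → QF ℕ → HFormula ℕ
  | [], _, θ => .qf θ
  | true :: l, m, θ => .ex m (mkH l (m + 1) θ)
  | false :: l, m, θ => .all m (mkH l (m + 1) θ)

theorem mkH_fv (l : List Bool) : ∀ (m : ℕ) (θ : QF ℕ), (∀ x ∈ θ.freeVars, x < m + l.length) →
    ∀ x ∈ (mkH l m θ).freeVars, x < m := by
  induction l with
  | nil => intro m θ h x hx; exact h x hx
  | cons b l ih =>
    intro m θ h x hx
    have h' : ∀ x ∈ θ.freeVars, x < (m + 1) + l.length := fun x hx => by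
      have := h x hx
      simp only [List.length_cons] at this
      omega
    have key : x ∈ (mkH l (m + 1) θ).freeVars ∧ x ≠ m := by
      cases b <;> exact ⟨hx.1, hx.2⟩
    have := ih (m + 1) θ h' x key.1
    have := key.2
    omega

/-- Shift the variables from `m` on by `k`. -/
def sh (m k x : ℕ) : ℕ := if x < m then x else x + k

theorem mkH_shift (k : ℕ) (l : List Bool) : ∀ (m₀ m : ℕ) (θ : QF ℕ) (T : Set (Trace ℕ))
    (As Bs : ℕ → Trace ℕ), m₀ ≤ m →
    (∀ x ∈ θ.freeVars, x < m + l.length) → (∀ x < m, As (sh m₀ k x) = Bs x) →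
    ((mkH l (m + k) (renQ (sh m₀ k) θ)).sat T As ↔ (mkH l m θ).sat T Bs) := by
  induction l with
  | nil =>
    intro m₀ m θ T As Bs hm h hAB
    simp only [mkH, HFormula.sat, renQ_sat]
    exact QF_sat_congr _ _ _ fun x hx => hAB x (by simpa using h x hx)
  | cons b l ih =>
    intro m₀ m θ T As Bs hm h hAB
    have h' : ∀ x ∈ θ.freeVars, x < (m + 1) + l.length := fun x hx => by
      have := h x hx
      simp only [List.length_cons] at this
      omega
    have key : ∀ t, ((mkH l (m + k + 1) (renQ (sh m₀ k) θ)).sat T (Function.update As (m + k) t) ↔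
        (mkH l (m + 1) θ).sat T (Function.update Bs m t)) := by
      intro t
      have := ih m₀ (m + 1) θ T (Function.update As (m + k) t) (Function.update Bs m t) (by omega)
        h' ?_
      · rwa [show m + 1 + k = m + k + 1 by omega] at this
      · intro x hx
        rcases Nat.lt_succ_iff_lt_or_eq.1 hx with hlt | heq
        · have : sh m₀ k x ≠ m + k := by unfold sh; split <;> omega
          simp [this, hlt.ne, hAB x hlt]
        · have : sh m₀ k x = m + k := by unfold sh; split <;> omega
          rw [this, heq]; simp
    cases b <;> simp only [mkH, HFormula.sat, key]

theorem mkH_or_left (l : List Bool) : ∀ (m : ℕ) (θ₁ θ₂ : QF ℕ) (T : Set (Trace ℕ))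
    (_ : T.Nonempty) (As : ℕ → Trace ℕ), (∀ x ∈ θ₁.freeVars, x < m) →
    ((mkH l m (.disj θ₁ θ₂)).sat T As ↔ θ₁.sat As ∨ (mkH l m θ₂).sat T As) := by
  induction l with
  | nil => intro m θ₁ θ₂ T _ As _; rfl
  | cons b l ih =>
    intro m θ₁ θ₂ T hT As h
    have key : ∀ t, (mkH l (m + 1) (.disj θ₁ θ₂)).sat T (Function.update As m t) ↔
        θ₁.sat As ∨ (mkH l (m + 1) θ₂).sat T (Function.update As m t) := by
      intro t
      rw [ih (m + 1) θ₁ θ₂ T hT _ (fun x hx => by have := h x hx; omega)]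
      rw [QF_sat_congr θ₁ (Function.update As m t) As
        (fun x hx => by have := h x hx; simp [this.ne])]
    obtain ⟨t₀, ht₀⟩ := hT
    cases b
    · simp only [mkH, HFormula.sat, key]
      by_cases hc : θ₁.sat As <;> simp [hc]
    · simp only [mkH, HFormula.sat, key]
      by_cases hc : θ₁.sat As
      · simp only [hc, true_or, and_true, iff_true]; exact ⟨t₀, ht₀⟩
      · simp [hc]

theorem mkH_or (l₁ l₂ : List Bool) : ∀ (m : ℕ) (θ₁ θ₂ : QF ℕ) (T : Set (Trace ℕ))
    (_ : T.Nonempty) (As : ℕ → Trace ℕ), (∀ x ∈ θ₁.freeVars, x < m + l₁.length) →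
    (∀ x ∈ (mkH l₂ (m + l₁.length) θ₂).freeVars, x < m) →
    ((mkH (l₁ ++ l₂) m (.disj θ₁ θ₂)).sat T As ↔
      (mkH l₁ m θ₁).sat T As ∨ (mkH l₂ (m + l₁.length) θ₂).sat T As) := by
  induction l₁ with
  | nil =>
    intro m θ₁ θ₂ T hT As h _
    exact mkH_or_left l₂ m θ₁ θ₂ T hT As h
  | cons b l ih =>
    intro m θ₁ θ₂ T hT As h h2
    have hlen : m + (b :: l).length = (m + 1) + l.length := by
      simp only [List.length_cons]; omega
    rw [hlen] at h h2 ⊢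
    have key : ∀ t, (mkH (l ++ l₂) (m + 1) (.disj θ₁ θ₂)).sat T (Function.update As m t) ↔
        (mkH l (m + 1) θ₁).sat T (Function.update As m t) ∨
          (mkH l₂ (m + 1 + l.length) θ₂).sat T As := by
      intro t
      rw [ih (m + 1) θ₁ θ₂ T hT _ h (fun x hx => by have := h2 x hx; omega)]
      rw [H_sat_congr (mkH l₂ (m + 1 + l.length) θ₂) T (Function.update As m t) As
        (fun x hx => by have := h2 x hx; simp [this.ne])]
    obtain ⟨t₀, ht₀⟩ := hT
    cases b
    · simp only [List.cons_append, mkH, HFormula.sat, key]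
      by_cases hc : (mkH l₂ (m + 1 + l.length) θ₂).sat T As <;> simp [hc]
    · simp only [List.cons_append, mkH, HFormula.sat, key]
      by_cases hc : (mkH l₂ (m + 1 + l.length) θ₂).sat T As
      · simp only [hc, or_true, and_true, iff_true]; exact ⟨t₀, ht₀⟩
      · simp [hc]

theorem mkH_neg (l : List Bool) : ∀ (m : ℕ) (θ : QF ℕ) (T : Set (Trace ℕ)) (As : ℕ → Trace ℕ),
    ((mkH (l.map not) m (.neg θ)).sat T As ↔ ¬ (mkH l m θ).sat T As) := by
  induction l with
  | nil => intro m θ T As; rfl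
  | cons b l ih =>
    intro m θ T As
    cases b
    · simp only [List.map_cons, Bool.not_false, mkH, HFormula.sat, ih]; push Not; rfl
    · simp only [List.map_cons, Bool.not_true, mkH, HFormula.sat, ih]; push Not; rfl

theorem mkH_cj_left (l : List Bool) : ∀ (m : ℕ) (θ₁ θ₂ : QF ℕ) (T : Set (Trace ℕ))
    (_ : T.Nonempty) (As : ℕ → Trace ℕ), (∀ x ∈ θ₁.freeVars, x < m) →
    ((mkH l m (cj θ₁ θ₂)).sat T As ↔ θ₁.sat As ∧ (mkH l m θ₂).sat T As) := by
  intro m θ₁ θ₂ T hT As h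
  have e : ∀ l : List Bool, l = (l.map not).map not := by intro l; simp [Function.comp_def]
  rw [cj, e l, mkH_neg, mkH_or_left _ _ _ _ _ hT _ (by simpa [QF.freeVars] using h), mkH_neg, ← e]
  simp only [QF.sat]; tauto

/-- Definability of a property of trace sets and assignments by a prenex formula whose free
variables are below `m`. -/
def Def (m : ℕ) (P : Set (Trace ℕ) → (ℕ → Trace ℕ) → Prop) : Prop :=
  ∃ l θ, (∀ x ∈ θ.freeVars, x < m + List.length l) ∧
    ∀ T, T.Nonempty → ∀ As, (mkH l m θ).sat T As ↔ P T As

theorem Def.congr {m : ℕ} {P Q : Set (Trace ℕ) → (ℕ → Trace ℕ) → Prop} (h : Def m P)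
    (hPQ : ∀ T As, P T As ↔ Q T As) : Def m Q := by
  obtain ⟨l, θ, h1, h2⟩ := h
  exact ⟨l, θ, h1, fun T hT As => (h2 T hT As).trans (hPQ T As)⟩

theorem Def.qf {m : ℕ} (θ : QF ℕ) (h : ∀ x ∈ θ.freeVars, x < m) :
    Def m (fun _ As => θ.sat As) :=
  ⟨[], θ, by simpa using h, fun _ _ _ => Iff.rfl⟩

theorem Def.neg {m : ℕ} {P : Set (Trace ℕ) → (ℕ → Trace ℕ) → Prop} (h : Def m P) :
    Def m (fun T As => ¬ P T As) := by
  obtain ⟨l, θ, h1, h2⟩ := h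
  refine ⟨l.map not, .neg θ, by simpa [QF.freeVars] using h1, fun T hT As => ?_⟩
  rw [mkH_neg, h2 T hT]

theorem Def.or {m : ℕ} {P Q : Set (Trace ℕ) → (ℕ → Trace ℕ) → Prop} (h : Def m P)
    (h' : Def m Q) : Def m (fun T As => P T As ∨ Q T As) := by
  obtain ⟨l₁, θ₁, h1, h2⟩ := h
  obtain ⟨l₂, θ₂, h3, h4⟩ := h'
  have hfv : ∀ x ∈ (renQ (sh m l₁.length) θ₂).freeVars, x < m + l₁.length + l₂.length := by
    intro x hx
    rw [renQ_fv] at hx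
    obtain ⟨y, hy, rfl⟩ := hx
    have := h3 y hy
    unfold sh
    split <;> omega
  have hs : ∀ T As, (mkH l₂ (m + l₁.length) (renQ (sh m l₁.length) θ₂)).sat T As ↔
      (mkH l₂ m θ₂).sat T As := fun T As =>
    mkH_shift _ _ m m θ₂ T As As le_rfl h3 (fun x hx => by simp [sh, hx])
  refine ⟨l₁ ++ l₂, .disj θ₁ (renQ (sh m l₁.length) θ₂), ?_, fun T hT As => ?_⟩
  · intro x hx
    simp only [List.length_append]
    rcases hx with hx | hx
    · have := h1 x hx; omega
    · have := hfv x hx; omega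
  · rw [mkH_or _ _ _ _ _ _ hT _ h1, h2 T hT, hs, h4 T hT]
    have aux : ∀ (l : List Bool) (k : ℕ) (θ : QF ℕ),
        (∀ x ∈ θ.freeVars, x < m ∨ m + l₁.length ≤ x) → (∀ x ∈ θ.freeVars, x < k + l.length) →
        ∀ x ∈ (mkH l k θ).freeVars, (x < m ∨ m + l₁.length ≤ x) ∧ x < k := by
      intro l
      induction l with
      | nil => intro k θ ha hb x hx; exact ⟨ha x hx, hb x hx⟩
      | cons b l ih =>
        intro k θ ha hb x hx
        have hb' : ∀ x ∈ θ.freeVars, x < (k + 1) + l.length := fun x hx => by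
          have := hb x hx
          simp only [List.length_cons] at this
          omega
        have key : x ∈ (mkH l (k + 1) θ).freeVars ∧ x ≠ k := by
          cases b <;> exact ⟨hx.1, hx.2⟩
        have h3 := ih (k + 1) θ ha hb' x key.1
        have := key.2
        exact ⟨h3.1, by omega⟩
    intro x hx
    have := aux l₂ (m + l₁.length) _ ?_ hfv x hx
    · omega
    · intro y hy
      rw [renQ_fv] at hy
      obtain ⟨z, hz, rfl⟩ := hy
      unfold sh
      split <;> omega

theorem Def.and {m : ℕ} {P Q : Set (Trace ℕ) → (ℕ → Trace ℕ) → Prop} (h : Def m P)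
    (h' : Def m Q) : Def m (fun T As => P T As ∧ Q T As) :=
  (h.neg.or h'.neg).neg.congr (fun T As => by tauto)

theorem Def.ex {m : ℕ} {P : Set (Trace ℕ) → (ℕ → Trace ℕ) → Prop} (h : Def (m + 1) P) :
    Def m (fun T As => ∃ t ∈ T, P T (Function.update As m t)) := by
  obtain ⟨l, θ, h1, h2⟩ := h
  refine ⟨true :: l, θ, fun x hx => ?_, fun T hT As => ?_⟩
  · have := h1 x hx; simp only [List.length_cons]; omega
  · simp only [mkH, HFormula.sat, h2 T hT]

theorem Def.all {m : ℕ} {P : Set (Trace ℕ) → (ℕ → Trace ℕ) → Prop} (h : Def (m + 1) P) :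
    Def m (fun T As => ∀ t ∈ T, P T (Function.update As m t)) := by
  obtain ⟨l, θ, h1, h2⟩ := h
  refine ⟨false :: l, θ, fun x hx => ?_, fun T hT As => ?_⟩
  · have := h1 x hx; simp only [List.length_cons]; omega
  · simp only [mkH, HFormula.sat, h2 T hT]

end HyperProof


/-! ### A first-order logic over the natural numbers with one ternary function -/
namespace HyperProof

/-- The mark `p` of the trace `t` is exactly at position `n`. -/
def Mk (p : ℕ) (t : Trace ℕ) (n : ℕ) : Prop := ∀ j, p ∈ t j ↔ j = n

theorem Mk.same {p q : ℕ} {t s : Trace ℕ} {n k : ℕ} (h : Mk p t n) (h' : Mk q s k) :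
    (∃ j, p ∈ t j ∧ q ∈ s j) ↔ n = k := by
  simp only [h _, h' _]
  constructor
  · rintro ⟨j, rfl, rfl⟩; rfl
  · rintro rfl; exact ⟨n, rfl, rfl⟩

/-- `T` encodes the (graph of the) ternary function `H`. -/
def Enc (T : Set (Trace ℕ)) (H : ℕ → ℕ → ℕ → ℕ) : Prop :=
  (∀ t ∈ T, ∃ f x y, Mk 0 t f ∧ Mk 1 t x ∧ Mk 2 t y ∧ Mk 3 t (H f x y)) ∧
  (∀ f x y, ∃ t ∈ T, Mk 0 t f ∧ Mk 1 t x ∧ Mk 2 t y ∧ Mk 3 t (H f x y)) ∧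
  (∀ n, ∃ f x y, H f x y = n)

/-- Terms. -/
inductive HT : Type where
  | var : ℕ → HT
  | const : ℕ → HT
  | h : HT → HT → HT → HT

def HT.eval : HT → (ℕ → ℕ) → (ℕ → ℕ → ℕ → ℕ) → ℕ
  | .var x, v, _ => v x
  | .const k, _, _ => k
  | .h a b c, v, H => H (a.eval v H) (b.eval v H) (c.eval v H)

/-- Formulas. -/
inductive HF : Type where
  | eq : HT → HT → HF
  | lt : HT → HT → HF
  | neg : HF → HF
  | disj : HF → HF → HF
  | ex : ℕ → HF → HF
  | all : ℕ → HF → HF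

def HF.sat : HF → (ℕ → ℕ) → (ℕ → ℕ → ℕ → ℕ) → Prop
  | .eq s t, v, H => s.eval v H = t.eval v H
  | .lt s t, v, H => s.eval v H < t.eval v H
  | .neg φ, v, H => ¬ φ.sat v H
  | .disj φ ψ, v, H => φ.sat v H ∨ ψ.sat v H
  | .ex x φ, v, H => ∃ n : ℕ, φ.sat (Function.update v x n) H
  | .all x φ, v, H => ∀ n : ℕ, φ.sat (Function.update v x n) H

/-- Definability of a number property in HyperLTL over encodings of functions. -/
def NDef (m : ℕ) (Q : (ℕ → ℕ) → (ℕ → ℕ → ℕ → ℕ) → Prop) : Prop :=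
  ∃ P, Def m P ∧ ∀ T H, Enc T H → ∀ As v, (∀ i < m, Mk 3 (As i) (v i)) → (P T As ↔ Q v H)

theorem NDef.congr {m : ℕ} {P Q : (ℕ → ℕ) → (ℕ → ℕ → ℕ → ℕ) → Prop} (h : NDef m P)
    (hPQ : ∀ v H, P v H ↔ Q v H) : NDef m Q := by
  obtain ⟨R, h1, h2⟩ := h
  exact ⟨R, h1, fun T H hE As v hv => (h2 T H hE As v hv).trans (hPQ v H)⟩

theorem NDef.neg {m : ℕ} {P : (ℕ → ℕ) → (ℕ → ℕ → ℕ → ℕ) → Prop} (h : NDef m P) :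
    NDef m (fun v H => ¬ P v H) := by
  obtain ⟨R, h1, h2⟩ := h
  exact ⟨_, h1.neg, fun T H hE As v hv => not_congr (h2 T H hE As v hv)⟩

theorem NDef.or {m : ℕ} {P Q : (ℕ → ℕ) → (ℕ → ℕ → ℕ → ℕ) → Prop} (h : NDef m P)
    (h' : NDef m Q) : NDef m (fun v H => P v H ∨ Q v H) := by
  obtain ⟨R, h1, h2⟩ := h
  obtain ⟨S, h3, h4⟩ := h'
  exact ⟨_, h1.or h3, fun T H hE As v hv => or_congr (h2 T H hE As v hv) (h4 T H hE As v hv)⟩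

theorem NDef.and {m : ℕ} {P Q : (ℕ → ℕ) → (ℕ → ℕ → ℕ → ℕ) → Prop} (h : NDef m P)
    (h' : NDef m Q) : NDef m (fun v H => P v H ∧ Q v H) :=
  (h.neg.or h'.neg).neg.congr (fun T As => by tauto)

theorem upd_marks {m : ℕ} {As : ℕ → Trace ℕ} {v : ℕ → ℕ} (hv : ∀ i < m, Mk 3 (As i) (v i))
    {t : Trace ℕ} {n : ℕ} (ht : Mk 3 t n) :
    ∀ i < m + 1, Mk 3 (Function.update As m t i) (Function.update v m n i) := by
  intro i hi
  rcases Nat.lt_succ_iff_lt_or_eq.1 hi with hlt | rfl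
  · simpa [hlt.ne] using hv i hlt
  · simpa using ht

theorem NDef.ex {m : ℕ} {P : (ℕ → ℕ) → (ℕ → ℕ → ℕ → ℕ) → Prop} (h : NDef (m + 1) P) :
    NDef m (fun v H => ∃ n, P (Function.update v m n) H) := by
  obtain ⟨R, h1, h2⟩ := h
  refine ⟨_, h1.ex, fun T H hE As v hv => ⟨?_, ?_⟩⟩
  · rintro ⟨t, ht, hR⟩
    obtain ⟨f, x, y, -, -, -, h3⟩ := hE.1 t ht
    exact ⟨_, (h2 T H hE _ _ (upd_marks hv h3)).1 hR⟩
  · rintro ⟨n, hn⟩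
    obtain ⟨f, x, y, rfl⟩ := hE.2.2 n
    obtain ⟨t, ht, -, -, -, h3⟩ := hE.2.1 f x y
    exact ⟨t, ht, (h2 T H hE _ _ (upd_marks hv h3)).2 hn⟩

theorem NDef.all {m : ℕ} {P : (ℕ → ℕ) → (ℕ → ℕ → ℕ → ℕ) → Prop} (h : NDef (m + 1) P) :
    NDef m (fun v H => ∀ n, P (Function.update v m n) H) :=
  (h.neg.ex).neg.congr (fun v H => by push Not; rfl)

theorem fv_same {p x q y m : ℕ} (hx : x < m) (hy : y < m) :
    ∀ z ∈ (same p x q y).freeVars, z < m := by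
  intro z hz
  simp [same, ev, tt, cj, QF.freeVars] at hz
  omega

theorem fv_before {p x q y m : ℕ} (hx : x < m) (hy : y < m) :
    ∀ z ∈ (before p x q y).freeVars, z < m := by
  intro z hz
  simp [before, ev, tt, cj, QF.freeVars] at hz
  omega

theorem fv_dbefore {p x q y m : ℕ} (hx : x < m) (hy : y < m) :
    ∀ z ∈ (dbefore p x q y).freeVars, z < m := by
  intro z hz
  simp [dbefore, ev, tt, cj, QF.freeVars] at hz
  omega

theorem fv_uniq {p x m : ℕ} (hx : x < m) :
    ∀ z ∈ (uniq p x).freeVars, z < m := by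
  intro z hz
  simp [uniq, ev, tt, cj, QF.freeVars] at hz
  omega

theorem fv_cst {p x m : ℕ} (hx : x < m) (k : ℕ) :
    ∀ z ∈ (cst p x k).freeVars, z < m := by
  induction k with
  | zero => intro z hz; simp [cst, QF.freeVars] at hz; omega
  | succ k ih => exact ih

theorem NDef.eqv {m i j : ℕ} (hi : i < m) (hj : j < m) : NDef m (fun v _ => v i = v j) :=
  ⟨_, Def.qf _ (fv_same (p := 3) (q := 3) hi hj), fun T H hE As v hv => by
    rw [sat_same]; exact (hv i hi).same (hv j hj)⟩

theorem NDef.ltv {m i j : ℕ} (hi : i < m) (hj : j < m) : NDef m (fun v _ => v i < v j) :=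
  ⟨_, Def.qf _ (fv_before (p := 3) (q := 3) hi hj), fun T H hE As v hv => by
    rw [sat_before]
    simp only [hv i hi _, hv j hj _]
    constructor
    · rintro ⟨a, b, h, rfl, rfl⟩; exact h
    · intro h; exact ⟨_, _, h, rfl, rfl⟩⟩

theorem NDef.constv {m i : ℕ} (hi : i < m) (k : ℕ) : NDef m (fun v _ => v i = k) :=
  ⟨_, Def.qf _ (fv_cst (p := 3) hi k), fun T H hE As v hv => by
    rw [sat_cst, hv i hi]; exact eq_comm⟩

theorem NDef.hrel {m i j k r : ℕ} (hi : i < m) (hj : j < m) (hk : k < m) (hr : r < m) :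
    NDef m (fun v H => v r = H (v i) (v j) (v k)) := by
  refine ⟨_, ((((Def.qf (m := m + 1) _ (fv_same (p := 0) (q := 3) (x := m) (y := i) ?_ ?_)).and
    (Def.qf _ (fv_same (p := 1) (q := 3) (x := m) (y := j) ?_ ?_))).and
    (Def.qf _ (fv_same (p := 2) (q := 3) (x := m) (y := k) ?_ ?_))).and
    (Def.qf _ (fv_same (p := 3) (q := 3) (x := m) (y := r) ?_ ?_))).ex, ?_⟩
  all_goals try omega
  intro T H hE As v hv
  simp only [sat_same, Function.update_self, Function.update_of_ne hi.ne,
    Function.update_of_ne hj.ne, Function.update_of_ne hk.ne, Function.update_of_ne hr.ne]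
  constructor
  · rintro ⟨t, ht, ⟨⟨h0, h1⟩, h2⟩, h3⟩
    obtain ⟨f, x, y, m0, m1, m2, m3⟩ := hE.1 t ht
    rw [m0.same (hv i hi)] at h0
    rw [m1.same (hv j hj)] at h1
    rw [m2.same (hv k hk)] at h2
    rw [m3.same (hv r hr)] at h3
    rw [← h3, h0, h1, h2]
  · intro h
    obtain ⟨t, ht, m0, m1, m2, m3⟩ := hE.2.1 (v i) (v j) (v k)
    refine ⟨t, ht, ⟨⟨?_, ?_⟩, ?_⟩, ?_⟩
    · rw [m0.same (hv i hi)]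
    · rw [m1.same (hv j hj)]
    · rw [m2.same (hv k hk)]
    · rw [m3.same (hv r hr), h]

theorem upd_ren {m : ℕ} {ρ : ℕ → ℕ} (hρ : ∀ x, ρ x < m) (v : ℕ → ℕ) (k n : ℕ) (hk : m ≤ k) :
    (fun x => Function.update v k n (ρ x)) = fun x => v (ρ x) := by
  funext x
  have := hρ x
  rw [Function.update_of_ne (by omega)]

theorem NDef.term (t : HT) : ∀ (m : ℕ) (ρ : ℕ → ℕ) (r : ℕ), (∀ x, ρ x < m) → r < m →
    NDef m (fun v H => v r = t.eval (fun x => v (ρ x)) H) := by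
  induction t with
  | var x => intro m ρ r hρ hr; exact NDef.eqv hr (hρ x)
  | const k => intro m ρ r hρ hr; exact NDef.constv hr k
  | h a b c iha ihb ihc =>
    intro m ρ r hρ hr
    have hρ' : ∀ x, ρ x < m + 1 + 1 + 1 := fun x => by have := hρ x; omega
    refine NDef.congr (NDef.ex (NDef.ex (NDef.ex (((iha (m+1+1+1) ρ m hρ' (by omega)).and
      (ihb (m+1+1+1) ρ (m+1) hρ' (by omega))).and ((ihc (m+1+1+1) ρ (m+1+1) hρ' (by omega)).and
      (NDef.hrel (m := m+1+1+1) (i := m) (j := m+1) (k := m+1+1) (r := r)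
      (by omega) (by omega) (by omega) (by omega))))))) ?_
    intro v H
    have h1 : r ≠ m := by omega
    have h2 : r ≠ m + 1 := by omega
    have h3 : r ≠ m + 1 + 1 := by omega
    simp only [HT.eval, upd_ren hρ _ m _ le_rfl, upd_ren hρ _ (m+1) _ (by omega),
      upd_ren hρ _ (m+1+1) _ (by omega), Function.update_self,
      Function.update_of_ne (show m ≠ m + 1 by omega),
      Function.update_of_ne (show m ≠ m + 1 + 1 by omega),
      Function.update_of_ne (show m + 1 ≠ m + 1 + 1 by omega), Function.update_of_ne h1,
      Function.update_of_ne h2, Function.update_of_ne h3]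
    constructor
    · rintro ⟨n1, n2, n3, ⟨rfl, rfl⟩, rfl, h⟩; exact h
    · intro h; exact ⟨_, _, _, ⟨rfl, rfl⟩, rfl, h⟩

theorem upd_comp {m : ℕ} {ρ : ℕ → ℕ} (hρ : ∀ x, ρ x < m) (v : ℕ → ℕ) (n y : ℕ) :
    (fun x => Function.update v m n (Function.update ρ y m x)) =
      Function.update (fun x => v (ρ x)) y n := by
  funext x
  by_cases h : x = y
  · subst h; simp
  · simp [h, (hρ x).ne]

theorem NDef.form (φ : HF) : ∀ (m : ℕ) (ρ : ℕ → ℕ), (∀ x, ρ x < m) →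
    NDef m (fun v H => φ.sat (fun x => v (ρ x)) H) := by
  induction φ with
  | eq s t =>
    intro m ρ hρ
    have hρ' : ∀ x, ρ x < m + 1 := fun x => by have := hρ x; omega
    refine NDef.congr (NDef.ex ((NDef.term s (m+1) ρ m hρ' (by omega)).and
      (NDef.term t (m+1) ρ m hρ' (by omega)))) ?_
    intro v H
    simp only [HF.sat, upd_ren hρ _ m _ le_rfl, Function.update_self]
    constructor
    · rintro ⟨n, rfl, h⟩; exact h
    · intro h; exact ⟨_, rfl, h⟩
  | lt s t =>
    intro m ρ hρ
    have hρ' : ∀ x, ρ x < m + 1 + 1 := fun x => by have := hρ x; omega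
    refine NDef.congr (NDef.ex (NDef.ex (((NDef.term s (m+1+1) ρ m hρ' (by omega)).and
      (NDef.term t (m+1+1) ρ (m+1) hρ' (by omega))).and
      (NDef.ltv (m := m+1+1) (i := m) (j := m+1) (by omega) (by omega))))) ?_
    intro v H
    simp only [HF.sat, upd_ren hρ _ m _ le_rfl, upd_ren hρ _ (m+1) _ (by omega),
      Function.update_self, Function.update_of_ne (show m ≠ m + 1 by omega)]
    constructor
    · rintro ⟨n, k, ⟨rfl, rfl⟩, h⟩; exact h
    · intro h; exact ⟨_, _, ⟨rfl, rfl⟩, h⟩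
  | neg φ ih => intro m ρ hρ; exact (ih m ρ hρ).neg
  | disj φ ψ ih1 ih2 => intro m ρ hρ; exact (ih1 m ρ hρ).or (ih2 m ρ hρ)
  | ex y φ ih =>
    intro m ρ hρ
    refine NDef.congr (NDef.ex (ih (m+1) (Function.update ρ y m) ?_)) ?_
    · intro x
      by_cases h : x = y
      · subst h; simp
      · have := hρ x; simp only [Function.update_of_ne h]; omega
    · intro v H
      simp only [HF.sat, upd_comp hρ]
  | all y φ ih =>
    intro m ρ hρ
    refine NDef.congr (NDef.all (ih (m+1) (Function.update ρ y m) ?_)) ?_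
    · intro x
      by_cases h : x = y
      · subst h; simp
      · have := hρ x; simp only [Function.update_of_ne h]; omega
    · intro v H
      simp only [HF.sat, upd_comp hρ]

/-! ### The structural axioms: a set of traces encodes a function -/

/-- The semantic content of the structural axioms. -/
def Ax (T : Set (Trace ℕ)) : Prop :=
  (∀ t ∈ T, (∃ j, ∀ i, 0 ∈ t i ↔ i = j) ∧ (∃ j, ∀ i, 1 ∈ t i ↔ i = j) ∧
    (∃ j, ∀ i, 2 ∈ t i ↔ i = j) ∧ (∃ j, ∀ i, 3 ∈ t i ↔ i = j)) ∧
  (∃ t ∈ T, 3 ∈ t 0) ∧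
  (∀ t ∈ T, ∃ s ∈ T, ∃ j, 3 ∈ t j ∧ 3 ∈ s (j + 1)) ∧
  (∀ t₁ ∈ T, ∀ t₂ ∈ T, ∀ t₃ ∈ T, ∃ t ∈ T, (∃ j, 0 ∈ t j ∧ 3 ∈ t₁ j) ∧
    (∃ j, 1 ∈ t j ∧ 3 ∈ t₂ j) ∧ (∃ j, 2 ∈ t j ∧ 3 ∈ t₃ j)) ∧
  (∀ t ∈ T, ∀ s ∈ T, ((∃ j, 0 ∈ t j ∧ 0 ∈ s j) ∧ (∃ j, 1 ∈ t j ∧ 1 ∈ s j) ∧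
    (∃ j, 2 ∈ t j ∧ 2 ∈ s j)) → (∃ j, 3 ∈ t j ∧ 3 ∈ s j))

theorem Def.imp {m : ℕ} {P Q : Set (Trace ℕ) → (ℕ → Trace ℕ) → Prop} (h : Def m P)
    (h' : Def m Q) : Def m (fun T As => P T As → Q T As) :=
  (h.neg.or h').congr (fun T As => by tauto)

theorem Def_ax : Def 1 (fun T _ => Ax T) := by
  have d1 : Def 1 (fun T As => ∀ t ∈ T, (uniq 0 1).sat (Function.update As 1 t) ∧
      (uniq 1 1).sat (Function.update As 1 t) ∧ (uniq 2 1).sat (Function.update As 1 t) ∧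
      (uniq 3 1).sat (Function.update As 1 t)) :=
    Def.all ((Def.qf _ (fv_uniq (by omega))).and ((Def.qf _ (fv_uniq (by omega))).and
      ((Def.qf _ (fv_uniq (by omega))).and (Def.qf _ (fv_uniq (by omega))))))
  have d2 : Def 1 (fun T As => ∃ t ∈ T, (cst 3 1 0).sat (Function.update As 1 t)) :=
    Def.ex (Def.qf _ (fv_cst (by omega) _))
  have d3 : Def 1 (fun T As => ∀ t ∈ T, ∃ s ∈ T,
      (dbefore 3 1 3 2).sat (Function.update (Function.update As 1 t) 2 s)) :=
    Def.all (Def.ex (Def.qf _ (fv_dbefore (by omega) (by omega))))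
  have d4 : Def 1 (fun T As => ∀ t₁ ∈ T, ∀ t₂ ∈ T, ∀ t₃ ∈ T, ∃ t ∈ T,
      (same 0 4 3 1).sat (Function.update (Function.update (Function.update (Function.update
        As 1 t₁) 2 t₂) 3 t₃) 4 t) ∧
      (same 1 4 3 2).sat (Function.update (Function.update (Function.update (Function.update
        As 1 t₁) 2 t₂) 3 t₃) 4 t) ∧
      (same 2 4 3 3).sat (Function.update (Function.update (Function.update (Function.update
        As 1 t₁) 2 t₂) 3 t₃) 4 t)) :=
    Def.all (Def.all (Def.all (Def.ex ((Def.qf _ (fv_same (by omega) (by omega))).and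
      ((Def.qf _ (fv_same (by omega) (by omega))).and
      (Def.qf _ (fv_same (by omega) (by omega))))))))
  have d5 : Def 1 (fun T As => ∀ t ∈ T, ∀ s ∈ T,
      ((same 0 1 0 2).sat (Function.update (Function.update As 1 t) 2 s) ∧
      (same 1 1 1 2).sat (Function.update (Function.update As 1 t) 2 s) ∧
      (same 2 1 2 2).sat (Function.update (Function.update As 1 t) 2 s)) →
      (same 3 1 3 2).sat (Function.update (Function.update As 1 t) 2 s)) :=
    Def.all (Def.all (((Def.qf _ (fv_same (by omega) (by omega))).and
      ((Def.qf _ (fv_same (by omega) (by omega))).and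
      (Def.qf _ (fv_same (by omega) (by omega))))).imp
      (Def.qf _ (fv_same (by omega) (by omega)))))
  refine (d1.and (d2.and (d3.and (d4.and d5)))).congr ?_
  intro T As
  simp [Ax, sat_uniq, sat_cst, sat_dbefore, sat_same]

theorem Ax_enc {T : Set (Trace ℕ)} (h : Ax T) : ∃ H, Enc T H := by
  obtain ⟨h1, h2, h3, h4, h5⟩ := h
  have val : ∀ n, ∃ t ∈ T, Mk 3 t n := by
    intro n
    induction n with
    | zero =>
      obtain ⟨t, ht, h⟩ := h2
      obtain ⟨j, hj⟩ := (h1 t ht).2.2.2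
      refine ⟨t, ht, ?_⟩
      rwa [← (hj 0).1 h] at hj
    | succ n ih =>
      obtain ⟨t, ht, hm⟩ := ih
      obtain ⟨s, hs, j, hj1, hj2⟩ := h3 t ht
      obtain ⟨k, hk⟩ := (h1 s hs).2.2.2
      refine ⟨s, hs, ?_⟩
      have e1 := (hm _).1 hj1
      have e2 := (hk _).1 hj2
      rw [← e2, e1] at hk
      exact hk
  have tot : ∀ f x y, ∃ t ∈ T, ∃ z, Mk 0 t f ∧ Mk 1 t x ∧ Mk 2 t y ∧ Mk 3 t z := by
    intro f x y
    obtain ⟨t₁, ht₁, m1⟩ := val f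
    obtain ⟨t₂, ht₂, m2⟩ := val x
    obtain ⟨t₃, ht₃, m3⟩ := val y
    obtain ⟨t, ht, e1, e2, e3⟩ := h4 t₁ ht₁ t₂ ht₂ t₃ ht₃
    obtain ⟨⟨a, ha⟩, ⟨b, hb⟩, ⟨c, hc⟩, ⟨d, hd⟩⟩ := h1 t ht
    rw [Mk.same ha m1] at e1
    rw [Mk.same hb m2] at e2
    rw [Mk.same hc m3] at e3
    subst e1 e2 e3
    exact ⟨t, ht, d, ha, hb, hc, hd⟩
  choose g hg z hz using tot
  have uni : ∀ t ∈ T, ∃ f x y, Mk 0 t f ∧ Mk 1 t x ∧ Mk 2 t y ∧ Mk 3 t (z f x y) := by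
    intro t ht
    obtain ⟨⟨a, ha⟩, ⟨b, hb⟩, ⟨c, hc⟩, ⟨d, hd⟩⟩ := h1 t ht
    refine ⟨a, b, c, ha, hb, hc, ?_⟩
    obtain ⟨z0, z1, z2, z3⟩ := hz a b c
    have := h5 t ht (g a b c) (hg a b c) ⟨(Mk.same ha z0).2 rfl, (Mk.same hb z1).2 rfl,
      (Mk.same hc z2).2 rfl⟩
    rw [Mk.same hd z3] at this
    rwa [← this]
  refine ⟨z, uni, fun f x y => ⟨g f x y, hg f x y, hz f x y⟩, fun n => ?_⟩
  obtain ⟨t, ht, hm⟩ := val n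
  obtain ⟨f, x, y, -, -, -, h3⟩ := uni t ht
  exact ⟨f, x, y, (hm _).1 ((h3 _).2 rfl)⟩

theorem Enc_ax {T : Set (Trace ℕ)} {H : ℕ → ℕ → ℕ → ℕ} (h : Enc T H) : Ax T := by
  obtain ⟨h1, h2, h3⟩ := h
  have val : ∀ n, ∃ t ∈ T, Mk 3 t n := by
    intro n
    obtain ⟨f, x, y, rfl⟩ := h3 n
    obtain ⟨t, ht, -, -, -, h⟩ := h2 f x y
    exact ⟨t, ht, h⟩
  refine ⟨?_, ?_, ?_, ?_, ?_⟩
  · intro t ht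
    obtain ⟨f, x, y, m0, m1, m2, m3⟩ := h1 t ht
    exact ⟨⟨_, m0⟩, ⟨_, m1⟩, ⟨_, m2⟩, ⟨_, m3⟩⟩
  · obtain ⟨t, ht, h⟩ := val 0
    exact ⟨t, ht, (h 0).2 rfl⟩
  · intro t ht
    obtain ⟨f, x, y, m0, m1, m2, m3⟩ := h1 t ht
    obtain ⟨s, hs, h⟩ := val (H f x y + 1)
    exact ⟨s, hs, _, (m3 _).2 rfl, (h _).2 rfl⟩
  · intro t₁ ht₁ t₂ ht₂ t₃ ht₃
    obtain ⟨_, _, _, -, -, -, a⟩ := h1 t₁ ht₁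
    obtain ⟨_, _, _, -, -, -, b⟩ := h1 t₂ ht₂
    obtain ⟨_, _, _, -, -, -, c⟩ := h1 t₃ ht₃
    obtain ⟨t, ht, m0, m1, m2, -⟩ := h2 _ _ _
    exact ⟨t, ht, (m0.same a).2 rfl, (m1.same b).2 rfl, (m2.same c).2 rfl⟩
  · rintro t ht s hs ⟨e0, e1, e2⟩
    obtain ⟨f, x, y, m0, m1, m2, m3⟩ := h1 t ht
    obtain ⟨f', x', y', n0, n1, n2, n3⟩ := h1 s hs
    rw [m0.same n0] at e0
    rw [m1.same n1] at e1
    rw [m2.same n2] at e2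
    subst e0 e1 e2
    exact (m3.same n3).2 rfl

end HyperProof


/-! ### The lower bound -/
namespace HyperProof

def toHT : ATerm → HT
  | .var x => .var x
  | .zero => .const 0
  | .one => .const 1
  | .add s t => .h (.const 0) (toHT s) (toHT t)
  | .mul s t => .h (.const 1) (toHT s) (toHT t)
  | .app f t => .h (.const (f + 6)) (toHT t) (.const 0)

def toHF : AForm → HF
  | .eq s t => .eq (toHT s) (toHT t)
  | .lt s t => .lt (toHT s) (toHT t)
  | .neg φ => .neg (toHF φ)
  | .disj φ ψ => .disj (toHF φ) (toHF ψ)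
  | .exN x φ => .ex x (toHF φ)
  | .allN x φ => .all x (toHF φ)

/-- The ternary function contains addition and multiplication. -/
def Arith (H : ℕ → ℕ → ℕ → ℕ) : Prop :=
  (∀ x y, H 0 x y = x + y) ∧ (∀ x y, H 1 x y = x * y)

/-- The unary functions coded in `H`. -/
def Fof (H : ℕ → ℕ → ℕ → ℕ) : ℕ → ℕ → ℕ := fun f x => H (f + 6) x 0

theorem toHT_eval {H : ℕ → ℕ → ℕ → ℕ} (hH : Arith H) (t : ATerm) (v : ℕ → ℕ) :
    (toHT t).eval v H = t.eval v (Fof H) := by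
  induction t with
  | var x => rfl
  | zero => rfl
  | one => rfl
  | add s t ih1 ih2 => simp only [toHT, HT.eval, ATerm.eval, ih1, ih2, hH.1]
  | mul s t ih1 ih2 => simp only [toHT, HT.eval, ATerm.eval, ih1, ih2, hH.2]
  | app f t ih => simp only [toHT, HT.eval, ATerm.eval, ih, Fof]

theorem toHF_sat {H : ℕ → ℕ → ℕ → ℕ} (hH : Arith H) (φ : AForm) : ∀ v : ℕ → ℕ,
    ((toHF φ).sat v H ↔ φ.sat v (Fof H)) := by
  induction φ with
  | eq s t => intro v; simp only [toHF, HF.sat, AForm.sat, toHT_eval hH]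
  | lt s t => intro v; simp only [toHF, HF.sat, AForm.sat, toHT_eval hH]
  | neg φ ih => intro v; simp only [toHF, HF.sat, AForm.sat, ih]
  | disj φ ψ ih1 ih2 => intro v; simp only [toHF, HF.sat, AForm.sat, ih1, ih2]
  | exN x φ ih => intro v; simp only [toHF, HF.sat, AForm.sat, ih]
  | allN x φ ih => intro v; simp only [toHF, HF.sat, AForm.sat, ih]

def HF.and (φ ψ : HF) : HF := .neg (.disj (.neg φ) (.neg ψ))
def HF.imp (φ ψ : HF) : HF := .disj (.neg φ) ψ

theorem HF.sat_and (φ ψ : HF) (v : ℕ → ℕ) (H : ℕ → ℕ → ℕ → ℕ) :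
    (φ.and ψ).sat v H ↔ φ.sat v H ∧ ψ.sat v H := by
  simp only [HF.and, HF.sat]; tauto

theorem HF.sat_imp (φ ψ : HF) (v : ℕ → ℕ) (H : ℕ → ℕ → ℕ → ℕ) :
    (φ.imp ψ).sat v H ↔ (φ.sat v H → ψ.sat v H) := by
  simp only [HF.imp, HF.sat]; tauto

/-- The axioms for addition and multiplication. -/
def arithF : HF :=
  (HF.all 0 (.eq (.h (.const 0) (.var 0) (.const 0)) (.var 0))).and <|
  (HF.all 0 (.all 1 (.all 2 (((HF.lt (.var 1) (.var 2)).and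
    (.neg (.ex 3 ((HF.lt (.var 1) (.var 3)).and (.lt (.var 3) (.var 2)))))).imp
    ((HF.lt (.h (.const 0) (.var 0) (.var 1)) (.h (.const 0) (.var 0) (.var 2))).and
    (.neg (.ex 3 ((HF.lt (.h (.const 0) (.var 0) (.var 1)) (.var 3)).and
      (.lt (.var 3) (.h (.const 0) (.var 0) (.var 2))))))))))).and <|
  (HF.all 0 (.eq (.h (.const 1) (.var 0) (.const 0)) (.const 0))).and <|
  (HF.all 0 (.all 1 (.all 2 (((HF.lt (.var 1) (.var 2)).and
    (.neg (.ex 3 ((HF.lt (.var 1) (.var 3)).and (.lt (.var 3) (.var 2)))))).imp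
    (.eq (.h (.const 1) (.var 0) (.var 2))
      (.h (.const 0) (.h (.const 1) (.var 0) (.var 1)) (.var 0)))))))

theorem suc_iff (a b : ℕ) : (a < b ∧ ¬ ∃ c, a < c ∧ c < b) ↔ b = a + 1 := by
  constructor
  · rintro ⟨h, h'⟩
    by_contra hne
    exact h' ⟨a + 1, by omega, by omega⟩
  · rintro rfl
    exact ⟨by omega, by rintro ⟨c, h1, h2⟩; omega⟩

theorem arithF_sat (v : ℕ → ℕ) (H : ℕ → ℕ → ℕ → ℕ) : arithF.sat v H ↔ Arith H := by
  have e : arithF.sat v H ↔ (∀ x, H 0 x 0 = x) ∧ (∀ x y z, z = y + 1 → H 0 x z = H 0 x y + 1) ∧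
      (∀ x, H 1 x 0 = 0) ∧ (∀ x y z, z = y + 1 → H 1 x z = H 0 (H 1 x y) x) := by
    simp only [← suc_iff, arithF, HF.sat_and, HF.sat_imp, HF.sat, HT.eval]
    simp [Function.update_apply]
  rw [e]
  constructor
  · rintro ⟨h1, h2, h3, h4⟩
    have ha : ∀ x y, H 0 x y = x + y := by
      intro x y
      induction y with
      | zero => exact h1 x
      | succ y ih => rw [h2 x y _ rfl, ih]; rfl
    refine ⟨ha, fun x y => ?_⟩
    induction y with
    | zero => exact h3 x
    | succ y ih => rw [h4 x y _ rfl, ih, ha]; rfl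
  · rintro ⟨h1, h2⟩
    refine ⟨by simp [h1], ?_, by simp [h2], ?_⟩
    · rintro x y z rfl; rw [h1, h1]; rfl
    · rintro x y z rfl; rw [h2, h2, h1]; rfl

/-- All entries of the sequence coded by `w` are codes of traces encoding `H`. -/
def InTw (H : ℕ → ℕ → ℕ → ℕ) (w : ℕ) : Prop :=
  ∀ i, ∃ f x y, H 3 w i = H 2 f (H 2 x (H 2 y (H f x y)))

/-- The evaluation game for a sentence with `n` quantifier blocks. -/
def AltN (H : ℕ → ℕ → ℕ → ℕ) : ℕ → Bool → ℕ → Prop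
  | 0, _, h => H 4 h 0 = 1
  | n + 1, true, h => ∃ w, InTw H w ∧ AltN H n false (H 2 w h)
  | n + 1, false, h => ∀ w, InTw H w → AltN H n true (H 2 w h)

def inTF : HF :=
  .all 3 (.ex 4 (.ex 5 (.ex 6 (.eq (.h (.const 3) (.var 1) (.var 3))
    (.h (.const 2) (.var 4) (.h (.const 2) (.var 5) (.h (.const 2) (.var 6)
      (.h (.var 4) (.var 5) (.var 6)))))))))

theorem inTF_sat (v : ℕ → ℕ) (H : ℕ → ℕ → ℕ → ℕ) : inTF.sat v H ↔ InTw H (v 1) := by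
  simp only [inTF, HF.sat, HT.eval, InTw]
  simp [Function.update_apply]

/-- The formula defining the evaluation game. -/
def gameF : ℕ → Bool → HF
  | 0, _ => .eq (.h (.const 4) (.var 0) (.const 0)) (.const 1)
  | n + 1, true => .ex 1 (inTF.and (.ex 2 ((HF.eq (.var 2) (.h (.const 2) (.var 1) (.var 0))).and
      (.ex 0 ((HF.eq (.var 0) (.var 2)).and (gameF n false))))))
  | n + 1, false => .all 1 (inTF.imp (.ex 2 ((HF.eq (.var 2) (.h (.const 2) (.var 1) (.var 0))).and
      (.ex 0 ((HF.eq (.var 0) (.var 2)).and (gameF n true))))))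

theorem gameF_sat (H : ℕ → ℕ → ℕ → ℕ) (n : ℕ) : ∀ (b : Bool) (v : ℕ → ℕ),
    (gameF n b).sat v H ↔ AltN H n b (v 0) := by
  induction n with
  | zero => intro b v; rfl
  | succ n ih =>
    intro b v
    cases b <;>
    simp [gameF, AltN, HF.sat_and, HF.sat_imp, HF.sat, HT.eval, inTF_sat, ih, Function.update_apply]

/-- The first-order part of the formula of the reduction. -/
def coreF (ψ : AForm) (n : ℕ) : HF :=
  arithF.and ((toHF ψ).and (.neg (.ex 0 ((HF.eq (.var 0) (.const 0)).and (gameF n true)))))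

theorem coreF_sat (ψ : AForm) (n : ℕ) (v : ℕ → ℕ) (H : ℕ → ℕ → ℕ → ℕ) :
    (coreF ψ n).sat v H ↔ Arith H ∧ ψ.sat v (Fof H) ∧ ¬ AltN H n true 0 := by
  simp only [coreF, HF.sat_and, arithF_sat]
  refine and_congr_right fun hA => ?_
  rw [toHF_sat hA]
  simp [HF.sat, HT.eval, HF.sat_and, gameF_sat]

/-- The formula produced by the reduction. -/
def redF (l : List Bool) (θ : QF ℕ) (x : ℕ) : HFormula ℕ :=
  .ex 0 (mkH l 1 (cj (cst 3 0 x) θ))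

theorem exists_red (φ : HF) : ∃ l θ, (∀ x, (redF l θ x).IsSentence) ∧
    (∀ x T, HModels T (redF l θ x) → ∃ H, Enc T H) ∧
    ∀ x T H, Enc T H → (HModels T (redF l θ x) ↔ φ.sat (fun _ => x) H) := by
  obtain ⟨P, hP, hPs⟩ := NDef.form φ 1 (fun _ => 0) (fun _ => Nat.one_pos)
  obtain ⟨l, θ, h1, h2⟩ := Def_ax.and hP
  have hm : ∀ x T, HModels T (redF l θ x) ↔ ∃ t ∈ T, 3 ∈ t x ∧ Ax T ∧
      P T (Function.update (fun _ _ => ∅) 0 t) := by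
    intro x T
    simp only [HModels, redF, HFormula.sat]
    refine exists_congr fun t => and_congr_right fun ht => ?_
    rw [mkH_cj_left _ _ _ _ _ ⟨t, ht⟩ _ (fv_cst (by omega) x), sat_cst, h2 T ⟨t, ht⟩]
    simp
  refine ⟨l, θ, ?_, ?_, ?_⟩
  · intro x
    rw [HFormula.IsSentence, Set.eq_empty_iff_forall_notMem]
    rintro y ⟨hy, hy0⟩
    have := mkH_fv l 1 (cj (cst 3 0 x) θ) ?_ y hy
    · exact hy0 (by simp; omega)
    · intro z hz
      rcases hz with hz | hz
      · have := fv_cst (p := 3) (x := 0) (m := 1) (by omega) x z hz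
        omega
      · exact h1 z hz
  · intro x T h
    obtain ⟨t, ht, -, hA, -⟩ := (hm x T).1 h
    exact Ax_enc hA
  · intro x T H hE
    rw [hm]
    have key : ∀ t, Mk 3 t x → (P T (Function.update (fun _ _ => ∅) 0 t) ↔
        φ.sat (fun _ => x) H) := by
      intro t ht
      refine hPs T H hE _ (fun _ => x) fun i hi => ?_
      obtain rfl : i = 0 := by omega
      simpa using ht
    constructor
    · rintro ⟨t, ht, h3, -, hp⟩
      obtain ⟨f, a, b, -, -, -, m3⟩ := hE.1 t ht
      rw [← (m3 _).1 h3] at m3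
      exact (key t m3).1 hp
    · intro h
      obtain ⟨f, a, b, rfl⟩ := hE.2.2 x
      obtain ⟨t, ht, -, -, -, m3⟩ := hE.2.1 f a b
      exact ⟨t, ht, (m3 _).2 rfl, Enc_ax hE, (key t m3).2 h⟩

/-! Computability of the reduction. -/

theorem cst_code_primrec : Primrec (fun x : ℕ => (cst 3 0 x).codeWith id) := by
  have : (fun x : ℕ => (cst 3 0 x).codeWith id) =
      fun x : ℕ => (Nat.pair 3)^[x] (Nat.pair 0 (Nat.pair 3 0)) := by
    funext x
    induction x with
    | zero => rfl
    | succ x ih => rw [Function.iterate_succ_apply', ← ih]; rfl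
  rw [this]
  exact Primrec.nat_iterate Primrec.id (Primrec.const _)
    ((Primrec₂.natPair.comp (Primrec.const 3) Primrec.snd).to₂)

theorem red_code_primrec (l : List Bool) (θ : QF ℕ) :
    Primrec (fun x : ℕ => (redF l θ x).codeWith id) := by
  have base : Primrec (fun x : ℕ => (cj (cst 3 0 x) θ).codeWith id) := by
    simp only [cj, QF.codeWith]
    exact Primrec₂.natPair.comp (Primrec.const 1) (Primrec₂.natPair.comp (Primrec.const 2)
      (Primrec₂.natPair.comp (Primrec₂.natPair.comp (Primrec.const 1) cst_code_primrec)
      (Primrec.const _)))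
  have main : ∀ (l : List Bool) (m : ℕ),
      Primrec (fun x : ℕ => (mkH l m (cj (cst 3 0 x) θ)).codeWith id) := by
    intro l
    induction l with
    | nil => intro m; exact Primrec₂.natPair.comp (Primrec.const 2) base
    | cons b l ih =>
      intro m
      cases b
      · exact Primrec₂.natPair.comp (Primrec.const 1)
          (Primrec₂.natPair.comp (Primrec.const m) (ih (m + 1)))
      · exact Primrec₂.natPair.comp (Primrec.const 0)
          (Primrec₂.natPair.comp (Primrec.const m) (ih (m + 1)))
  exact Primrec₂.natPair.comp (Primrec.const 0)
    (Primrec₂.natPair.comp (Primrec.const 0) (main l 1))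

/-! Injectivity of the encoding. -/

theorem QF_code_inj (ψ : QF ℕ) : ∀ χ : QF ℕ, ψ.codeWith id = χ.codeWith id → ψ = χ := by
  induction ψ with
  | atom a x => intro χ h; cases χ <;> simp_all [QF.codeWith, Nat.pair_eq_pair]
  | neg ψ ih =>
    intro χ h
    cases χ <;> simp [QF.codeWith, Nat.pair_eq_pair] at h
    rw [ih _ h]
  | disj ψ χ ih1 ih2 =>
    intro χ h
    cases χ <;> simp [QF.codeWith, Nat.pair_eq_pair] at h
    rw [ih1 _ h.1, ih2 _ h.2]
  | next ψ ih =>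
    intro χ h
    cases χ <;> simp [QF.codeWith, Nat.pair_eq_pair] at h
    rw [ih _ h]
  | untl ψ χ ih1 ih2 =>
    intro χ h
    cases χ <;> simp [QF.codeWith, Nat.pair_eq_pair] at h
    rw [ih1 _ h.1, ih2 _ h.2]

theorem H_code_inj (ψ : HFormula ℕ) : ∀ χ : HFormula ℕ,
    ψ.codeWith id = χ.codeWith id → ψ = χ := by
  induction ψ with
  | ex x φ ih =>
    intro χ h
    cases χ <;> simp [HFormula.codeWith, Nat.pair_eq_pair] at h
    rw [h.1, ih _ h.2]
  | all x φ ih =>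
    intro χ h
    cases χ <;> simp [HFormula.codeWith, Nat.pair_eq_pair] at h
    rw [h.1, ih _ h.2]
  | qf θ =>
    intro χ h
    cases χ <;> simp [HFormula.codeWith, Nat.pair_eq_pair] at h
    rw [QF_code_inj _ _ h]

/-! Sequences of traces coded by natural numbers. -/

def look (w i : ℕ) : ℕ := (Denumerable.ofNat (List ℕ) w).getD i 0
def consN (e w : ℕ) : ℕ := Encodable.encode (e :: Denumerable.ofNat (List ℕ) w)
def tailN (w : ℕ) : ℕ := Encodable.encode (Denumerable.ofNat (List ℕ) w).tail

theorem look_nil (i : ℕ) : look (Encodable.encode ([] : List ℕ)) i = 0 := by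
  simp [look]

theorem look_cons_zero (e w : ℕ) : look (consN e w) 0 = e := by simp [look, consN]
theorem look_cons_succ (e w i : ℕ) : look (consN e w) (i + 1) = look w i := by
  simp [look, consN]
theorem tail_cons (e w : ℕ) : tailN (consN e w) = w := by simp [tailN, consN]
theorem look_tail (w i : ℕ) : look (tailN w) i = look w (i + 1) := by
  simp only [look, tailN, Denumerable.ofNat_encode]
  cases Denumerable.ofNat (List ℕ) w <;> simp

/-- The trace with code `e`. -/
def trOf (e : ℕ) : Trace ℕ := fun j => {p | (p = 0 ∧ j = e.unpair.1) ∨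
  (p = 1 ∧ j = e.unpair.2.unpair.1) ∨ (p = 2 ∧ j = e.unpair.2.unpair.2.unpair.1) ∨
  (p = 3 ∧ j = e.unpair.2.unpair.2.unpair.2)}

/-- The evaluation game, abstractly. -/
def AltL (E : Set ℕ) : ℕ → Bool → (List ℕ → Prop) → Prop
  | 0, _, M => M []
  | n + 1, true, M => ∃ w, (∀ i, look w i ∈ E) ∧ AltL E n false (fun L => M (w :: L))
  | n + 1, false, M => ∀ w, (∀ i, look w i ∈ E) → AltL E n true (fun L => M (w :: L))

theorem exists_matrix (n : ℕ) : ∀ (b : Bool) (φ : HFormula ℕ), AltPrefix n b φ.prefixList →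
    ∃ M : (ℕ → Trace ℕ) → List ℕ → Prop, ∀ E : Set ℕ, 0 ∈ E → ∀ As,
      (φ.sat (trOf '' E) As ↔ AltL E n b (M As)) := by
  induction n with
  | zero =>
    intro b φ h
    cases φ with
    | qf θ => exact ⟨fun As _ => θ.sat As, fun E _ As => Iff.rfl⟩
    | ex x φ => simp [AltPrefix, HFormula.prefixList] at h
    | all x φ => simp [AltPrefix, HFormula.prefixList] at h
  | succ n ih =>
    intro b φ h
    obtain ⟨l₁, l₂, hl, hb, h2⟩ := h
    induction l₁ generalizing φ with
    | nil =>
      obtain ⟨M, hM⟩ := ih (!b) φ (by rw [hl]; exact h2)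
      refine ⟨fun As L => M As L.tail, fun E hE As => ?_⟩
      rw [hM E hE]
      cases b
      · refine ⟨fun h w _ => h, fun h => h (Encodable.encode ([] : List ℕ)) ?_⟩
        intro i; rw [look_nil]; exact hE
      · refine ⟨fun h => ⟨Encodable.encode ([] : List ℕ), ?_, h⟩, fun ⟨w, _, h⟩ => h⟩
        intro i; rw [look_nil]; exact hE
    | cons c l ihl =>
      have hc : c = b := hb c (by simp)
      subst hc
      have step : ∀ (x : ℕ) (φ' : HFormula ℕ), φ'.prefixList = l ++ l₂ →
          ∃ (M : (ℕ → Trace ℕ) → List ℕ → Prop) (M' : (ℕ → Trace ℕ) → List ℕ → Prop),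
          (∀ E : Set ℕ, 0 ∈ E → ∀ As, (φ'.sat (trOf '' E) As ↔ AltL E (n + 1) c (M As))) ∧
          ∀ As w L, M' As (w :: L) =
            M (Function.update As x (trOf (look w 0))) (tailN w :: L) := by
        intro x φ' hp
        obtain ⟨M, hM⟩ := ihl φ' hp (fun d hd => hb d (by simp [hd]))
        refine ⟨M, fun As L => match L with
          | [] => True
          | w :: L => M (Function.update As x (trOf (look w 0))) (tailN w :: L), hM, ?_⟩
        intro As w L; rfl
      cases φ with
      | qf θ => simp [HFormula.prefixList] at hl
      | ex x φ =>
        simp only [HFormula.prefixList, List.cons_append, List.cons.injEq] at hl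
        obtain ⟨rfl, hl⟩ := hl
        obtain ⟨M, M', hM, hM'⟩ := step x φ hl
        refine ⟨M', fun E hE As => ?_⟩
        simp only [HFormula.sat, hM E hE, AltL, hM']
        constructor
        · rintro ⟨_, ⟨e, he, rfl⟩, w, hw, h⟩
          refine ⟨consN e w, ?_, ?_⟩
          · rintro (_ | i)
            · rw [look_cons_zero]; exact he
            · rw [look_cons_succ]; exact hw i
          · rw [look_cons_zero, tail_cons]; exact h
        · rintro ⟨w, hw, h⟩
          exact ⟨_, ⟨look w 0, hw 0, rfl⟩, tailN w, fun i => by rw [look_tail]; exact hw _, h⟩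
      | all x φ =>
        simp only [HFormula.prefixList, List.cons_append, List.cons.injEq] at hl
        obtain ⟨rfl, hl⟩ := hl
        obtain ⟨M, M', hM, hM'⟩ := step x φ hl
        refine ⟨M', fun E hE As => ?_⟩
        simp only [HFormula.sat, hM E hE, AltL, hM']
        constructor
        · intro h w hw
          exact h _ ⟨look w 0, hw 0, rfl⟩ (tailN w) (fun i => by rw [look_tail]; exact hw _)
        · rintro h _ ⟨e, he, rfl⟩ w hw
          have := h (consN e w) ?_
          · rwa [look_cons_zero, tail_cons] at this
          · rintro (_ | i)
            · rw [look_cons_zero]; exact he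
            · rw [look_cons_succ]; exact hw i

/-- Decode a history of `n` moves. -/
def decN : ℕ → ℕ → List ℕ
  | 0, _ => []
  | n + 1, h => decN n h.unpair.2 ++ [h.unpair.1]

theorem AltN_iff_AltL {H : ℕ → ℕ → ℕ → ℕ} (n : ℕ) (M : List ℕ → Prop)
    (h2 : ∀ x y, H 2 x y = Nat.pair x y) (h3 : ∀ w i, H 3 w i = look w i)
    (h4 : ∀ h, H 4 h 0 = 1 ↔ M (decN n h)) (j : ℕ) : ∀ (r : ℕ) (b : Bool) (h : ℕ), r + j = n →
    (AltN H j b h ↔ AltL {e | ∃ f x y, e = Nat.pair f (Nat.pair x (Nat.pair y (H f x y)))} j b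
      (fun L => M (decN r h ++ L))) := by
  induction j with
  | zero =>
    intro r b h hr
    obtain rfl : r = n := hr
    simp only [AltN, AltL, h4, List.append_nil]
  | succ j ih =>
    intro r b h hr
    have e : ∀ w b, AltN H j b (H 2 w h) ↔
        AltL {e | ∃ f x y, e = Nat.pair f (Nat.pair x (Nat.pair y (H f x y)))} j b
        (fun L => M (decN r h ++ (w :: L))) := by
      intro w b
      rw [ih (r + 1) b _ (by omega), h2]
      simp [decN]
    simp only [h2] at e
    cases b <;> simp only [AltN, AltL, e, InTw, h2, h3, Set.mem_setOf_eq]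

theorem AltPrefix_nil (n : ℕ) : ∀ b, AltPrefix n b [] := by
  induction n with
  | zero => intro b; rfl
  | succ n ih => intro b; exact ⟨[], [], rfl, by simp, ih _⟩

theorem lower (n : ℕ) (hn : 0 < n) (N : Set ℕ) (hN : Sigma11 N) :
    ManyOneRed Nᶜ (EquivSigmaCodes n) := by
  classical
  obtain ⟨ψ, hψ⟩ := hN
  obtain ⟨l, θ, hs, h1, h2⟩ := exists_red (coreF ψ n)
  refine ⟨fun x => (redF l θ x).codeWith id, (red_code_primrec l θ).to_comp, fun x => ?_⟩
  constructor
  · intro hx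
    refine ⟨redF l θ x, hs x, rfl, .ex 0 (.qf (.neg (tt 0))), ⟨?_, ?_⟩, fun T => ?_⟩
    · simp [HFormula.IsSentence, HFormula.freeVars, tt, QF.freeVars]
    · obtain ⟨m, rfl⟩ : ∃ m, n = m + 1 := ⟨n - 1, by omega⟩
      exact ⟨[true], [], rfl, by simp, AltPrefix_nil _ _⟩
    · constructor
      · intro hT
        obtain ⟨H, hE⟩ := h1 x T hT
        have := (h2 x T H hE).1 hT
        rw [coreF_sat] at this
        exact absurd ((hψ x).2 ⟨_, this.2.1⟩) hx
      · rintro ⟨t, ht, h⟩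
        exact absurd ((sat_iff_at _ _).2 (at_tt 0 _ 0)) h
  · rintro ⟨φ, -, hc, χ, hχ, heq⟩ hx
    obtain rfl := H_code_inj _ _ hc
    obtain ⟨F, hF⟩ := (hψ x).1 hx
    obtain ⟨M, hM⟩ := exists_matrix n true χ hχ.2
    let H : ℕ → ℕ → ℕ → ℕ := fun f a b => match f with
      | 0 => a + b
      | 1 => a * b
      | 2 => Nat.pair a b
      | 3 => look a b
      | 4 => if M (fun _ _ => ∅) (decN n a) then 1 else 0
      | 5 => 0
      | f + 6 => F f a
    let E : Set ℕ := {e | ∃ f x y, e = Nat.pair f (Nat.pair x (Nat.pair y (H f x y)))}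
    have hE0 : 0 ∈ E := ⟨0, 0, 0, rfl⟩
    have tr : ∀ f a b, Mk 0 (trOf (Nat.pair f (Nat.pair a (Nat.pair b (H f a b))))) f ∧
        Mk 1 (trOf (Nat.pair f (Nat.pair a (Nat.pair b (H f a b))))) a ∧
        Mk 2 (trOf (Nat.pair f (Nat.pair a (Nat.pair b (H f a b))))) b ∧
        Mk 3 (trOf (Nat.pair f (Nat.pair a (Nat.pair b (H f a b))))) (H f a b) := by
      intro f a b
      refine ⟨?_, ?_, ?_, ?_⟩ <;> intro j <;> simp [trOf]
    have hE : Enc (trOf '' E) H := by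
      refine ⟨?_, ?_, fun n => ⟨0, n, 0, rfl⟩⟩
      · rintro _ ⟨_, ⟨f, a, b, rfl⟩, rfl⟩
        exact ⟨f, a, b, tr f a b⟩
      · intro f a b
        exact ⟨_, ⟨_, ⟨f, a, b, rfl⟩, rfl⟩, tr f a b⟩
    have key := h2 x _ H hE
    rw [coreF_sat, heq] at key
    have hA : Arith H := ⟨fun _ _ => rfl, fun _ _ => rfl⟩
    have hF' : ψ.sat (fun _ => x) (Fof H) := hF
    have hG : AltN H n true 0 ↔ HModels (trOf '' E) χ := by
      rw [HModels, hM E hE0]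
      have := AltN_iff_AltL (H := H) n (M (fun _ _ => ∅)) (fun _ _ => rfl) (fun _ _ => rfl)
        (fun h => by simp [H]) n 0 true 0 (by omega)
      simpa [decN] using this
    rw [hG] at key
    tauto

end HyperProof


/-! ### A downward Loewenheim-Skolem argument -/
namespace HyperProof

/-- The assignment given by a finite list of bindings. -/
def asgL : List (ℕ × Trace ℕ) → ℕ → Trace ℕ
  | [] => fun _ _ => ∅
  | q :: L => Function.update (asgL L) q.1 q.2

instance : Countable (HFormula ℕ) :=
  Function.Injective.countable (f := fun φ : HFormula ℕ => φ.codeWith id)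
    (fun a b h => H_code_inj a b h)

theorem countable_lists {D : Set (Trace ℕ)} (hD : D.Countable) :
    {L : List (ℕ × Trace ℕ) | ∀ q ∈ L, q.2 ∈ D}.Countable := by
  have := hD.to_subtype
  refine (Set.countable_range
    (fun L : List (ℕ × D) => L.map (fun q => (q.1, (q.2 : Trace ℕ))))).mono ?_
  intro L hL
  induction L with
  | nil => exact ⟨[], rfl⟩
  | cons q L ih =>
    obtain ⟨M, hM⟩ := ih (fun r hr => hL r (List.mem_cons_of_mem _ hr))
    exact ⟨(q.1, ⟨q.2, hL q List.mem_cons_self⟩) :: M, by simpa using hM⟩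

theorem LS (T : Set (Trace ℕ)) : ∃ T0 : Set (Trace ℕ), T0.Countable ∧
    ∀ χ : HFormula ℕ, HModels T0 χ ↔ HModels T χ := by
  classical
  have hw : ∀ (b : Bool) (χ : HFormula ℕ) (x : ℕ) (L : List (ℕ × Trace ℕ)), ∃ t : Trace ℕ,
      (∃ t ∈ T, (b = true ↔ χ.sat T (Function.update (asgL L) x t))) →
      t ∈ T ∧ (b = true ↔ χ.sat T (Function.update (asgL L) x t)) := by
    intro b χ x L
    by_cases h : ∃ t ∈ T, (b = true ↔ χ.sat T (Function.update (asgL L) x t))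
    · obtain ⟨t, ht⟩ := h
      exact ⟨t, fun _ => ht⟩
    · exact ⟨fun _ => ∅, fun h' => absurd h' h⟩
  choose w hw using hw
  let step : Set (Trace ℕ) → Set (Trace ℕ) := fun D =>
    D ∪ ({t | ∃ L, (∀ q ∈ L, q.2 ∈ D) ∧ ∃ b χ x, t = w b χ x L} ∩ T)
  let D : ℕ → Set (Trace ℕ) := fun k => step^[k] ∅
  have hDs : ∀ k, D (k + 1) = step (D k) := fun k => Function.iterate_succ_apply' _ _ _
  have hDc : ∀ k, (D k).Countable := by
    intro k
    induction k with
    | zero => exact Set.countable_empty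
    | succ k ih =>
      rw [hDs]
      refine ih.union (Set.Countable.mono Set.inter_subset_left ?_)
      have : {t | ∃ L, (∀ q ∈ L, q.2 ∈ D k) ∧ ∃ b χ x, t = w b χ x L} ⊆
          ⋃ L ∈ {L : List (ℕ × Trace ℕ) | ∀ q ∈ L, q.2 ∈ D k},
            Set.range (fun p : Bool × HFormula ℕ × ℕ => w p.1 p.2.1 p.2.2 L) := by
        rintro t ⟨L, hL, b, χ, x, rfl⟩
        exact Set.mem_biUnion (show L ∈ {L : List (ℕ × Trace ℕ) | ∀ q ∈ L, q.2 ∈ D k} from hL)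
          ⟨(b, χ, x), rfl⟩
      exact ((countable_lists ih).biUnion (fun L _ => Set.countable_range _)).mono this
  have hDT : ∀ k, D k ⊆ T := by
    intro k
    induction k with
    | zero => exact Set.empty_subset _
    | succ k ih => rw [hDs]; exact Set.union_subset ih Set.inter_subset_right
  have hmono : Monotone D := monotone_nat_of_le_succ fun k => by
    rw [hDs]; exact Set.subset_union_left
  have hcl : ∀ b χ x L, (∀ q ∈ L, q.2 ∈ ⋃ k, D k) → w b χ x L ∈ T → w b χ x L ∈ ⋃ k, D k := by
    intro b χ x L hL hT
    have : ∃ k, ∀ q ∈ L, q.2 ∈ D k := by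
      clear hT
      induction L with
      | nil => exact ⟨0, by simp⟩
      | cons q L ih =>
        obtain ⟨k, hk⟩ := ih (fun r hr => hL r (List.mem_cons_of_mem _ hr))
        obtain ⟨k', hk'⟩ := Set.mem_iUnion.1 (hL q List.mem_cons_self)
        refine ⟨max k k', fun r hr => ?_⟩
        rcases List.mem_cons.1 hr with rfl | hr
        · exact hmono (le_max_right _ _) hk'
        · exact hmono (le_max_left _ _) (hk r hr)
    obtain ⟨k, hk⟩ := this
    refine Set.mem_iUnion.2 ⟨k + 1, ?_⟩
    rw [hDs]
    exact Or.inr ⟨⟨L, hk, b, χ, x, rfl⟩, hT⟩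
  have hsub : (⋃ k, D k) ⊆ T := Set.iUnion_subset hDT
  refine ⟨⋃ k, D k, Set.countable_iUnion hDc, fun χ => ?_⟩
  have main : ∀ L : List (ℕ × Trace ℕ), (∀ q ∈ L, q.2 ∈ ⋃ k, D k) →
      (χ.sat (⋃ k, D k) (asgL L) ↔ χ.sat T (asgL L)) := by
    induction χ with
    | qf ψ => intro L _; rfl
    | ex x χ ih =>
      intro L hL
      have ih' : ∀ t ∈ ⋃ k, D k, (χ.sat (⋃ k, D k) (Function.update (asgL L) x t) ↔
          χ.sat T (Function.update (asgL L) x t)) := fun t ht =>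
        ih ((x, t) :: L) (by
          intro q hq
          rcases List.mem_cons.1 hq with rfl | hq
          · exact ht
          · exact hL q hq)
      simp only [HFormula.sat]
      constructor
      · rintro ⟨t, ht, h⟩
        exact ⟨t, hsub ht, (ih' t ht).1 h⟩
      · rintro ⟨t, ht, h⟩
        have := hw true χ x L ⟨t, ht, by simpa using h⟩
        have hm := hcl true χ x L hL this.1
        exact ⟨_, hm, (ih' _ hm).2 (this.2.1 rfl)⟩
    | all x χ ih =>
      intro L hL
      have ih' : ∀ t ∈ ⋃ k, D k, (χ.sat (⋃ k, D k) (Function.update (asgL L) x t) ↔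
          χ.sat T (Function.update (asgL L) x t)) := fun t ht =>
        ih ((x, t) :: L) (by
          intro q hq
          rcases List.mem_cons.1 hq with rfl | hq
          · exact ht
          · exact hL q hq)
      simp only [HFormula.sat]
      constructor
      · intro h t ht
        by_contra hn
        have := hw false χ x L ⟨t, ht, by simpa using hn⟩
        have hm := hcl false χ x L hL this.1
        exact absurd (this.2.2 ((ih' _ hm).1 (h _ hm))) (by simp)
      · intro h t ht
        exact (ih' t ht).2 (h t (hsub ht))
  exact main [] (by simp)

/-- Indexed version. -/
theorem LSi (T : Set (Trace ℕ)) : ∃ (I : ℕ → Prop) (t : ℕ → Trace ℕ), t 0 = (fun _ => ∅) ∧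
    ∀ χ : HFormula ℕ, HModels {s | ∃ i, I i ∧ s = t i} χ ↔ HModels T χ := by
  obtain ⟨T0, hc, h⟩ := LS T
  rcases T0.eq_empty_or_nonempty with rfl | hne
  · refine ⟨fun _ => False, fun _ _ => ∅, rfl, fun χ => ?_⟩
    rw [← h]
    simp
  · obtain ⟨f, rfl⟩ := hc.exists_eq_range hne
    refine ⟨fun i => i ≠ 0, fun i => match i with | 0 => fun _ => ∅ | i + 1 => f i, rfl,
      fun χ => ?_⟩
    rw [← h]
    have : {s | ∃ i : ℕ, i ≠ 0 ∧ s = (match i with | 0 => fun _ => ∅ | i + 1 => f i : Trace ℕ)}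
        = Set.range f := by
      ext s
      constructor
      · rintro ⟨i, hi, rfl⟩
        cases i with
        | zero => exact absurd rfl hi
        | succ i => exact ⟨i, rfl⟩
      · rintro ⟨i, rfl⟩
        exact ⟨i + 1, by simp, rfl⟩
    rw [this]

end HyperProof


/-! ### The upper bound: the arithmetical specification of the tables -/
namespace HyperProof

open Nat (pair)

/-- The tables specified in arithmetic. -/
structure Spec (n c : ℕ) (G : ℕ → ℕ → ℕ) : Prop where
  kq : ∀ e f, G 1 (pair 0 (pair e f)) = 1 ∧ (G 1 e = 1 → G 1 (pair 1 e) = 1) ∧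
    (G 1 e = 1 → G 1 f = 1 → G 1 (pair 2 (pair e f)) = 1) ∧
    (G 1 e = 1 → G 1 (pair 3 e) = 1) ∧
    (G 1 e = 1 → G 1 f = 1 → G 1 (pair 4 (pair e f)) = 1)
  kh : ∀ e x, (G 2 e = 1 → G 2 (pair 0 (pair x e)) = 1) ∧
    (G 2 e = 1 → G 2 (pair 1 (pair x e)) = 1) ∧ (G 1 e = 1 → G 2 (pair 2 e) = 1)
  nfq : ∀ e f x, (¬ f = x → G 3 (pair (pair 0 (pair e f)) x) = 1) ∧
    (G 3 (pair e x) = 1 → G 3 (pair (pair 1 e) x) = 1) ∧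
    (G 3 (pair e x) = 1 → G 3 (pair f x) = 1 → G 3 (pair (pair 2 (pair e f)) x) = 1) ∧
    (G 3 (pair e x) = 1 → G 3 (pair (pair 3 e) x) = 1) ∧
    (G 3 (pair e x) = 1 → G 3 (pair f x) = 1 → G 3 (pair (pair 4 (pair e f)) x) = 1)
  nfh : ∀ e x y, (G 3 (pair e x) = 1 → G 4 (pair (pair 2 e) x) = 1) ∧
    (G 2 e = 1 → G 4 (pair (pair 0 (pair x e)) x) = 1) ∧
    (G 2 e = 1 → G 4 (pair (pair 1 (pair x e)) x) = 1) ∧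
    (G 4 (pair e x) = 1 → G 4 (pair (pair 0 (pair y e)) x) = 1) ∧
    (G 4 (pair e x) = 1 → G 4 (pair (pair 1 (pair y e)) x) = 1)
  alt : ∀ e m x, (G 1 e = 1 → G 5 (pair (pair 2 e) m) = 1) ∧
    (G 1 e = 1 → G 6 (pair (pair 2 e) m) = 1) ∧
    (G 6 (pair e m) = 1 → G 5 (pair e (m + 1)) = 1) ∧
    (G 5 (pair e m) = 1 → G 6 (pair e (m + 1)) = 1) ∧
    (G 5 (pair e (m + 1)) = 1 → G 5 (pair (pair 0 (pair x e)) (m + 1)) = 1) ∧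
    (G 6 (pair e (m + 1)) = 1 → G 6 (pair (pair 1 (pair x e)) (m + 1)) = 1)
  lk : ∀ a x y i, G 7 (pair 0 x) = 0 ∧ G 7 (pair (pair (pair x i) a + 1) x) = i ∧
    (¬ x = y → G 7 (pair (pair (pair x i) a + 1) y) = G 7 (pair a y))
  r0 : ∀ d j p, ¬ G 9 (pair (pair d 0) (pair j p)) = 1
  sq : ∀ d e f w j, (G 10 (pair (pair d (pair 0 (pair e f))) (pair w j)) = 1 ↔
      G 9 (pair (pair d (G 7 (pair w f))) (pair j e)) = 1) ∧
    (G 1 e = 1 → (G 10 (pair (pair d (pair 1 e)) (pair w j)) = 1 ↔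
      ¬ G 10 (pair (pair d e) (pair w j)) = 1)) ∧
    (G 1 e = 1 → G 1 f = 1 → (G 10 (pair (pair d (pair 2 (pair e f))) (pair w j)) = 1 ↔
      (G 10 (pair (pair d e) (pair w j)) = 1 ∨ G 10 (pair (pair d f) (pair w j)) = 1))) ∧
    (G 10 (pair (pair d (pair 3 e)) (pair w j)) = 1 ↔
      G 10 (pair (pair d e) (pair w (j + 1))) = 1) ∧
    (G 1 e = 1 → (G 10 (pair (pair d (pair 4 (pair e f))) (pair w j)) = 1 ↔
      ∃ k, G 10 (pair (pair d f) (pair w (j + k))) = 1 ∧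
        ∀ l, l < k → G 10 (pair (pair d e) (pair w (j + l))) = 1))
  sh : ∀ d e x w, (G 11 (pair (pair d (pair 0 (pair x e))) w) = 1 ↔
      ∃ i, G 8 (pair d i) = 1 ∧ G 11 (pair (pair d e) (pair (pair x i) w + 1)) = 1) ∧
    (G 2 e = 1 → (G 11 (pair (pair d (pair 1 (pair x e))) w) = 1 ↔
      ∀ i, G 8 (pair d i) = 1 → G 11 (pair (pair d e) (pair (pair x i) w + 1)) = 1)) ∧
    (G 11 (pair (pair d (pair 2 e)) w) = 1 ↔ G 10 (pair (pair d e) (pair w 0)) = 1)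
  fin : (G 2 c = 1 → (∀ x, G 4 (pair c x) = 1) → ∀ d, G 5 (pair d n) = 1 →
    (∀ x, G 4 (pair d x) = 1) → ¬ (G 11 (pair (pair d c) 0) = 1 ↔ G 11 (pair (pair d d) 0) = 1))

/-! Soundness. -/

theorem spec_kq {n c : ℕ} {G : ℕ → ℕ → ℕ} (h : Spec n c G) (ψ : QF ℕ) :
    G 1 (ψ.codeWith id) = 1 := by
  induction ψ with
  | atom a x => exact (h.kq _ _).1
  | neg ψ ih => exact (h.kq _ 0).2.1 ih
  | disj ψ χ ih1 ih2 => exact (h.kq _ _).2.2.1 ih1 ih2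
  | next ψ ih => exact (h.kq _ 0).2.2.2.1 ih
  | untl ψ χ ih1 ih2 => exact (h.kq _ _).2.2.2.2 ih1 ih2

theorem spec_kh {n c : ℕ} {G : ℕ → ℕ → ℕ} (h : Spec n c G) (ψ : HFormula ℕ) :
    G 2 (ψ.codeWith id) = 1 := by
  induction ψ with
  | ex x φ ih => exact (h.kh _ _).1 ih
  | all x φ ih => exact (h.kh _ _).2.1 ih
  | qf ψ => exact (h.kh _ 0).2.2 (spec_kq h ψ)

theorem spec_nfq {n c : ℕ} {G : ℕ → ℕ → ℕ} (h : Spec n c G) (x : ℕ) (ψ : QF ℕ) :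
    x ∉ ψ.freeVars → G 3 (pair (ψ.codeWith id) x) = 1 := by
  induction ψ with
  | atom a y => exact fun hx => (h.nfq _ _ _).1 (fun e => hx e.symm)
  | neg ψ ih => exact fun hx => (h.nfq _ 0 _).2.1 (ih hx)
  | disj ψ χ ih1 ih2 =>
    exact fun hx => (h.nfq _ _ _).2.2.1
      (ih1 fun k => hx (Or.inl k)) (ih2 fun k => hx (Or.inr k))
  | next ψ ih => exact fun hx => (h.nfq _ 0 _).2.2.2.1 (ih hx)
  | untl ψ χ ih1 ih2 =>
    exact fun hx => (h.nfq _ _ _).2.2.2.2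
      (ih1 fun k => hx (Or.inl k)) (ih2 fun k => hx (Or.inr k))

theorem spec_nfh {n c : ℕ} {G : ℕ → ℕ → ℕ} (h : Spec n c G) (x : ℕ) (ψ : HFormula ℕ) :
    x ∉ ψ.freeVars → G 4 (pair (ψ.codeWith id) x) = 1 := by
  induction ψ with
  | ex y φ ih =>
    intro hx
    by_cases e : x = y
    · subst e; exact (h.nfh _ _ 0).2.1 (spec_kh h φ)
    · exact (h.nfh _ _ _).2.2.2.1 (ih fun k => hx ⟨k, e⟩)
  | all y φ ih =>
    intro hx
    by_cases e : x = y
    · subst e; exact (h.nfh _ _ 0).2.2.1 (spec_kh h φ)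
    · exact (h.nfh _ _ _).2.2.2.2 (ih fun k => hx ⟨k, e⟩)
  | qf ψ => exact fun hx => (h.nfh _ _ 0).1 (spec_nfq h x ψ hx)

theorem spec_alt {n c : ℕ} {G : ℕ → ℕ → ℕ} (h : Spec n c G) (m : ℕ) : ∀ (b : Bool)
    (ψ : HFormula ℕ), AltPrefix m b ψ.prefixList →
    G (if b then 5 else 6) (pair (ψ.codeWith id) m) = 1 := by
  have base : ∀ m (b : Bool) (θ : QF ℕ),
      G (if b then 5 else 6) (pair ((HFormula.qf θ).codeWith id) m) = 1 := by
    intro m b θ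
    cases b
    · exact (h.alt _ _ 0).2.1 (spec_kq h θ)
    · exact (h.alt _ _ 0).1 (spec_kq h θ)
  induction m with
  | zero =>
    intro b ψ hψ
    cases ψ with
    | qf θ => exact base _ _ _
    | ex x φ => simp [AltPrefix, HFormula.prefixList] at hψ
    | all x φ => simp [AltPrefix, HFormula.prefixList] at hψ
  | succ m ihm =>
    intro b ψ
    have up : ∀ χ : HFormula ℕ, AltPrefix m (!b) χ.prefixList →
        G (if b then 5 else 6) (pair (χ.codeWith id) (m + 1)) = 1 := by
      intro χ hχ
      have := ihm _ _ hχ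
      cases b
      · exact (h.alt _ _ 0).2.2.2.1 this
      · exact (h.alt _ _ 0).2.2.1 this
    induction ψ with
    | qf θ => intro _; exact base _ _ _
    | ex x φ ih =>
      rintro ⟨l₁, l₂, e, h1, h2⟩
      cases l₁ with
      | nil =>
        apply up
        rw [e]; exact h2
      | cons a l =>
        simp only [HFormula.prefixList, List.cons_append, List.cons.injEq] at e
        have hb : true = b := by rw [e.1]; exact h1 a List.mem_cons_self
        have := ih ⟨l, l₂, e.2, fun c hc => h1 c (List.mem_cons_of_mem _ hc), h2⟩
        subst hb
        exact (h.alt _ _ _).2.2.2.2.1 this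
    | all x φ ih =>
      rintro ⟨l₁, l₂, e, h1, h2⟩
      cases l₁ with
      | nil =>
        apply up
        rw [e]; exact h2
      | cons a l =>
        simp only [HFormula.prefixList, List.cons_append, List.cons.injEq] at e
        have hb : false = b := by rw [e.1]; exact h1 a List.mem_cons_self
        have := ih ⟨l, l₂, e.2, fun c hc => h1 c (List.mem_cons_of_mem _ hc), h2⟩
        subst hb
        exact (h.alt _ _ _).2.2.2.2.2 this

/-- The traces given by the tables. -/
def trG (G : ℕ → ℕ → ℕ) (d i : ℕ) : Trace ℕ := fun j => {p | G 9 (pair (pair d i) (pair j p)) = 1}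
/-- The assignments given by the tables. -/
def asG (G : ℕ → ℕ → ℕ) (d w : ℕ) : ℕ → Trace ℕ := fun x => trG G d (G 7 (pair w x))

theorem spec_upd {n c : ℕ} {G : ℕ → ℕ → ℕ} (h : Spec n c G) (d w x i : ℕ) :
    asG G d (pair (pair x i) w + 1) = Function.update (asG G d w) x (trG G d i) := by
  funext y
  by_cases e : x = y
  · subst e
    simp [asG, (h.lk w x 0 i).2.1]
  · have e' : ¬ y = x := fun k => e k.symm
    simp [asG, (h.lk w x y i).2.2 e, e']

theorem spec_sq {n c : ℕ} {G : ℕ → ℕ → ℕ} (h : Spec n c G) (d : ℕ) (ψ : QF ℕ) : ∀ w j,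
    G 10 (pair (pair d (ψ.codeWith id)) (pair w j)) = 1 ↔ satAt ψ (asG G d w) j := by
  induction ψ with
  | atom a x => intro w j; rw [at_atom]; exact (h.sq _ _ _ _ _).1
  | neg ψ ih => intro w j; rw [at_neg, ← ih]; exact (h.sq _ _ 0 _ _).2.1 (spec_kq h ψ)
  | disj ψ χ ih1 ih2 =>
    intro w j; rw [at_disj, ← ih1, ← ih2]
    exact (h.sq _ _ _ _ _).2.2.1 (spec_kq h ψ) (spec_kq h χ)
  | next ψ ih => intro w j; rw [at_next, ← ih]; exact (h.sq _ _ 0 _ _).2.2.2.1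
  | untl ψ χ ih1 ih2 =>
    intro w j
    simp only [at_untl, ← ih1, ← ih2]
    exact (h.sq _ _ _ _ _).2.2.2.2 (spec_kq h ψ)

theorem spec_sh {n c : ℕ} {G : ℕ → ℕ → ℕ} (h : Spec n c G) (d : ℕ) (ψ : HFormula ℕ) : ∀ w,
    G 11 (pair (pair d (ψ.codeWith id)) w) = 1 ↔
      ψ.sat {s | ∃ i, G 8 (pair d i) = 1 ∧ s = trG G d i} (asG G d w) := by
  induction ψ with
  | ex x φ ih =>
    intro w
    refine (h.sh _ _ _ _).1.trans ?_
    simp only [HFormula.sat, ih, spec_upd h]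
    constructor
    · rintro ⟨i, hi, k⟩; exact ⟨_, ⟨i, hi, rfl⟩, k⟩
    · rintro ⟨_, ⟨i, hi, rfl⟩, k⟩; exact ⟨i, hi, k⟩
  | all x φ ih =>
    intro w
    refine ((h.sh _ _ _ _).2.1 (spec_kh h φ)).trans ?_
    simp only [HFormula.sat, ih, spec_upd h]
    constructor
    · rintro k _ ⟨i, hi, rfl⟩; exact k i hi
    · intro k i hi; exact k _ ⟨i, hi, rfl⟩
  | qf ψ =>
    intro w
    refine (h.sh d (ψ.codeWith id) 0 w).2.2.trans ?_
    rw [spec_sq h, ← sat_iff_at]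
    rfl

theorem spec_sound {n c : ℕ} {G : ℕ → ℕ → ℕ} (h : Spec n c G) : c ∉ EquivSigmaCodes n := by
  rintro ⟨φ, hφ, rfl, ψ, ⟨hψ, hp⟩, he⟩
  have h0 : ∀ d, asG G d 0 = fun _ _ => ∅ := by
    intro d
    funext x j
    ext p
    simp [asG, trG, (h.lk 0 x 0 0).1, h.r0 d j p]
  refine h.fin (spec_kh h φ) (fun x => spec_nfh h x φ (by rw [hφ]; simp)) (ψ.codeWith id)
    (spec_alt h n true ψ hp) (fun x => spec_nfh h x ψ (by rw [hψ]; simp)) ?_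
  rw [spec_sh h, spec_sh h, h0]
  exact he _

end HyperProof


/-! ### The upper bound: the tables exist -/
namespace HyperProof

open Nat (pair)

theorem exq_self (ψ : QF ℕ) (P : QF ℕ → Prop) :
    (∃ ψ' : QF ℕ, ψ'.codeWith id = ψ.codeWith id ∧ P ψ') ↔ P ψ := by
  constructor
  · rintro ⟨ψ', e, h⟩; rwa [QF_code_inj _ _ e] at h
  · intro h; exact ⟨ψ, rfl, h⟩

theorem exh_self (ψ : HFormula ℕ) (P : HFormula ℕ → Prop) :
    (∃ ψ' : HFormula ℕ, ψ'.codeWith id = ψ.codeWith id ∧ P ψ') ↔ P ψ := by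
  constructor
  · rintro ⟨ψ', e, h⟩; rwa [H_code_inj _ _ e] at h
  · intro h; exact ⟨ψ, rfl, h⟩

theorem exq_atom (a x : ℕ) (P : QF ℕ → Prop) :
    (∃ ψ : QF ℕ, ψ.codeWith id = pair 0 (pair a x) ∧ P ψ) ↔ P (.atom a x) :=
  exq_self (.atom a x) P

theorem exq_neg (e : ℕ) (P : QF ℕ → Prop) :
    (∃ ψ : QF ℕ, ψ.codeWith id = pair 1 e ∧ P ψ) ↔
      ∃ ψ : QF ℕ, ψ.codeWith id = e ∧ P (.neg ψ) := by
  constructor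
  · rintro ⟨ψ, h, hp⟩
    cases ψ <;> simp [QF.codeWith, Nat.pair_eq_pair] at h
    exact ⟨_, h, hp⟩
  · rintro ⟨ψ, rfl, hp⟩; exact ⟨_, rfl, hp⟩

theorem exq_next (e : ℕ) (P : QF ℕ → Prop) :
    (∃ ψ : QF ℕ, ψ.codeWith id = pair 3 e ∧ P ψ) ↔
      ∃ ψ : QF ℕ, ψ.codeWith id = e ∧ P (.next ψ) := by
  constructor
  · rintro ⟨ψ, h, hp⟩
    cases ψ <;> simp [QF.codeWith, Nat.pair_eq_pair] at h
    exact ⟨_, h, hp⟩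
  · rintro ⟨ψ, rfl, hp⟩; exact ⟨_, rfl, hp⟩

theorem exq_disj (e f : ℕ) (P : QF ℕ → Prop) :
    (∃ ψ : QF ℕ, ψ.codeWith id = pair 2 (pair e f) ∧ P ψ) ↔
      ∃ ψ : QF ℕ, ψ.codeWith id = e ∧ ∃ χ : QF ℕ, χ.codeWith id = f ∧ P (.disj ψ χ) := by
  constructor
  · rintro ⟨ψ, h, hp⟩
    cases ψ <;> simp [QF.codeWith, Nat.pair_eq_pair] at h
    exact ⟨_, h.1, _, h.2, hp⟩
  · rintro ⟨ψ, rfl, χ, rfl, hp⟩; exact ⟨_, rfl, hp⟩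

theorem exq_untl (e f : ℕ) (P : QF ℕ → Prop) :
    (∃ ψ : QF ℕ, ψ.codeWith id = pair 4 (pair e f) ∧ P ψ) ↔
      ∃ ψ : QF ℕ, ψ.codeWith id = e ∧ ∃ χ : QF ℕ, χ.codeWith id = f ∧ P (.untl ψ χ) := by
  constructor
  · rintro ⟨ψ, h, hp⟩
    cases ψ <;> simp [QF.codeWith, Nat.pair_eq_pair] at h
    exact ⟨_, h.1, _, h.2, hp⟩
  · rintro ⟨ψ, rfl, χ, rfl, hp⟩; exact ⟨_, rfl, hp⟩

theorem exh_ex (x e : ℕ) (P : HFormula ℕ → Prop) :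
    (∃ ψ : HFormula ℕ, ψ.codeWith id = pair 0 (pair x e) ∧ P ψ) ↔
      ∃ ψ : HFormula ℕ, ψ.codeWith id = e ∧ P (.ex x ψ) := by
  constructor
  · rintro ⟨ψ, h, hp⟩
    cases ψ <;> simp [HFormula.codeWith, Nat.pair_eq_pair] at h
    obtain ⟨rfl, h⟩ := h
    exact ⟨_, h, hp⟩
  · rintro ⟨ψ, rfl, hp⟩; exact ⟨_, rfl, hp⟩

theorem exh_all (x e : ℕ) (P : HFormula ℕ → Prop) :
    (∃ ψ : HFormula ℕ, ψ.codeWith id = pair 1 (pair x e) ∧ P ψ) ↔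
      ∃ ψ : HFormula ℕ, ψ.codeWith id = e ∧ P (.all x ψ) := by
  constructor
  · rintro ⟨ψ, h, hp⟩
    cases ψ <;> simp [HFormula.codeWith, Nat.pair_eq_pair] at h
    obtain ⟨rfl, h⟩ := h
    exact ⟨_, h, hp⟩
  · rintro ⟨ψ, rfl, hp⟩; exact ⟨_, rfl, hp⟩

theorem exh_qf (e : ℕ) (P : HFormula ℕ → Prop) :
    (∃ ψ : HFormula ℕ, ψ.codeWith id = pair 2 e ∧ P ψ) ↔
      ∃ ψ : QF ℕ, ψ.codeWith id = e ∧ P (.qf ψ) := by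
  constructor
  · rintro ⟨ψ, h, hp⟩
    cases ψ <;> simp [HFormula.codeWith, Nat.pair_eq_pair] at h
    exact ⟨_, h, hp⟩
  · rintro ⟨ψ, rfl, hp⟩; exact ⟨_, rfl, hp⟩

/-- Lookup in a coded association list. -/
def lkp : ℕ → ℕ → ℕ
  | 0, _ => 0
  | m + 1, y => if m.unpair.1.unpair.1 = y then m.unpair.1.unpair.2 else lkp m.unpair.2 y
termination_by m => m
decreasing_by exact Nat.lt_succ_of_le (Nat.unpair_right_le _)

theorem lkp_zero (y : ℕ) : lkp 0 y = 0 := by rw [lkp]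
theorem lkp_upd (x i a y : ℕ) :
    lkp (pair (pair x i) a + 1) y = if x = y then i else lkp a y := by
  rw [lkp]; simp

/-- A witness assignment. -/
def asW (t : ℕ → Trace ℕ) (w : ℕ) : ℕ → Trace ℕ := fun x => t (lkp w x)

theorem asW_upd (t : ℕ → Trace ℕ) (x i w : ℕ) :
    asW t (pair (pair x i) w + 1) = Function.update (asW t w) x (t i) := by
  funext y
  by_cases e : x = y
  · subst e; simp [asW, lkp_upd]
  · have e' : ¬ y = x := fun k => e k.symm
    simp [asW, lkp_upd, e, e']

open Classical in
/-- Truth value as a number. -/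
noncomputable def tv (P : Prop) : ℕ := if P then 1 else 0

theorem tv_one (P : Prop) : tv P = 1 ↔ P := by
  unfold tv; split_ifs with h <;> simp [h]

/-- The witness tables. -/
noncomputable def Gw (I : ℕ → ℕ → Prop) (t : ℕ → ℕ → Trace ℕ) : ℕ → ℕ → ℕ
  | 1, e => tv (∃ ψ : QF ℕ, ψ.codeWith id = e ∧ True)
  | 2, e => tv (∃ ψ : HFormula ℕ, ψ.codeWith id = e ∧ True)
  | 3, q => tv (∃ ψ : QF ℕ, ψ.codeWith id = q.unpair.1 ∧ q.unpair.2 ∉ ψ.freeVars)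
  | 4, q => tv (∃ ψ : HFormula ℕ, ψ.codeWith id = q.unpair.1 ∧ q.unpair.2 ∉ ψ.freeVars)
  | 5, q => tv (∃ ψ : HFormula ℕ, ψ.codeWith id = q.unpair.1 ∧
      AltPrefix q.unpair.2 true ψ.prefixList)
  | 6, q => tv (∃ ψ : HFormula ℕ, ψ.codeWith id = q.unpair.1 ∧
      AltPrefix q.unpair.2 false ψ.prefixList)
  | 7, q => lkp q.unpair.1 q.unpair.2
  | 8, q => tv (I q.unpair.1 q.unpair.2)
  | 9, q => tv (q.unpair.2.unpair.2 ∈ t q.unpair.1.unpair.1 q.unpair.1.unpair.2 q.unpair.2.unpair.1)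
  | 10, q => tv (∃ ψ : QF ℕ, ψ.codeWith id = q.unpair.1.unpair.2 ∧
      satAt ψ (asW (t q.unpair.1.unpair.1) q.unpair.2.unpair.1) q.unpair.2.unpair.2)
  | 11, q => tv (∃ ψ : HFormula ℕ, ψ.codeWith id = q.unpair.1.unpair.2 ∧
      ψ.sat {s | ∃ i, I q.unpair.1.unpair.1 i ∧ s = t q.unpair.1.unpair.1 i}
        (asW (t q.unpair.1.unpair.1) q.unpair.2))
  | _, _ => 0

section
variable (I : ℕ → ℕ → Prop) (t : ℕ → ℕ → Trace ℕ)
theorem Gw1 (e : ℕ) : Gw I t 1 e = 1 ↔ ∃ ψ : QF ℕ, ψ.codeWith id = e ∧ True := tv_one _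
theorem Gw2 (e : ℕ) : Gw I t 2 e = 1 ↔ ∃ ψ : HFormula ℕ, ψ.codeWith id = e ∧ True := tv_one _
theorem Gw3 (e x : ℕ) : Gw I t 3 (pair e x) = 1 ↔
    ∃ ψ : QF ℕ, ψ.codeWith id = e ∧ x ∉ ψ.freeVars := by simp [Gw, tv_one]
theorem Gw4 (e x : ℕ) : Gw I t 4 (pair e x) = 1 ↔
    ∃ ψ : HFormula ℕ, ψ.codeWith id = e ∧ x ∉ ψ.freeVars := by simp [Gw, tv_one]
theorem Gw5 (e x : ℕ) : Gw I t 5 (pair e x) = 1 ↔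
    ∃ ψ : HFormula ℕ, ψ.codeWith id = e ∧ AltPrefix x true ψ.prefixList := by simp [Gw, tv_one]
theorem Gw6 (e x : ℕ) : Gw I t 6 (pair e x) = 1 ↔
    ∃ ψ : HFormula ℕ, ψ.codeWith id = e ∧ AltPrefix x false ψ.prefixList := by simp [Gw, tv_one]
theorem Gw7 (w x : ℕ) : Gw I t 7 (pair w x) = lkp w x := by simp [Gw]
theorem Gw8 (d i : ℕ) : Gw I t 8 (pair d i) = 1 ↔ I d i := by simp [Gw, tv_one]
theorem Gw9 (d i j p : ℕ) : Gw I t 9 (pair (pair d i) (pair j p)) = 1 ↔ p ∈ t d i j := by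
  simp [Gw, tv_one]
theorem Gw10 (d e w j : ℕ) : Gw I t 10 (pair (pair d e) (pair w j)) = 1 ↔
    ∃ ψ : QF ℕ, ψ.codeWith id = e ∧ satAt ψ (asW (t d) w) j := by
  simp [Gw, tv_one]
theorem Gw11 (d e w : ℕ) : Gw I t 11 (pair (pair d e) w) = 1 ↔
    ∃ ψ : HFormula ℕ, ψ.codeWith id = e ∧ ψ.sat {s | ∃ i, I d i ∧ s = t d i} (asW (t d) w) := by
  simp [Gw, tv_one]
end

theorem AltPrefix_up {m : ℕ} {b : Bool} {l : List Bool} (h : AltPrefix m (!b) l) :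
    AltPrefix (m + 1) b l := ⟨[], l, rfl, by simp, h⟩

theorem AltPrefix_cons {m : ℕ} {b : Bool} {l : List Bool} (h : AltPrefix (m + 1) b l) :
    AltPrefix (m + 1) b (b :: l) := by
  obtain ⟨l₁, l₂, rfl, h1, h2⟩ := h
  exact ⟨b :: l₁, l₂, rfl, by simpa using h1, h2⟩

theorem spec_complete {n c : ℕ} (hc : c ∉ EquivSigmaCodes n) :
    ∃ I t, Spec n c (Gw I t) := by
  have hT : ∀ d, ∃ T : Set (Trace ℕ), ∀ φ ψ : HFormula ℕ, φ.IsSentence → φ.codeWith id = c →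
      IsSigmaSentence n ψ → ψ.codeWith id = d → ¬ (HModels T φ ↔ HModels T ψ) := by
    intro d
    by_contra hn
    push Not at hn
    obtain ⟨φ, ψ, h1, h2, h3, h4, -⟩ := hn ∅
    refine hc ⟨φ, h1, h2, ψ, h3, fun T => ?_⟩
    obtain ⟨φ', ψ', -, h2', -, h4', h⟩ := hn T
    rwa [H_code_inj φ φ' (h2.trans h2'.symm), H_code_inj ψ ψ' (h4.trans h4'.symm)]
  choose T hT using hT
  choose I t ht0 ht using fun d => LSi (T d)
  have ha0 : ∀ d, asW (t d) 0 = fun _ _ => ∅ := by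
    intro d; funext x; simp [asW, lkp_zero, ht0]
  refine ⟨I, t, ?_, ?_, ?_, ?_, ?_, ?_, ?_, ?_, ?_, ?_⟩
  · intro e f
    simp only [Gw1, exq_atom, exq_neg, exq_disj, exq_next, exq_untl]
    grind
  · intro e x
    simp only [Gw1, Gw2, exh_ex, exh_all, exh_qf]
    grind
  · intro e f x
    simp only [Gw3, exq_atom, exq_neg, exq_disj, exq_next, exq_untl, QF.freeVars]
    refine ⟨fun h k => h k.symm, fun h => h, ?_, fun h => h, ?_⟩
    · rintro ⟨ψ, e, h⟩ ⟨χ, e', h'⟩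
      exact ⟨ψ, e, χ, e', fun k => k.elim h h'⟩
    · rintro ⟨ψ, e, h⟩ ⟨χ, e', h'⟩
      exact ⟨ψ, e, χ, e', fun k => k.elim h h'⟩
  · intro e x y
    simp only [Gw2, Gw3, Gw4, exh_ex, exh_all, exh_qf, HFormula.freeVars]
    refine ⟨fun h => h, ?_, ?_, ?_, ?_⟩
    · rintro ⟨ψ, e, -⟩; exact ⟨ψ, e, fun k => k.2 rfl⟩
    · rintro ⟨ψ, e, -⟩; exact ⟨ψ, e, fun k => k.2 rfl⟩
    · rintro ⟨ψ, e, h⟩; exact ⟨ψ, e, fun k => h k.1⟩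
    · rintro ⟨ψ, e, h⟩; exact ⟨ψ, e, fun k => h k.1⟩
  · intro e m x
    simp only [Gw1, Gw5, Gw6, exh_ex, exh_all, exh_qf, HFormula.prefixList]
    refine ⟨?_, ?_, ?_, ?_, ?_, ?_⟩
    · rintro ⟨ψ, e, h⟩; exact ⟨ψ, e, AltPrefix_nil _ _⟩
    · rintro ⟨ψ, e, h⟩; exact ⟨ψ, e, AltPrefix_nil _ _⟩
    · rintro ⟨ψ, e, h⟩; exact ⟨ψ, e, AltPrefix_up h⟩
    · rintro ⟨ψ, e, h⟩; exact ⟨ψ, e, AltPrefix_up h⟩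
    · rintro ⟨ψ, e, h⟩; exact ⟨ψ, e, AltPrefix_cons h⟩
    · rintro ⟨ψ, e, h⟩; exact ⟨ψ, e, AltPrefix_cons h⟩
  · intro a x y i
    simp only [Gw7, lkp_zero, lkp_upd]
    refine ⟨trivial, by simp, fun h => by simp [h]⟩
  · intro d j p
    simp [Gw9, ht0]
  · intro d e f w j
    simp only [Gw1, Gw7, Gw9, Gw10, exq_atom, exq_neg, exq_disj, exq_next, exq_untl, at_atom,
      at_neg, at_disj, at_next, at_untl]
    refine ⟨by trivial, ?_, ?_, by trivial, ?_⟩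
    · rintro ⟨ψ, rfl, -⟩
      simp only [exq_self]
    · rintro ⟨ψ, rfl, -⟩ ⟨χ, rfl, -⟩
      simp only [exq_self]
    · rintro ⟨ψ, rfl, -⟩
      simp only [exq_self]
      constructor
      · rintro ⟨χ, e, k, h1, h2⟩; exact ⟨k, ⟨χ, e, h1⟩, h2⟩
      · rintro ⟨k, ⟨χ, e, h1⟩, h2⟩; exact ⟨χ, e, k, h1, h2⟩
  · intro d e x w
    simp only [Gw2, Gw8, Gw10, Gw11, exh_ex, exh_all, exh_qf, HFormula.sat, asW_upd]
    refine ⟨?_, ?_, ?_⟩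
    · constructor
      · rintro ⟨ψ, e, _, ⟨i, hi, rfl⟩, h⟩; exact ⟨i, hi, ψ, e, h⟩
      · rintro ⟨i, hi, ψ, e, h⟩; exact ⟨ψ, e, _, ⟨i, hi, rfl⟩, h⟩
    · rintro ⟨ψ, rfl, -⟩
      simp only [exh_self]
      constructor
      · intro h i hi; exact h _ ⟨i, hi, rfl⟩
      · rintro h _ ⟨i, hi, rfl⟩; exact h i hi
    · simp only [sat_iff_at]
  · simp only [Gw2, Gw4, Gw5, Gw11]
    rintro ⟨φ, rfl, -⟩ hs d ⟨ψ, rfl, hp⟩ hs'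
    simp only [exh_self] at hs hs' ⊢
    rw [ha0]
    have := hT (ψ.codeWith id) φ ψ (Set.eq_empty_of_forall_notMem hs) rfl
      ⟨Set.eq_empty_of_forall_notMem hs', hp⟩ rfl
    rw [← ht, ← ht] at this
    exact this

end HyperProof


/-! ### The upper bound: the arithmetical formula -/
namespace HyperProof

open Nat (pair)

/-- Numerals. -/
def nm : ℕ → ATerm
  | 0 => .zero
  | k + 1 => .add (nm k) .one

theorem nm_eval (k : ℕ) (v : ℕ → ℕ) (F : ℕ → ℕ → ℕ) : (nm k).eval v F = k := by
  induction k with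
  | zero => rfl
  | succ k ih => simp [nm, ATerm.eval, ih]

/-- The auxiliary polynomial pairing. -/
def pp (a b : ℕ) : ℕ := (a + b) * (a + b) + a

theorem pp_inj {a b c d : ℕ} (h : pp a b = pp c d) : a = c ∧ b = d := by
  unfold pp at h
  have : a + b = c + d := by
    by_contra hne
    rcases Nat.lt_or_gt_of_ne hne with h1 | h1 <;> nlinarith
  rw [this] at h
  omega

/-- The term for the pairing function. -/
def pr (s t : ATerm) : ATerm := .app 0 (.add (.mul (.add s t) (.add s t)) s)

def fand (φ ψ : AForm) : AForm := .neg (.disj (.neg φ) (.neg ψ))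
def fimp (φ ψ : AForm) : AForm := .disj (.neg φ) ψ
def fiff (φ ψ : AForm) : AForm := fand (fimp φ ψ) (fimp ψ φ)
/-- A table holds at an argument. -/
def tb (k : ℕ) (t : ATerm) : AForm := .eq (.app k t) .one

theorem sat_fand (φ ψ : AForm) (v : ℕ → ℕ) (F : ℕ → ℕ → ℕ) :
    (fand φ ψ).sat v F ↔ φ.sat v F ∧ ψ.sat v F := by simp [fand, AForm.sat]
theorem sat_fimp (φ ψ : AForm) (v : ℕ → ℕ) (F : ℕ → ℕ → ℕ) :
    (fimp φ ψ).sat v F ↔ (φ.sat v F → ψ.sat v F) := by simp [fimp, AForm.sat, imp_iff_not_or]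
theorem sat_fiff (φ ψ : AForm) (v : ℕ → ℕ) (F : ℕ → ℕ → ℕ) :
    (fiff φ ψ).sat v F ↔ (φ.sat v F ↔ ψ.sat v F) := by
  simp only [fiff, sat_fand, sat_fimp]; tauto
theorem sat_tb (k : ℕ) (t : ATerm) (v : ℕ → ℕ) (F : ℕ → ℕ → ℕ) :
    (tb k t).sat v F ↔ F k (t.eval v F) = 1 := Iff.rfl

/-- Correctness of the pairing table. -/
def PairOK (F : ℕ → ℕ → ℕ) : Prop := ∀ a b, F 0 (pp a b) = pair a b

theorem pr_eval {F : ℕ → ℕ → ℕ} (h : PairOK F) (s t : ATerm) (v : ℕ → ℕ) :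
    (pr s t).eval v F = pair (s.eval v F) (t.eval v F) := h _ _

abbrev V (i : ℕ) : ATerm := .var i
abbrev all2 (φ : AForm) : AForm := .allN 1 (.allN 2 φ)
abbrev all3 (φ : AForm) : AForm := .allN 1 (.allN 2 (.allN 3 φ))
abbrev all4 (φ : AForm) : AForm := .allN 1 (.allN 2 (.allN 3 (.allN 4 φ)))
abbrev all5 (φ : AForm) : AForm := .allN 1 (.allN 2 (.allN 3 (.allN 4 (.allN 5 φ))))
abbrev ps (t : ATerm) : ATerm := .add t .one

def pairF : AForm := all2 (fand
  (fimp (.lt (V 1) (V 2)) (.eq (pr (V 1) (V 2)) (.add (.mul (V 2) (V 2)) (V 1))))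
  (fimp (.neg (.lt (V 1) (V 2)))
    (.eq (pr (V 1) (V 2)) (.add (.add (.mul (V 1) (V 1)) (V 1)) (V 2)))))

theorem pairF_sat (v : ℕ → ℕ) (F : ℕ → ℕ → ℕ) : pairF.sat v F ↔ PairOK F := by
  simp only [pairF, AForm.sat, sat_fand, sat_fimp, pr, ATerm.eval, PairOK, pp, pair]
  refine forall_congr' fun a => forall_congr' fun b => ?_
  simp [Function.update]
  split_ifs with h
  · simp [h]
  · simp [not_lt.1 h]

def f1 : AForm := all2 (fand (tb 1 (pr (nm 0) (pr (V 1) (V 2)))) (fand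
  (fimp (tb 1 (V 1)) (tb 1 (pr (nm 1) (V 1)))) (fand
  (fimp (tb 1 (V 1)) (fimp (tb 1 (V 2)) (tb 1 (pr (nm 2) (pr (V 1) (V 2)))))) (fand
  (fimp (tb 1 (V 1)) (tb 1 (pr (nm 3) (V 1))))
  (fimp (tb 1 (V 1)) (fimp (tb 1 (V 2)) (tb 1 (pr (nm 4) (pr (V 1) (V 2))))))))))

def f2 : AForm := all2 (fand
  (fimp (tb 2 (V 1)) (tb 2 (pr (nm 0) (pr (V 2) (V 1))))) (fand
  (fimp (tb 2 (V 1)) (tb 2 (pr (nm 1) (pr (V 2) (V 1)))))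
  (fimp (tb 1 (V 1)) (tb 2 (pr (nm 2) (V 1))))))

def f3 : AForm := all3 (fand
  (fimp (.neg (.eq (V 2) (V 3))) (tb 3 (pr (pr (nm 0) (pr (V 1) (V 2))) (V 3)))) (fand
  (fimp (tb 3 (pr (V 1) (V 3))) (tb 3 (pr (pr (nm 1) (V 1)) (V 3)))) (fand
  (fimp (tb 3 (pr (V 1) (V 3))) (fimp (tb 3 (pr (V 2) (V 3)))
    (tb 3 (pr (pr (nm 2) (pr (V 1) (V 2))) (V 3))))) (fand
  (fimp (tb 3 (pr (V 1) (V 3))) (tb 3 (pr (pr (nm 3) (V 1)) (V 3))))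
  (fimp (tb 3 (pr (V 1) (V 3))) (fimp (tb 3 (pr (V 2) (V 3)))
    (tb 3 (pr (pr (nm 4) (pr (V 1) (V 2))) (V 3)))))))))

def f4 : AForm := all3 (fand
  (fimp (tb 3 (pr (V 1) (V 2))) (tb 4 (pr (pr (nm 2) (V 1)) (V 2)))) (fand
  (fimp (tb 2 (V 1)) (tb 4 (pr (pr (nm 0) (pr (V 2) (V 1))) (V 2)))) (fand
  (fimp (tb 2 (V 1)) (tb 4 (pr (pr (nm 1) (pr (V 2) (V 1))) (V 2)))) (fand
  (fimp (tb 4 (pr (V 1) (V 2))) (tb 4 (pr (pr (nm 0) (pr (V 3) (V 1))) (V 2))))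
  (fimp (tb 4 (pr (V 1) (V 2))) (tb 4 (pr (pr (nm 1) (pr (V 3) (V 1))) (V 2))))))))

def f5 : AForm := all3 (fand
  (fimp (tb 1 (V 1)) (tb 5 (pr (pr (nm 2) (V 1)) (V 2)))) (fand
  (fimp (tb 1 (V 1)) (tb 6 (pr (pr (nm 2) (V 1)) (V 2)))) (fand
  (fimp (tb 6 (pr (V 1) (V 2))) (tb 5 (pr (V 1) (ps (V 2))))) (fand
  (fimp (tb 5 (pr (V 1) (V 2))) (tb 6 (pr (V 1) (ps (V 2))))) (fand
  (fimp (tb 5 (pr (V 1) (ps (V 2)))) (tb 5 (pr (pr (nm 0) (pr (V 3) (V 1))) (ps (V 2)))))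
  (fimp (tb 6 (pr (V 1) (ps (V 2)))) (tb 6 (pr (pr (nm 1) (pr (V 3) (V 1))) (ps (V 2))))))))))

def f6 : AForm := all4 (fand (.eq (.app 7 (pr (nm 0) (V 2))) (nm 0)) (fand
  (.eq (.app 7 (pr (ps (pr (pr (V 2) (V 4)) (V 1))) (V 2))) (V 4))
  (fimp (.neg (.eq (V 2) (V 3))) (.eq (.app 7 (pr (ps (pr (pr (V 2) (V 4)) (V 1))) (V 3)))
    (.app 7 (pr (V 1) (V 3)))))))

def f7 : AForm := all3 (.neg (tb 9 (pr (pr (V 1) (nm 0)) (pr (V 2) (V 3)))))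

def f8 : AForm := all5 (fand
  (fiff (tb 10 (pr (pr (V 1) (pr (nm 0) (pr (V 2) (V 3)))) (pr (V 4) (V 5))))
    (tb 9 (pr (pr (V 1) (.app 7 (pr (V 4) (V 3)))) (pr (V 5) (V 2))))) (fand
  (fimp (tb 1 (V 2)) (fiff (tb 10 (pr (pr (V 1) (pr (nm 1) (V 2))) (pr (V 4) (V 5))))
    (.neg (tb 10 (pr (pr (V 1) (V 2)) (pr (V 4) (V 5))))))) (fand
  (fimp (tb 1 (V 2)) (fimp (tb 1 (V 3))
    (fiff (tb 10 (pr (pr (V 1) (pr (nm 2) (pr (V 2) (V 3)))) (pr (V 4) (V 5))))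
    (.disj (tb 10 (pr (pr (V 1) (V 2)) (pr (V 4) (V 5))))
      (tb 10 (pr (pr (V 1) (V 3)) (pr (V 4) (V 5)))))))) (fand
  (fiff (tb 10 (pr (pr (V 1) (pr (nm 3) (V 2))) (pr (V 4) (V 5))))
    (tb 10 (pr (pr (V 1) (V 2)) (pr (V 4) (ps (V 5))))))
  (fimp (tb 1 (V 2))
    (fiff (tb 10 (pr (pr (V 1) (pr (nm 4) (pr (V 2) (V 3)))) (pr (V 4) (V 5))))
    (.exN 6 (fand (tb 10 (pr (pr (V 1) (V 3)) (pr (V 4) (.add (V 5) (V 6)))))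
      (.allN 7 (fimp (.lt (V 7) (V 6))
        (tb 10 (pr (pr (V 1) (V 2)) (pr (V 4) (.add (V 5) (V 7)))))))))))))))

def f9 : AForm := all4 (fand
  (fiff (tb 11 (pr (pr (V 1) (pr (nm 0) (pr (V 3) (V 2)))) (V 4)))
    (.exN 5 (fand (tb 8 (pr (V 1) (V 5)))
      (tb 11 (pr (pr (V 1) (V 2)) (ps (pr (pr (V 3) (V 5)) (V 4)))))))) (fand
  (fimp (tb 2 (V 2)) (fiff (tb 11 (pr (pr (V 1) (pr (nm 1) (pr (V 3) (V 2)))) (V 4)))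
    (.allN 5 (fimp (tb 8 (pr (V 1) (V 5)))
      (tb 11 (pr (pr (V 1) (V 2)) (ps (pr (pr (V 3) (V 5)) (V 4)))))))))
  (fiff (tb 11 (pr (pr (V 1) (pr (nm 2) (V 2))) (V 4)))
    (tb 10 (pr (pr (V 1) (V 2)) (pr (V 4) (nm 0)))))))

def f10 (n : ℕ) : AForm := fimp (tb 2 (V 0)) (fimp (.allN 1 (tb 4 (pr (V 0) (V 1))))
  (.allN 2 (fimp (tb 5 (pr (V 2) (nm n))) (fimp (.allN 1 (tb 4 (pr (V 2) (V 1))))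
    (.neg (fiff (tb 11 (pr (pr (V 2) (V 0)) (nm 0))) (tb 11 (pr (pr (V 2) (V 2)) (nm 0)))))))))

def bigF (n : ℕ) : AForm := fand pairF (fand f1 (fand f2 (fand f3 (fand f4 (fand f5 (fand f6
  (fand f7 (fand f8 (fand f9 (f10 n))))))))))

theorem bigF_sat (n c : ℕ) (F : ℕ → ℕ → ℕ) :
    (bigF n).sat (fun _ => c) F ↔ PairOK F ∧ Spec n c F := by
  simp only [bigF, sat_fand, pairF_sat]
  refine and_congr_right fun hp => ?_
  have u : ∀ (v : ℕ → ℕ) (x y k : ℕ), Function.update v x k y = if y = x then k else v y :=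
    fun v x y k => Function.update_apply v x k y
  simp only [f1, f2, f3, f4, f5, f6, f7, f8, f9, f10, AForm.sat, sat_fand, sat_fimp, sat_fiff,
    sat_tb, ATerm.eval, pr_eval hp, nm_eval, u, OfNat.ofNat_ne_one,
    OfNat.one_ne_ofNat, OfNat.zero_ne_ofNat, Nat.reduceEqDiff, if_true, if_false,
    zero_ne_one]
  constructor
  · rintro ⟨h1, h2, h3, h4, h5, h6, h7, h8, h9, h10⟩
    exact ⟨h1, h2, h3, h4, h5, h6, h7, h8, h9, h10⟩
  · rintro ⟨h1, h2, h3, h4, h5, h6, h7, h8, h9, h10⟩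
    exact ⟨h1, h2, h3, h4, h5, h6, h7, h8, h9, h10⟩

theorem upper (n : ℕ) : Sigma11 (EquivSigmaCodes n)ᶜ := by
  refine ⟨bigF n, fun c => ?_⟩
  simp only [bigF_sat]
  constructor
  · intro hc
    obtain ⟨I, t, h⟩ := spec_complete (show c ∉ EquivSigmaCodes n from hc)
    classical
    let F0 : ℕ → ℕ := fun q => if h : ∃ p : ℕ × ℕ, pp p.1 p.2 = q then
      pair h.choose.1 h.choose.2 else 0
    refine ⟨fun k => if k = 0 then F0 else Gw I t k, ?_, ?_⟩
    · intro a b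
      have hx : ∃ p : ℕ × ℕ, pp p.1 p.2 = pp a b := ⟨(a, b), rfl⟩
      have := pp_inj hx.choose_spec
      simp only [if_true, F0, dif_pos hx, this.1, this.2]
    · exact ⟨h.kq, h.kh, h.nfq, h.nfh, h.alt, h.lk, h.r0, h.sq, h.sh, h.fin⟩
  · rintro ⟨F, -, h⟩
    exact spec_sound h

end HyperProof

/-- **The membership problem for level `n` of the HyperLTL quantifier alternation
hierarchy is Π¹₁-complete** (for each fixed `n > 0`): the set of codes of
sentences equivalent to some Σ_n-sentence is the complement of a Σ¹₁ set, and the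
complement of every Σ¹₁ set many-one reduces to it via a total computable
function. -/
theorem membership_level_n_Pi11_complete (n : ℕ) (hn : 0 < n) :
    Sigma11 (EquivSigmaCodes n)ᶜ ∧
    ∀ N : Set ℕ, Sigma11 N → ManyOneRed Nᶜ (EquivSigmaCodes n) := by
  exact ⟨HyperProof.upper n, fun N hN => HyperProof.lower n hn N hN⟩
end
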